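/- arXiv:1509.08224 — 6 statements merged into one kernel-verified Lean document; each statement's English description precedes it below -/
import Mathlib

section
/- There exists c₁>0 such that for every c ∈ (0,c₁) there is a unique pair (y₁,y₂) with 1 < y₁ < y_c ≤ y_v(c) < y₂ satisfying the tangency system H_l'(y₁) = ∂H_r/∂y(y₂;c) and H_l(y₁) − H_l'(y₁)·y₁ = H_r(y₂;c) − ∂H_r/∂y(y₂;c)·y₂; moreover this pair satisfies y₁ < Ψ(f₀). -/
/-- The double-tangency system: the tangent to H_l at y₁ and the tangent to H_r(·;c)
at y₂ have the same gradient and the same vertical intercept. -/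
def TangencySystem (Hl Hrc : ℝ → ℝ) (y₁ y₂ : ℝ) : Prop :=
  deriv Hl y₁ = deriv Hrc y₂ ∧
  Hl y₁ - deriv Hl y₁ * y₁ = Hrc y₂ - deriv Hrc y₂ * y₂


theorem tangent_lt (S : Set ℝ) (hS : S.OrdConnected) (f f' : ℝ → ℝ)
    (hf : ∀ x ∈ S, HasDerivAt f (f' x) x) (hm : StrictMonoOn f' S)
    (x y : ℝ) (hx : x ∈ S) (hy : y ∈ S) (hne : x ≠ y) :
    f x + f' x * (y - x) < f y := by
  rcases lt_or_gt_of_ne hne with h | h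
  · have hsub : Set.Icc x y ⊆ S := hS.out hx hy
    obtain ⟨z, hz, hze⟩ := exists_hasDerivAt_eq_slope f f' h
      (fun w hw => (hf w (hsub hw)).continuousAt.continuousWithinAt)
      (fun w hw => hf w (hsub (Set.Ioo_subset_Icc_self hw)))
    have h1 := hm hx (hsub (Set.Ioo_subset_Icc_self hz)) hz.1
    rw [hze, lt_div_iff₀ (by linarith)] at h1
    linarith
  · have hsub : Set.Icc y x ⊆ S := hS.out hy hx
    obtain ⟨z, hz, hze⟩ := exists_hasDerivAt_eq_slope f f' h
      (fun w hw => (hf w (hsub hw)).continuousAt.continuousWithinAt)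
      (fun w hw => hf w (hsub (Set.Ioo_subset_Icc_self hw)))
    have h1 := hm (hsub (Set.Ioo_subset_Icc_self hz)) hx hz.2
    rw [hze, div_lt_iff₀ (by linarith)] at h1
    nlinarith

theorem legendre_exists (F : ℝ → ℝ) (a b : ℝ) (hab : a ≤ b) (hF : ContinuousOn F (Set.Icc a b)) :
    ∃ S : ℝ → ℝ, Continuous S ∧ ∀ p, (∃ y ∈ Set.Icc a b, S p = p * y - F y) ∧
      ∀ z ∈ Set.Icc a b, p * z - F z ≤ S p := by
  set Fe : ℝ → ℝ := Set.IccExtend hab (Set.domRestrict (Set.Icc a b) F) with hFe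
  have hFec : Continuous Fe := (continuousOn_iff_continuous_domRestrict.1 hF).Icc_extend'
  have hFeq : ∀ y ∈ Set.Icc a b, Fe y = F y := by
    intro y hy
    rw [hFe, Set.IccExtend_of_mem _ _ hy]; rfl
  refine ⟨fun p => sSup ((fun y => p * y - Fe y) '' Set.Icc a b), ?_, ?_⟩
  · apply IsCompact.continuous_sSup (f := fun p y => p * y - Fe y) isCompact_Icc
    exact (continuous_fst.mul continuous_snd).sub (hFec.comp continuous_snd)
  · intro p
    have hc : ContinuousOn (fun y => p * y - Fe y) (Set.Icc a b) := by fun_prop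
    obtain ⟨y, hy, hye, hyl⟩ := isCompact_Icc.exists_sSup_image_eq_and_ge
      (Set.nonempty_Icc.2 hab) hc
    refine ⟨⟨y, hy, ?_⟩, ?_⟩
    · simp only [hye, hFeq y hy]
    · intro z hz
      have := hyl z hz
      simp only [hye]
      rw [← hFeq z hz]; exact this

theorem darboux (f f' : ℝ → ℝ) (a b p : ℝ) (hab : a ≤ b)
    (hf : ∀ x ∈ Set.Icc a b, HasDerivAt f (f' x) x) (h1 : f' a < p) (h2 : p < f' b) :
    ∃ y ∈ Set.Ioo a b, f' y = p := by
  have := exists_hasDerivWithinAt_eq_of_gt_of_lt hab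
    (fun x hx => (hf x hx).hasDerivWithinAt) h1 h2
  exact this

theorem double_tangent (F G F' G' : ℝ → ℝ) (a b d : ℝ) (hab : a < b) (hbd : b < d)
    (hF : ∀ y ∈ Set.Icc a b, HasDerivAt F (F' y) y)
    (hG : ∀ y ∈ Set.Ici b, HasDerivAt G (G' y) y)
    (mF : StrictMonoOn F' (Set.Icc a b)) (mG : StrictMonoOn G' (Set.Ici b))
    (hb : F b = G b) (h1 : F' a < G' b) (h2 : G' b < F' b) (h3 : F' b < G' d) :
    ∃! p : ℝ × ℝ, a < p.1 ∧ p.1 < b ∧ b < p.2 ∧ TangencySystem F G p.1 p.2 := by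
  have tF := tangent_lt _ Set.ordConnected_Icc F F' hF mF
  have tG := tangent_lt _ Set.ordConnected_Ici G G' hG mG
  have hbF : b ∈ Set.Icc a b := ⟨hab.le, le_rfl⟩
  have hbG : b ∈ Set.Ici b := Set.mem_Ici.2 le_rfl
  have sub : Set.Icc b d ⊆ Set.Ici b := Set.Icc_subset_Ici_self
  obtain ⟨S, Sc, hS⟩ := legendre_exists F a b hab.le
    (fun w hw => (hF w hw).continuousAt.continuousWithinAt)
  obtain ⟨T, Tc, hT⟩ := legendre_exists G b d hbd.le
    (fun w hw => (hG w (sub hw)).continuousAt.continuousWithinAt)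
  have Seq : ∀ y ∈ Set.Icc a b, S (F' y) = F' y * y - F y := by
    intro y hy
    obtain ⟨⟨z, hz, hze⟩, hmax⟩ := hS (F' y)
    have := hmax y hy
    by_cases h : y = z
    · rw [hze, h]
    · have := tF y z hy hz h
      nlinarith
  have Teq : ∀ y ∈ Set.Icc b d, T (G' y) = G' y * y - G y := by
    intro y hy
    obtain ⟨⟨z, hz, hze⟩, hmax⟩ := hT (G' y)
    have := hmax y hy
    by_cases h : y = z
    · rw [hze, h]
    · have := tG y z (sub hy) (sub hz) h
      nlinarith
  have hlo : 0 < S (G' b) - T (G' b) := by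
    obtain ⟨z, hz, hze⟩ := darboux F F' a b (G' b) hab.le hF h1 h2
    have e1 := Seq z (Set.Ioo_subset_Icc_self hz)
    have e2 := Teq b ⟨le_rfl, hbd.le⟩
    have e3 := tF z b (Set.Ioo_subset_Icc_self hz) hbF hz.2.ne
    rw [hze] at e1 e3
    nlinarith
  have hhi : S (F' b) - T (F' b) < 0 := by
    obtain ⟨z, hz, hze⟩ := darboux G G' b d (F' b) hbd.le (fun x hx => hG x (sub hx)) h2 h3
    have e1 := Teq z (Set.Ioo_subset_Icc_self hz)
    have e2 := Seq b hbF
    have e3 := tG z b hz.1.le hbG hz.1.ne'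
    rw [hze] at e1 e3
    nlinarith
  obtain ⟨p, hp, hpe⟩ := intermediate_value_Ioo' h2.le (f := fun p => S p - T p)
    (Sc.sub Tc).continuousOn ⟨hhi, hlo⟩
  obtain ⟨y1, hy1, e1⟩ := darboux F F' a b p hab.le hF (h1.trans hp.1) hp.2
  obtain ⟨y2, hy2, e2⟩ := darboux G G' b d p hbd.le (fun x hx => hG x (sub hx)) hp.1
    (hp.2.trans h3)
  have key : ∀ p q : ℝ × ℝ,
      (a < p.1 ∧ p.1 < b ∧ b < p.2 ∧ TangencySystem F G p.1 p.2) →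
      (a < q.1 ∧ q.1 < b ∧ b < q.2 ∧ TangencySystem F G q.1 q.2) → ¬ p.1 < q.1 := by
    rintro ⟨u, v⟩ ⟨u', v'⟩ ⟨hu, hub, hv, t1, t2⟩ ⟨hu', hub', hv', t1', t2'⟩ hlt
    simp only at *
    have mu : u ∈ Set.Icc a b := ⟨hu.le, hub.le⟩
    have mu' : u' ∈ Set.Icc a b := ⟨hu'.le, hub'.le⟩
    have mv : v ∈ Set.Ici b := hv.le
    have mv' : v' ∈ Set.Ici b := hv'.le
    rw [(hF u mu).deriv, (hG v mv).deriv] at t1 t2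
    rw [(hF u' mu').deriv, (hG v' mv').deriv] at t1' t2'
    have m1 := mF mu mu' hlt
    have hvv : v < v' := by
      rw [t1, t1'] at m1
      exact (mG.lt_iff_lt mv mv').1 m1
    have k1 := tF u u' mu mu' hlt.ne
    have k2 := tG v' v mv' mv hvv.ne'
    rw [← t1'] at k2 t2'
    rw [← t1] at t2
    have : 0 < (F' u' - F' u) * (v - u') := mul_pos (by linarith) (by linarith)
    nlinarith
  have hok : a < y1 ∧ y1 < b ∧ b < y2 ∧ TangencySystem F G y1 y2 := by
    refine ⟨hy1.1, hy1.2, hy2.1, ?_, ?_⟩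
    · rw [(hF y1 (Set.Ioo_subset_Icc_self hy1)).deriv, (hG y2 hy2.1.le).deriv, e1, e2]
    · rw [(hF y1 (Set.Ioo_subset_Icc_self hy1)).deriv, (hG y2 hy2.1.le).deriv]
      have i1 := Seq y1 (Set.Ioo_subset_Icc_self hy1)
      have i2 := Teq y2 (Set.Ioo_subset_Icc_self hy2)
      rw [e1] at i1 ⊢
      rw [e2] at i2 ⊢
      simp only at hpe
      linarith
  refine ⟨(y1, y2), hok, ?_⟩
  rintro ⟨u, v⟩ hq
  have hu : u = y1 := le_antisymm (not_lt.1 (key (y1, y2) (u, v) hok hq))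
    (not_lt.1 (key (u, v) (y1, y2) hq hok))
  subst hu
  obtain ⟨g1, g2, g3, g4, -⟩ := hq
  obtain ⟨-, -, g6, g5, -⟩ := hok
  simp only at *
  rw [g4, (hG v g3.le).deriv, (hG y2 g6.le).deriv] at g5
  rw [mG.injOn g3.le g6.le g5]

theorem transform_deriv (s : ℝ) (hs : 0 < s) (H h : ℝ → ℝ)
    (hH : ∀ y, 0 < y → H y = Real.sqrt y * h (Real.log y / (2 * s)))
    (y h' : ℝ) (hy : 0 < y) (hh : HasDerivAt h h' (Real.log y / (2 * s))) :
    HasDerivAt H (Real.exp (-s * (Real.log y / (2 * s))) *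
      (h' + s * h (Real.log y / (2 * s))) / (2 * s)) y := by
  have e : H =ᶠ[nhds y] fun y => Real.sqrt y * h (Real.log y / (2 * s)) := by
    filter_upwards [lt_mem_nhds hy] with z hz using hH z hz
  refine HasDerivAt.congr_of_eventuallyEq ?_ e
  have hl : HasDerivAt (fun y => Real.log y / (2 * s)) (y⁻¹ / (2 * s)) y :=
    (Real.hasDerivAt_log hy.ne').div_const _
  have hc := HasDerivAt.comp y hh hl
  have hq := (Real.hasDerivAt_sqrt hy.ne').mul hc
  refine hq.congr_deriv ?_
  have e1 : Real.exp (-s * (Real.log y / (2 * s))) = (Real.sqrt y)⁻¹ := by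
    rw [Real.sqrt_eq_rpow, Real.rpow_def_of_pos hy, ← Real.exp_neg]
    congr 1
    field_simp
  rw [e1]
  have hsq : 0 < Real.sqrt y := Real.sqrt_pos.2 hy
  have hyy : y = Real.sqrt y ^ 2 := (Real.sq_sqrt hy.le).symm
  simp only [Function.comp]
  generalize Real.log y / (2 * s) = x
  generalize Real.sqrt y = r at *
  subst hyy
  field_simp
  ring

noncomputable def g1 (α δ l c x : ℝ) : ℝ :=
  δ * c * (c - 2 * x) + (δ - l / α) * x ^ 2 + c - l / α ^ 2
noncomputable def g1' (α δ l c x : ℝ) : ℝ := - 2 * δ * c + 2 * (δ - l / α) * x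
noncomputable def P1 (α δ l s c x : ℝ) : ℝ :=
  Real.exp (-s * x) * (g1' α δ l c x + s * g1 α δ l c x)
noncomputable def P2 (α l s c x : ℝ) : ℝ :=
  Real.exp (-s * x) * (-2 * (l / α) * c + s * ((l / α) * c * (c - 2 * x) + c))

theorem g1_deriv (α δ l c x : ℝ) : HasDerivAt (g1 α δ l c) (g1' α δ l c x) x := by
  have h0 := hasDerivAt_id x
  have := ((((h0.const_mul 2).const_sub c).const_mul (δ * c)).add
    ((h0.pow 2).const_mul (δ - l / α))).add_const (c - l / α ^ 2)
  have e : g1 α δ l c = (fun x => ((fun y => δ * c * (c - 2 * id y)) +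
      fun y => (δ - l / α) * (id ^ 2) y) x + (c - l / α ^ 2)) := by
    funext z; simp [g1]; ring
  rw [e]
  refine this.congr_deriv ?_
  simp [g1']; ring

theorem exp_deriv (s x : ℝ) :
    HasDerivAt (fun x => Real.exp (-s * x)) (-s * Real.exp (-s * x)) x := by
  have := ((hasDerivAt_id' x).const_mul (-s)).exp
  exact this.congr_deriv (by ring)

theorem P1_deriv (α δ l s c x : ℝ) (hα : 0 < α) (hs : s ^ 2 = 2 * α) :
    HasDerivAt (P1 α δ l s c) (Real.exp (-s * x) *
      (2 * (δ - (α * δ - l) * x ^ 2 + c * α * (δ * (2 * x - c) - 1)))) x := by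
  have h1 : HasDerivAt (g1' α δ l c) (2 * (δ - l / α)) x := by
    have := ((hasDerivAt_id' x).const_mul (2 * (δ - l / α))).const_add (-2 * δ * c)
    exact HasDerivAt.congr_deriv this (by ring)
  have := (exp_deriv s x).mul (h1.add ((g1_deriv α δ l c x).const_mul s))
  refine HasDerivAt.congr_deriv this ?_
  have hα' : α = s ^ 2 / 2 := by linarith
  have hs0 : s ≠ 0 := by rintro rfl; simp at hs; linarith
  simp only [g1, g1', Pi.add_apply]
  subst hα'
  field_simp
  ring

theorem P2_deriv (α l s c x : ℝ) (hα : 0 < α) (hs : s ^ 2 = 2 * α) :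
    HasDerivAt (P2 α l s c) (Real.exp (-s * x) *
      (2 * c * (l * (2 * x - c) - α))) x := by
  have h1 : HasDerivAt (fun x => -2 * (l / α) * c + s * ((l / α) * c * (c - 2 * x) + c))
      (s * ((l / α) * c * (-2))) x := by
    have := (((((hasDerivAt_id' x).const_mul 2).const_sub c).const_mul ((l / α) * c)).add_const
      c).const_mul s |>.const_add (-2 * (l / α) * c)
    exact HasDerivAt.congr_deriv this (by ring)
  have := (exp_deriv s x).mul h1
  refine HasDerivAt.congr_deriv this ?_
  have hα' : α = s ^ 2 / 2 := by linarith
  have hs0 : s ≠ 0 := by rintro rfl; simp at hs; linarith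
  subst hα'
  field_simp
  ring

theorem P1_mono (α δ l s c u v : ℝ) (hα : 0 < α) (hs : s ^ 2 = 2 * α) (hl : l < α * δ)
    (hu : 0 < δ - (α * δ - l) * u ^ 2 + c * α * (δ * (2 * u - c) - 1))
    (hv : 0 < δ - (α * δ - l) * v ^ 2 + c * α * (δ * (2 * v - c) - 1)) :
    StrictMonoOn (P1 α δ l s c) (Set.Icc u v) := by
  apply strictMonoOn_of_deriv_pos (convex_Icc u v)
  · exact fun x _ => (P1_deriv α δ l s c x hα hs).continuousAt.continuousWithinAt
  · intro x hx
    rw [interior_Icc] at hx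
    rw [(P1_deriv α δ l s c x hα hs).deriv]
    have hx1 := hx.1
    have hx2 := hx.2
    have : 0 < δ - (α * δ - l) * x ^ 2 + c * α * (δ * (2 * x - c) - 1) := by
      have huv : 0 < v - u := by linarith
      have k1 := mul_pos (sub_pos.2 hx2) hu
      have k2 := mul_pos (sub_pos.2 hx1) hv
      have k3 : 0 < (α * δ - l) * ((x - u) * (v - x) * (v - u)) :=
        mul_pos (by linarith) (mul_pos (mul_pos (by linarith) (by linarith)) huv)
      have : 0 < (v - u) * (δ - (α * δ - l) * x ^ 2 + c * α * (δ * (2 * x - c) - 1)) := by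
        nlinarith
      exact pos_of_mul_pos_right this huv.le
    positivity

theorem P2_mono (α l s c u : ℝ) (hα : 0 < α) (hs : s ^ 2 = 2 * α) (hl : 0 < l) (hc : 0 < c)
    (hu : α < l * (2 * u - c)) :
    StrictMonoOn (P2 α l s c) (Set.Ici u) := by
  apply strictMonoOn_of_deriv_pos (convex_Ici u)
  · exact fun x _ => (P2_deriv α l s c x hα hs).continuousAt.continuousWithinAt
  · intro x hx
    rw [interior_Ici] at hx
    rw [(P2_deriv α l s c x hα hs).deriv]
    have hx1 : u < x := hx
    have : 0 < l * (2 * x - c) - α := by nlinarith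
    positivity

set_option maxHeartbeats 1000000 in
/-- existence and uniqueness of the tangency pair for small c, together with
the bound y₁ < Ψ(f₀). -/
theorem stmt_8 (α δ lam : ℝ) (hα : 0 < α) (hδ : 0 < δ) (hlam : 0 < lam)
    (hltd : lam < α * δ)
    (f₀ : ℝ)
    (hf₀ : f₀ = (1 / Real.sqrt (2 * α)) * (Real.sqrt ((α * δ + lam) / (α * δ - lam)) - 1))
    (hf₀big : α / (2 * lam) < f₀)
    (Ψ : ℝ → ℝ) (hΨ : ∀ x, Ψ x = Real.exp (2 * Real.sqrt (2 * α) * x))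
    (Hl : ℝ → ℝ)
    (hHl : ∀ y, 0 < y → Hl y = Real.sqrt y *
      (-(lam / α ^ 2) + ((δ - lam / α) / (8 * α)) * (Real.log y) ^ 2))
    (B₀ : ℝ)
    (hB₀ : B₀ = -(2 * f₀ / (α * Real.sqrt (2 * α))) * (α * δ - lam) *
      Real.exp (f₀ * Real.sqrt (2 * α)))
    (hr1 hr2 hr Hr : ℝ → ℝ → ℝ)
    (hhr1 : ∀ c x, hr1 c x = δ * c * (c - 2 * x) + (δ - lam / α) * x ^ 2 + c - lam / α ^ 2)
    (hhr2 : ∀ c x, hr2 c x = (lam / α) * c * (c - 2 * x) + c +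
      B₀ * Real.exp (-(x - c) * Real.sqrt (2 * α)))
    (hhra : ∀ c x, x ≤ f₀ + c → hr c x = hr1 c x)
    (hhrb : ∀ c x, f₀ + c ≤ x → hr c x = hr2 c x)
    (hHr : ∀ c y, 0 < y → Hr c y = Real.sqrt y * hr c (Real.log y / (2 * Real.sqrt (2 * α))))
    -- x_v(c): the unique root, in (−∞, f₀+c), of x ↦ δ−(αδ−λ)x²+cα(δ(2x−c)−1)
    (xv : ℝ → ℝ)
    (hxv : ∀ c, 0 < c →
      (xv c < f₀ + c ∧
        δ - (α * δ - lam) * (xv c) ^ 2 + c * α * (δ * (2 * xv c - c) - 1) = 0 ∧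
        ∀ x, x < f₀ + c →
          δ - (α * δ - lam) * x ^ 2 + c * α * (δ * (2 * x - c) - 1) = 0 → x = xv c)) :
    ∃ c₁ > 0, ∀ c, 0 < c → c < c₁ →
      (∃! p : ℝ × ℝ,
        1 < p.1 ∧ p.1 < Ψ (1 / (2 * δ) + c / 2) ∧
        Ψ (1 / (2 * δ) + c / 2) ≤ max (Ψ (1 / (2 * δ) + c / 2)) (Ψ (xv c)) ∧
        max (Ψ (1 / (2 * δ) + c / 2)) (Ψ (xv c)) < p.2 ∧
        TangencySystem Hl (Hr c) p.1 p.2) ∧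
      (∀ p : ℝ × ℝ,
        (1 < p.1 ∧ p.1 < Ψ (1 / (2 * δ) + c / 2) ∧
        Ψ (1 / (2 * δ) + c / 2) ≤ max (Ψ (1 / (2 * δ) + c / 2)) (Ψ (xv c)) ∧
        max (Ψ (1 / (2 * δ) + c / 2)) (Ψ (xv c)) < p.2 ∧
        TangencySystem Hl (Hr c) p.1 p.2) → p.1 < Ψ f₀) := by
  set s := Real.sqrt (2 * α) with hsdef
  have hs0 : 0 < s := Real.sqrt_pos.2 (by linarith)
  have hs : s ^ 2 = 2 * α := Real.sq_sqrt (by linarith)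
  have hf0pos : 0 < f₀ := lt_trans (by positivity) hf₀big
  have hdl : 0 < α * δ - lam := by linarith
  have hR : (s * f₀ + 1) ^ 2 * (α * δ - lam) = α * δ + lam := by
    have h1 : s * f₀ + 1 = Real.sqrt ((α * δ + lam) / (α * δ - lam)) := by
      rw [hf₀]; field_simp; ring
    rw [h1, Real.sq_sqrt (by positivity)]
    field_simp
  have hR2 : α * f₀ ^ 2 * (α * δ - lam) + s * f₀ * (α * δ - lam) = lam := by
    have : 2 * (α * f₀ ^ 2 * (α * δ - lam) + s * f₀ * (α * δ - lam)) = 2 * lam := by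
      linear_combination hR - f₀ ^ 2 * (α * δ - lam) * hs
    linarith
  have hqf : 0 < δ - (α * δ - lam) * f₀ ^ 2 := by
    have h1 : 0 < s * f₀ * (α * δ - lam) := by positivity
    have : 0 < α * (δ - (α * δ - lam) * f₀ ^ 2) := by nlinarith
    exact pos_of_mul_pos_right this hα.le
  have hxf : 1 / (2 * δ) < f₀ := by
    refine lt_trans ?_ hf₀big
    rw [div_lt_div_iff₀ (by positivity) (by positivity)]
    linarith
  have hxp : 0 < 1 / (2 * δ) := by positivity
  have mono0 : StrictMonoOn (P1 α δ lam s 0) (Set.Icc 0 f₀) := by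
    apply P1_mono α δ lam s 0 0 f₀ hα hs hltd
    · simpa using hδ
    · simpa using hqf
  have ev : ∀ f g : ℝ → ℝ, Continuous f → Continuous g → f 0 < g 0 →
      ∀ᶠ c in nhdsWithin (0 : ℝ) (Set.Ioi 0), f c < g c := by
    intro f g hf hg h
    exact Filter.Eventually.filter_mono nhdsWithin_le_nhds
      (hf.continuousAt.eventually_lt hg.continuousAt h)
  have E1 := ev (fun c => 0) (fun c => δ - (α * δ - lam) * 0 ^ 2 + c * α * (δ * (2 * 0 - c) - 1))
    (by fun_prop) (by fun_prop) (by simpa using hδ)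
  have E2 := ev (fun c => 0) (fun c => δ - (α * δ - lam) * (f₀ + c) ^ 2
      + c * α * (δ * (2 * (f₀ + c) - c) - 1))
    (by fun_prop) (by fun_prop) (by simpa using hqf)
  have E3 := ev (fun c => 1 / (2 * δ) + c / 2) (fun c => f₀)
    (by fun_prop) (by fun_prop) (by simpa using hxf)
  have E4 := ev (fun c => P1 α δ lam s 0 0) (fun c => P1 α δ lam s c (1 / (2 * δ) + c / 2))
    (by fun_prop) (by unfold P1 g1 g1'; fun_prop)
    (by
      simp only [zero_div, add_zero]
      exact mono0 ⟨le_rfl, hf0pos.le⟩ ⟨hxp.le, hxf.le⟩ hxp)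
  have E5 := ev (fun c => P1 α δ lam s 0 (1 / (2 * δ) + c / 2)) (fun c => P1 α δ lam s c f₀)
    (by unfold P1 g1 g1'; fun_prop) (by unfold P1 g1 g1'; fun_prop)
    (by
      simp only [zero_div, add_zero]
      exact mono0 ⟨hxp.le, hxf.le⟩ ⟨hf0pos.le, le_rfl⟩ hxf)
  obtain ⟨c₁, hc₁, hall⟩ := (mem_nhdsGT_iff_exists_Ioo_subset).1
    (E1.and (E2.and (E3.and (E4.and E5))))
  refine ⟨c₁, hc₁, fun c hc hcc => ?_⟩
  obtain ⟨e1, e2, e3, e4, e5⟩ := hall ⟨hc, hcc⟩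
  clear E1 E2 E3 E4 E5 hall ev
  set xc := 1 / (2 * δ) + c / 2 with hxc
  have hxc0 : 0 < xc := by positivity
  have hxv0 : xv c < 0 := by
    obtain ⟨v1, v2, -⟩ := hxv c hc
    by_contra hneg
    push Not at hneg
    have k1 := mul_nonneg hneg e2.le
    have k2 := mul_pos (sub_pos.2 v1) e1
    have k3 : 0 ≤ (α * δ - lam) * (xv c * (f₀ + c - xv c) * (f₀ + c)) :=
      mul_nonneg hdl.le (mul_nonneg (mul_nonneg hneg (by linarith)) (by linarith))
    have k4 : (f₀ + c) * (δ - (α * δ - lam) * (xv c) ^ 2 + c * α * (δ * (2 * xv c - c) - 1)) = 0 := by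
      rw [v2, mul_zero]
    nlinarith
  have Ψmono : ∀ u v, u < v → Ψ u < Ψ v := by
    intro u v h
    rw [hΨ, hΨ]
    exact Real.exp_lt_exp.2 (mul_lt_mul_of_pos_left h (by positivity))
  have hmax : max (Ψ xc) (Ψ (xv c)) = Ψ xc := max_eq_left (Ψmono _ _ (by linarith)).le
  rw [hmax]
  have hΨpos : ∀ x, 0 < Ψ x := fun x => by rw [hΨ]; positivity
  have hlogΨ : ∀ x, Real.log (Ψ x) / (2 * s) = x := by
    intro x; rw [hΨ, Real.log_exp]; field_simp
  have hΨ0 : Ψ 0 = 1 := by rw [hΨ]; simp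
  have hlogmono : StrictMonoOn (fun y => Real.log y / (2 * s)) (Set.Ioi 0) := by
    intro u hu v hv h
    exact div_lt_div_of_pos_right (Real.log_lt_log hu h) (by positivity)
  -- derivative of Hl
  have dHl : ∀ y, 0 < y → HasDerivAt Hl (P1 α δ lam s 0 (Real.log y / (2 * s)) / (2 * s)) y := by
    intro y hy
    refine transform_deriv s hs0 Hl (g1 α δ lam 0) ?_ y _ hy (g1_deriv _ _ _ _ _)
    intro y hy
    rw [hHl y hy, g1, div_pow, mul_pow, hs]
    congr 1
    field_simp
    ring
  -- derivative of hr
  have hr1d : ∀ x, HasDerivAt (hr1 c) (g1' α δ lam c x) x := by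
    intro x
    have : hr1 c = g1 α δ lam c := by funext z; rw [hhr1, g1]
    rw [this]; exact g1_deriv _ _ _ _ _
  have hr2d : ∀ x, HasDerivAt (hr2 c) (-2 * (lam / α) * c
      - s * (B₀ * Real.exp (-(x - c) * s))) x := by
    intro x
    have : hr2 c = fun x => (lam / α) * c * (c - 2 * x) + c + B₀ * Real.exp (-(x - c) * s) := by
      funext z; rw [hhr2]
    rw [this]
    have h0 := hasDerivAt_id x
    have := ((((h0.const_mul 2).const_sub c).const_mul (lam / α * c)).add_const c).add
      ((((h0.sub_const c).neg.mul_const s).exp).const_mul B₀)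
    refine HasDerivAt.congr_deriv this ?_
    simp
    ring
  have hBe : B₀ * Real.exp (-(f₀ + c - c) * s) = -(2 * f₀ / (α * s)) * (α * δ - lam) := by
    rw [hB₀, mul_assoc, ← Real.exp_add]
    have : f₀ * s + -(f₀ + c - c) * s = 0 := by ring
    rw [this, Real.exp_zero, mul_one]
  have hdglue : g1' α δ lam c (f₀ + c) = -2 * (lam / α) * c
      - s * (B₀ * Real.exp (-(f₀ + c - c) * s)) := by
    rw [hBe, g1']; field_simp; ring
  have hvglue : hr1 c (f₀ + c) = hr2 c (f₀ + c) := by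
    rw [← hhra c _ le_rfl, hhrb c _ le_rfl]
  have hra : ∀ x, x ≤ f₀ + c → HasDerivAt (hr c) (g1' α δ lam c x) x := by
    intro x hx
    rcases hx.lt_or_eq with hx | hx
    · refine (hr1d x).congr_of_eventuallyEq ?_
      filter_upwards [gt_mem_nhds hx] with z hz using hhra c z hz.le
    · subst hx
      have l1 : HasDerivWithinAt (hr c) (g1' α δ lam c (f₀ + c)) (Set.Iic (f₀ + c)) (f₀ + c) :=
        (hr1d _).hasDerivWithinAt.congr (fun z hz => hhra c z hz) (hhra c _ le_rfl)
      have l2 : HasDerivWithinAt (hr c) (g1' α δ lam c (f₀ + c)) (Set.Ici (f₀ + c)) (f₀ + c) := by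
        rw [hdglue]
        exact (hr2d _).hasDerivWithinAt.congr (fun z hz => hhrb c z hz) (hhrb c _ le_rfl)
      have := l1.union l2
      rwa [Set.Iic_union_Ici, hasDerivWithinAt_univ] at this
  have hrb : ∀ x, f₀ + c < x → HasDerivAt (hr c) (-2 * (lam / α) * c
      - s * (B₀ * Real.exp (-(x - c) * s))) x := by
    intro x hx
    refine (hr2d x).congr_of_eventuallyEq ?_
    filter_upwards [lt_mem_nhds hx] with z hz using hhrb c z hz.le
  have P12 : P1 α δ lam s c (f₀ + c) = P2 α lam s c (f₀ + c) := by
    have e := hvglue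
    rw [hhr1, hhr2] at e
    rw [P1, P2, hdglue, g1, e]
    ring
  set Pr : ℝ → ℝ := fun x => if x ≤ f₀ + c then P1 α δ lam s c x else P2 α lam s c x with hPr
  have dHr : ∀ y, 0 < y → HasDerivAt (Hr c) (Pr (Real.log y / (2 * s)) / (2 * s)) y := by
    intro y hy
    by_cases hx : Real.log y / (2 * s) ≤ f₀ + c
    · have := transform_deriv s hs0 (Hr c) (hr c) (hHr c) y _ hy (hra _ hx)
      refine this.congr_deriv ?_
      simp only [hPr, if_pos hx]
      rw [hhra c _ hx, hhr1, P1, g1]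
    · have := transform_deriv s hs0 (Hr c) (hr c) (hHr c) y _ hy (hrb _ (not_le.1 hx))
      refine this.congr_deriv ?_
      simp only [hPr, if_neg hx]
      rw [hhrb c _ (not_le.1 hx).le, hhr2, P2]
      ring
  have m1 : StrictMonoOn (P1 α δ lam s c) (Set.Icc 0 (f₀ + c)) :=
    P1_mono α δ lam s c 0 (f₀ + c) hα hs hltd e1 e2
  have m2 : StrictMonoOn (P2 α lam s c) (Set.Ici (f₀ + c)) := by
    apply P2_mono α lam s c (f₀ + c) hα hs hlam hc
    rw [div_lt_iff₀ (by positivity)] at hf₀big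
    have hlc := mul_pos hlam hc
    linarith
  have mr : StrictMonoOn Pr (Set.Ici 0) := by
    intro u hu v hv h
    have hu0 : 0 ≤ u := hu
    have hv0 : 0 ≤ v := hv
    simp only [hPr]
    split_ifs with a1 a2 a2
    · exact m1 ⟨hu0, a1⟩ ⟨hv0, a2⟩ h
    · have b1 := m2 (Set.mem_Ici.2 le_rfl) (Set.mem_Ici.2 (not_le.1 a2).le) (not_le.1 a2)
      have b2 := m1.monotoneOn ⟨hu0, a1⟩ ⟨by linarith, le_rfl⟩ a1
      linarith
    · linarith
    · exact m2 (Set.mem_Ici.2 (not_le.1 a1).le) (Set.mem_Ici.2 (not_le.1 a2).le) h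
  have hPx : Pr xc = P1 α δ lam s c xc := if_pos (by linarith)
  have hPf : Pr f₀ = P1 α δ lam s c f₀ := if_pos (by linarith)
  have hs2 : 0 < 2 * s := by positivity
  have hg : g1 α δ lam c xc = g1 α δ lam 0 xc := by
    have : c - 2 * xc = - (1 / δ) := by rw [hxc]; field_simp; ring
    rw [g1, g1, this]; field_simp; ring
  have hab : (1 : ℝ) < Ψ xc := by rw [← hΨ0]; exact Ψmono _ _ hxc0
  have hl1 : Real.log 1 / (2 * s) = 0 := by simp
  have main := double_tangent Hl (Hr c) (fun y => P1 α δ lam s 0 (Real.log y / (2 * s)) / (2 * s))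
    (fun y => Pr (Real.log y / (2 * s)) / (2 * s)) 1 (Ψ xc) (Ψ f₀)
    hab (Ψmono _ _ e3)
    (fun y hy => dHl y (lt_of_lt_of_le one_pos hy.1))
    (fun y hy => dHr y (lt_of_lt_of_le (hΨpos xc) hy))
    (by
      intro u hu v hv h
      have u0 : 0 < u := lt_of_lt_of_le one_pos hu.1
      have v0 : 0 < v := lt_of_lt_of_le one_pos hv.1
      have k1 := hlogmono u0 v0 h
      have k2 := hlogmono.monotoneOn (Set.mem_Ioi.2 one_pos) u0 hu.1
      have k3 := hlogmono.monotoneOn v0 (hΨpos xc) hv.2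
      simp only [hl1, hlogΨ] at k1 k2 k3
      exact div_lt_div_of_pos_right (mono0 ⟨k2, by linarith⟩ ⟨by linarith, by linarith⟩ k1) hs2)
    (by
      intro u hu v hv h
      have u1 : Ψ xc ≤ u := hu
      have u0 : 0 < u := lt_of_lt_of_le (hΨpos xc) hu
      have v0 : 0 < v := lt_of_lt_of_le (hΨpos xc) hv
      have k1 := hlogmono u0 v0 h
      have k2 := hlogmono.monotoneOn (hΨpos xc) u0 u1
      simp only [hlogΨ] at k1 k2
      exact div_lt_div_of_pos_right (mr (Set.mem_Ici.2 (by linarith))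
        (Set.mem_Ici.2 (by linarith)) k1) hs2)
    (by
      rw [hHr c _ (hΨpos _), hlogΨ, hhra c xc (by linarith), hhr1, hHl _ (hΨpos _)]
      have k : Real.log (Ψ xc) = 2 * s * xc := by rw [hΨ, Real.log_exp]
      rw [k, mul_pow, mul_pow, hs]
      rw [g1, g1] at hg
      rw [hg]
      congr 1
      field_simp
      ring)
    (by
      simp only [hl1, hlogΨ, hPx]
      exact div_lt_div_of_pos_right e4 hs2)
    (by
      simp only [hlogΨ, hPx]
      refine div_lt_div_of_pos_right ?_ hs2
      rw [P1, P1, hg]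
      refine mul_lt_mul_of_pos_left ?_ (Real.exp_pos _)
      rw [g1', g1']
      have hdc := mul_pos hδ hc
      linarith)
    (by
      simp only [hlogΨ, hPf]
      exact div_lt_div_of_pos_right e5 hs2)
  refine ⟨?_, fun p hp => hp.2.1.trans (Ψmono _ _ e3)⟩
  obtain ⟨p, ⟨p1, p2, p3, p4⟩, pu⟩ := main
  exact ⟨p, ⟨p1, p2, le_rfl, p3, p4⟩, fun q hq => pu q ⟨hq.1, hq.2.1, hq.2.2.2.1, hq.2.2.2.2⟩⟩
end

section
/- Let c ∈ (0,c₁) (with c₁ as in the existence result) and let (y₁,y₂) be the unique pair with 1 < y₁ < y_c ≤ y_v(c) < y₂ solving the tangency system. Set A = H_l'(y₁) and B = H_l(y₁) − H_l'(y₁)·y₁, and define W(y;c) = H_l(y) for 1 ≤ y ≤ y₁, W(y;c) = A·y + B for y₁ < y < y₂, and W(y;c) = H_r(y;c) for y ≥ y₂. Then W(·;c) is continuously differentiable on [1,∞), convex, nonpositive, satisfies W(y;c) ≤ H(y;c) for all y ≥ 1, and every convex, nonpositive function g on [1,∞) with g ≤ H(·;c) satisfies g ≤ W(·;c); moreover the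 straight line y ↦ A·y + B lies below H(·;c) on (1,∞). -/
lemma glueDeriv {f f1 f2 g1 g2 : ℝ → ℝ} {m : ℝ} (h1 : ∀ x, x ≤ m → f x = f1 x)
    (h2 : ∀ x, m ≤ x → f x = f2 x) (x : ℝ) (d1 : x ≤ m → HasDerivAt f1 (g1 x) x)
    (d2 : m ≤ x → HasDerivAt f2 (g2 x) x) (e : g1 m = g2 m) :
    HasDerivAt f (if x ≤ m then g1 x else g2 x) x := by
  rcases lt_trichotomy x m with hx | hx | hx
  · rw [if_pos hx.le]
    refine (d1 hx.le).congr_of_eventuallyEq ?_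
    filter_upwards [Iio_mem_nhds hx] with z hz using h1 z (le_of_lt hz)
  · subst hx
    rw [if_pos le_rfl]
    have a : HasDerivWithinAt f (g1 x) (Set.Iic x) x :=
      (d1 le_rfl).hasDerivWithinAt.congr (fun z hz => h1 z hz) (h1 x le_rfl)
    have b : HasDerivWithinAt f (g1 x) (Set.Ici x) x := by
      rw [e]
      exact (d2 le_rfl).hasDerivWithinAt.congr (fun z hz => h2 z hz) (h2 x le_rfl)
    have := a.union b
    rwa [Set.Iic_union_Ici, hasDerivWithinAt_univ] at this
  · rw [if_neg (not_le.mpr hx)]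
    refine (d2 hx.le).congr_of_eventuallyEq ?_
    filter_upwards [Ioi_mem_nhds hx] with z hz using h2 z (le_of_lt hz)

lemma mvtPoint {f f' : ℝ → ℝ} {a b : ℝ} (hab : a < b)
    (d : ∀ x ∈ Set.Icc a b, HasDerivAt f (f' x) x) :
    ∃ t, a < t ∧ t < b ∧ f b - f a = f' t * (b - a) := by
  obtain ⟨t, ht, h⟩ := exists_hasDerivAt_eq_slope f f' hab
    (fun x hx => (d x hx).continuousAt.continuousWithinAt)
    (fun x hx => d x ⟨hx.1.le, hx.2.le⟩)
  refine ⟨t, ht.1, ht.2, ?_⟩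
  rw [h]
  have : b - a ≠ 0 := by linarith
  field_simp

lemma tangentBelow {f f' : ℝ → ℝ} {S : Set ℝ} (hS : S.OrdConnected)
    (d : ∀ x ∈ S, HasDerivAt f (f' x) x) (hm : MonotoneOn f' S) {a b : ℝ} (ha : a ∈ S)
    (hb : b ∈ S) : f a + f' a * (b - a) ≤ f b := by
  rcases lt_trichotomy a b with h | h | h
  · obtain ⟨t, h1, h2, h3⟩ := mvtPoint h (fun x hx => d x (hS.out ha hb hx))
    have := hm ha (hS.out ha hb ⟨h1.le, h2.le⟩) h1.le
    nlinarith
  · subst h; simp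
  · obtain ⟨t, h1, h2, h3⟩ := mvtPoint h (fun x hx => d x (hS.out hb ha hx))
    have := hm (hS.out hb ha ⟨h1.le, h2.le⟩) ha h2.le
    nlinarith

lemma tangentAbove {f f' : ℝ → ℝ} {S : Set ℝ} (hS : S.OrdConnected)
    (d : ∀ x ∈ S, HasDerivAt f (f' x) x) (hm : AntitoneOn f' S) {a b : ℝ} (ha : a ∈ S)
    (hb : b ∈ S) : f b ≤ f a + f' a * (b - a) := by
  have := tangentBelow (f := fun x => - f x) (f' := fun x => - f' x) hS
    (fun x hx => (d x hx).neg) (fun x hx y hy hxy => neg_le_neg (hm hx hy hxy)) ha hb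
  linarith

lemma concaveChord {f f' : ℝ → ℝ} {a b A B t : ℝ}
    (d : ∀ x ∈ Set.Icc a b, HasDerivAt f (f' x) x) (hm : AntitoneOn f' (Set.Icc a b))
    (h1 : A * a + B ≤ f a) (h2 : A * b + B ≤ f b) (ht : t ∈ Set.Icc a b) :
    A * t + B ≤ f t := by
  have hab : a ≤ b := ht.1.trans ht.2
  have e1 := tangentAbove Set.ordConnected_Icc d hm ht ⟨le_rfl, hab⟩
  have e2 := tangentAbove Set.ordConnected_Icc d hm ht ⟨hab, le_rfl⟩
  rcases ht.1.eq_or_lt with h | h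
  · rw [← h]; exact h1
  have k1 : (A * a + B) * (b - t) ≤ (f t + f' t * (a - t)) * (b - t) :=
    mul_le_mul_of_nonneg_right (h1.trans e1) (by linarith [ht.2])
  have k2 : (A * b + B) * (t - a) ≤ (f t + f' t * (b - t)) * (t - a) :=
    mul_le_mul_of_nonneg_right (h2.trans e2) (by linarith)
  have k : (A * t + B) * (b - a) ≤ f t * (b - a) := by nlinarith
  exact le_of_mul_le_mul_right k (by linarith [ht.2])

/-- Abstract version of the theorem. -/
lemma abstractMain {Hl Hr H dl dr W : ℝ → ℝ} {yi yc yv ym y₁ y₂ A B : ℝ}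
    (hdl : ∀ y, 0 < y → HasDerivAt Hl (dl y) y) (hdr : ∀ y, 0 < y → HasDerivAt Hr (dr y) y)
    (cl : ContinuousOn dl (Set.Ioi 0)) (cr : ContinuousOn dr (Set.Ioi 0))
    (hyi : 1 ≤ yi) (ml : MonotoneOn dl (Set.Icc 1 yi)) (al : StrictAntiOn dl (Set.Ici yi))
    (hyv0 : 0 < yv) (mr : MonotoneOn dr (Set.Ici yv)) (ar : AntitoneOn dr (Set.Ioc 0 yv))
    (hlr : ∀ y, 0 < y → y ≤ yc → Hl y ≤ Hr y) (hrl : ∀ y, yc ≤ y → Hr y ≤ Hl y)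
    (hl1 : Hl 1 ≤ 0) (hrm : ∀ y, ym ≤ y → Hr y ≤ 0)
    (hH : ∀ y, 0 < y → H y = min (Hl y) (Hr y))
    (hy₁ : 1 < y₁) (hy₁c : y₁ < yc) (hyc2 : yc < y₂) (hyv2 : yv < y₂)
    (hA : A = dl y₁) (hA2 : A = dr y₂) (hB : B = Hl y₁ - A * y₁) (hB2 : B = Hr y₂ - A * y₂)
    (hWl : ∀ y, 1 ≤ y → y ≤ y₁ → W y = Hl y)
    (hWm : ∀ y, y₁ < y → y < y₂ → W y = A * y + B)
    (hWr : ∀ y, y₂ ≤ y → W y = Hr y) :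
    ContDiffOn ℝ 1 W (Set.Ici 1) ∧
    ConvexOn ℝ (Set.Ici 1) W ∧
    (∀ y ∈ Set.Ici (1 : ℝ), W y ≤ 0) ∧
    (∀ y ∈ Set.Ici (1 : ℝ), W y ≤ H y) ∧
    (∀ g : ℝ → ℝ, ConvexOn ℝ (Set.Ici 1) g → (∀ y ∈ Set.Ici (1 : ℝ), g y ≤ 0) →
      (∀ y ∈ Set.Ici (1 : ℝ), g y ≤ H y) → ∀ y ∈ Set.Ici (1 : ℝ), g y ≤ W y) ∧
    (∀ y, 1 < y → A * y + B ≤ H y) := by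
  set yw := max yc yv with hyw
  have hcw : yc ≤ yw := le_max_left _ _
  have hvw : yv ≤ yw := le_max_right _ _
  have hw2 : yw < y₂ := max_lt hyc2 hyv2
  -- line below Hr on [yv, ∞)
  have LR : ∀ y, yv ≤ y → A * y + B ≤ Hr y := by
    intro y hy
    have := tangentBelow Set.ordConnected_Ici
      (fun x hx => hdr x (lt_of_lt_of_le hyv0 hx)) mr (a := y₂) (b := y) hyv2.le hy
    rw [← hA2] at this
    linarith
  have Lw : A * yw + B ≤ Hl yw := (LR yw hvw).trans (hrl yw hcw)
  have hy1i : y₁ < yi := by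
    by_contra hcon
    push Not at hcon
    have h1w : y₁ < yw := lt_of_lt_of_le hy₁c hcw
    obtain ⟨t, h1, h2, h3⟩ := mvtPoint h1w (fun x hx => hdl x (by linarith [hx.1]))
    have h4 : dl t < dl y₁ := al hcon (by simp only [Set.mem_Ici]; linarith) h1
    rw [← hA] at h4
    nlinarith
  have LL1 : ∀ y, 1 ≤ y → y ≤ yi → A * y + B ≤ Hl y := by
    intro y h1 h2
    have := tangentBelow Set.ordConnected_Icc
      (fun x hx => hdl x (by linarith [hx.1])) ml (a := y₁) (b := y) ⟨hy₁.le, hy1i.le⟩ ⟨h1, h2⟩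
    rw [← hA] at this
    linarith
  have LL : ∀ y, 1 ≤ y → y ≤ yw → A * y + B ≤ Hl y := by
    intro y h1 h2
    rcases le_total y yi with h | h
    · exact LL1 y h1 h
    · exact concaveChord (a := yi) (b := yw) (fun x hx => hdl x (by linarith [hx.1]))
        (al.antitoneOn.mono Set.Icc_subset_Ici_self) (LL1 yi hyi le_rfl) Lw ⟨h, h2⟩
  have LRc : ∀ y, yc ≤ y → A * y + B ≤ Hr y := by
    intro y h1
    rcases le_total yv y with h | h
    · exact LR y h
    · have hyc0 : 0 < yc := by linarith
      refine concaveChord (a := yc) (b := yv) (fun x hx => hdr x (by linarith [hx.1]))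
        (ar.mono fun x hx => ⟨by linarith [hx.1], hx.2⟩)
        ((LL yc (by linarith) hcw).trans (hlr yc hyc0 le_rfl)) (LR yv le_rfl) ⟨h1, h⟩
  have HL : ∀ y, 0 < y → y ≤ yc → H y = Hl y := fun y h1 h2 => by
    rw [hH y h1, min_eq_left (hlr y h1 h2)]
  have HR : ∀ y, 0 < y → yc ≤ y → H y = Hr y := fun y h1 h2 => by
    rw [hH y h1, min_eq_right (hrl y h2)]
  have LH : ∀ y, 1 < y → A * y + B ≤ H y := by
    intro y hy
    rcases le_total y yc with h | h
    · rw [HL y (by linarith) h]; exact LL y hy.le (h.trans hcw)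
    · rw [HR y (by linarith) h]; exact LRc y h
  have h12 : y₁ < y₂ := hy₁c.trans hyc2
  -- the C¹ extension
  let G : ℝ → ℝ := fun y => dl (min y y₁) + dr (max y y₂) - A
  have cG : ContinuousOn G (Set.Ioi 0) := by
    refine (ContinuousOn.add ?_ ?_).sub continuousOn_const
    · exact cl.comp (by fun_prop) (fun x hx => Set.mem_Ioi.mpr (lt_min hx (one_pos.trans hy₁)))
    · exact cr.comp (by fun_prop) (fun x hx => Set.mem_Ioi.mpr (lt_max_of_lt_left hx))
  let W0 : ℝ → ℝ := fun y => if y ≤ y₁ then Hl y else if y ≤ y₂ then A * y + B else Hr y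
  have dW0 : ∀ y, 0 < y → HasDerivAt W0 (G y) y := by
    intro y hy
    have i1 := glueDeriv (f := fun y => if y ≤ y₂ then A * y + B else Hr y)
      (f1 := fun y => A * y + B) (f2 := Hr) (g1 := fun _ => A) (g2 := dr) (m := y₂)
      (fun x hx => if_pos hx)
      (fun x hx => by
        rcases hx.eq_or_lt with h | h
        · subst h; simp only [le_refl, if_true]; linarith
        · exact if_neg (not_le.mpr h)) y
      (fun _ => by simpa using ((hasDerivAt_id y).const_mul A).add_const B)
      (fun _ => hdr y hy) hA2
    have i2 := glueDeriv (f := W0) (f1 := Hl)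
      (f2 := fun y => if y ≤ y₂ then A * y + B else Hr y) (g1 := dl)
      (g2 := fun y => if y ≤ y₂ then A else dr y) (m := y₁)
      (fun x hx => if_pos hx)
      (fun x hx => by
        rcases hx.eq_or_lt with h | h
        · subst h; simp only [W0, le_refl, if_true, h12.le]; linarith
        · exact if_neg (not_le.mpr h)) y
      (fun _ => hdl y hy) (fun _ => i1) (by simp only [h12.le, if_true]; exact hA.symm)
    convert i2 using 1
    simp only [G]
    split_ifs with h1 h2
    · rw [min_eq_left h1, max_eq_right (by linarith)]; linarith
    · rw [min_eq_right (by linarith), max_eq_right h2]; linarith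
    · rw [min_eq_right (by linarith), max_eq_left (by linarith)]; linarith
  have hWW : Set.EqOn W W0 (Set.Ici 1) := by
    intro y hy
    simp only [W0]
    split_ifs with h1 h2
    · exact hWl y hy h1
    · rcases h2.eq_or_lt with h | h
      · rw [hWr y h.ge, h]; linarith
      · exact hWm y (not_le.mp h1) h
    · exact hWr y (by linarith)
  have cdW0 : ContDiffOn ℝ 1 W0 (Set.Ioi 0) := by
    rw [show (1 : WithTop ℕ∞) = 0 + 1 by simp, contDiffOn_succ_iff_deriv_of_isOpen isOpen_Ioi]
    refine ⟨fun y hy => (dW0 y hy).differentiableAt.differentiableWithinAt, by simp, ?_⟩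
    rw [contDiffOn_zero]
    exact cG.congr (fun y hy => (dW0 y hy).deriv)
  have cdW : ContDiffOn ℝ 1 W (Set.Ici 1) :=
    (cdW0.mono (Set.Ici_subset_Ioi.mpr one_pos)).congr hWW
  have mG : MonotoneOn G (Set.Ici 1) := by
    intro a ha b hb hab
    simp only [Set.mem_Ici] at ha hb
    have e1 : dl (min a y₁) ≤ dl (min b y₁) :=
      ml ⟨le_min ha hy₁.le, (min_le_right _ _).trans hy1i.le⟩
        ⟨le_min hb hy₁.le, (min_le_right _ _).trans hy1i.le⟩ (min_le_min_right _ hab)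
    have e2 : dr (max a y₂) ≤ dr (max b y₂) :=
      mr (hyv2.le.trans (le_max_right _ _)) (hyv2.le.trans (le_max_right _ _))
        (max_le_max_right _ hab)
    simp only [G]; linarith
  have cvW0 : ConvexOn ℝ (Set.Ici 1) W0 := by
    refine MonotoneOn.convexOn_of_deriv (convex_Ici 1)
      (fun y hy => (dW0 y (lt_of_lt_of_le one_pos hy)).continuousAt.continuousWithinAt) ?_ ?_
    · rw [interior_Ici]
      exact fun y hy => (dW0 y (one_pos.trans hy)).differentiableAt.differentiableWithinAt
    · rw [interior_Ici]
      intro a ha b hb hab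
      rw [(dW0 a (one_pos.trans ha)).deriv, (dW0 b (one_pos.trans hb)).deriv]
      exact mG (Set.mem_Ici.mpr (le_of_lt ha)) (Set.mem_Ici.mpr (le_of_lt hb)) hab
  have cvW : ConvexOn ℝ (Set.Ici 1) W := cvW0.congr hWW.symm
  have WH : ∀ y ∈ Set.Ici (1 : ℝ), W y ≤ H y := by
    intro y hy
    simp only [Set.mem_Ici] at hy
    rcases le_or_gt y y₁ with h1 | h1
    · rw [hWl y hy h1, HL y (by linarith) (by linarith)]
    rcases lt_or_ge y y₂ with h2 | h2
    · rw [hWm y h1 h2]; exact LH y (by linarith)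
    · rw [hWr y h2, HR y (by linarith) (by linarith)]
  refine ⟨cdW, cvW, ?_, WH, ?_, LH⟩
  · intro y hy
    simp only [Set.mem_Ici] at hy
    set z := max y (max y₂ ym) with hz
    have hz1 : y ≤ z := le_max_left _ _
    have hz2 : y₂ ≤ z := (le_max_left _ _).trans (le_max_right _ _)
    have hz3 : ym ≤ z := (le_max_right _ _).trans (le_max_right _ _)
    have := cvW.le_max_of_mem_Icc (x := 1) (y := z) (z := y) (Set.mem_Ici.mpr le_rfl)
      (Set.mem_Ici.mpr (by linarith)) ⟨hy, hz1⟩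
    refine this.trans (max_le ?_ ?_)
    · rw [hWl 1 le_rfl hy₁.le]; exact hl1
    · rw [hWr z hz2]; exact hrm z hz3
  · intro g cg g0 gH y hy
    simp only [Set.mem_Ici] at hy
    rcases le_or_gt y y₁ with h1 | h1
    · rw [hWl y hy h1, ← HL y (by linarith) (by linarith)]; exact gH y hy
    rcases lt_or_ge y y₂ with h2 | h2
    · rw [hWm y h1 h2]
      have k1 := gH y₁ hy₁.le
      have k2 := gH y₂ (hy₁.trans h12).le
      rw [HL y₁ (by linarith) hy₁c.le] at k1
      rw [HR y₂ (by linarith) hyc2.le] at k2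
      have hd : 0 < y₂ - y₁ := by linarith
      have w1 : 0 ≤ (y₂ - y) / (y₂ - y₁) := div_nonneg (by linarith) hd.le
      have w2 : 0 ≤ (y - y₁) / (y₂ - y₁) := div_nonneg (by linarith) hd.le
      have := cg.2 (Set.mem_Ici.mpr hy₁.le) (Set.mem_Ici.mpr (hy₁.trans h12).le) w1 w2
        (by field_simp; ring)
      simp only [smul_eq_mul] at this
      rw [show (y₂ - y) / (y₂ - y₁) * y₁ + (y - y₁) / (y₂ - y₁) * y₂ = y by field_simp; ring] at this
      have e1 : (y₂ - y) / (y₂ - y₁) * g y₁ ≤ (y₂ - y) / (y₂ - y₁) * (A * y₁ + B) :=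
        mul_le_mul_of_nonneg_left (by linarith) (div_nonneg (by linarith) hd.le)
      have e2 : (y - y₁) / (y₂ - y₁) * g y₂ ≤ (y - y₁) / (y₂ - y₁) * (A * y₂ + B) :=
        mul_le_mul_of_nonneg_left (by linarith) (div_nonneg (by linarith) hd.le)
      have e3 : (y₂ - y) / (y₂ - y₁) * (A * y₁ + B) + (y - y₁) / (y₂ - y₁) * (A * y₂ + B)
          = A * y + B := by field_simp; ring
      linarith
    · rw [hWr y h2, ← HR y (by linarith) (by linarith)]; exact gH y hy

/-- Derivative of √y h(log y/(2s)). -/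
lemma derivTransform {F h h' : ℝ → ℝ} {s : ℝ} (hs : 0 < s)
    (hF : ∀ y, 0 < y → F y = Real.sqrt y * h (Real.log y / (2 * s)))
    (hd : ∀ x, HasDerivAt h (h' x) x) (y : ℝ) (hy : 0 < y) :
    HasDerivAt F ((fun x => Real.exp (-s * x) * (s * h x + h' x) / (2 * s))
      (Real.log y / (2 * s))) y := by
  have e1 : HasDerivAt (fun y => Real.log y / (2 * s)) (y⁻¹ / (2 * s)) y :=
    (Real.hasDerivAt_log hy.ne').div_const _
  have e2 := (Real.hasDerivAt_sqrt hy.ne').mul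
    (HasDerivAt.comp y (hd (Real.log y / (2 * s))) e1)
  have e3 : HasDerivAt F _ y := e2.congr_of_eventuallyEq (by
    filter_upwards [Ioi_mem_nhds hy] with z hz
    simp [hF z hz])
  convert e3 using 1
  have hx : Real.exp (-s * (Real.log y / (2 * s))) = 1 / Real.sqrt y := by
    rw [show -s * (Real.log y / (2 * s)) = -(Real.log y / 2) by field_simp, Real.exp_neg,
      Real.exp_half, Real.exp_log hy, one_div]
  have hq : 0 < Real.sqrt y := Real.sqrt_pos.mpr hy
  simp only [hx, Function.comp]
  have hyy : y⁻¹ = 1 / (Real.sqrt y * Real.sqrt y) := by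
    rw [Real.mul_self_sqrt hy.le, one_div]
  rw [hyy]
  field_simp

lemma derivPhi {h h' h'' : ℝ → ℝ} {s : ℝ} (hd : ∀ x, HasDerivAt h (h' x) x)
    (hd' : ∀ x, HasDerivAt h' (h'' x) x) (x : ℝ) :
    HasDerivAt (fun x => Real.exp (-s * x) * (s * h x + h' x) / (2 * s))
      (Real.exp (-s * x) * (h'' x - s ^ 2 * h x) / (2 * s)) x := by
  have e0 : HasDerivAt (fun x => Real.exp (-s * x)) (Real.exp (-s * x) * -s) x := by
    have := ((hasDerivAt_id x).const_mul (-s)).exp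
    simpa using this
  have e1 := (e0.mul (((hd x).const_mul s).add (hd' x))).div_const (2 * s)
  refine HasDerivAt.congr_deriv e1 ?_
  simp only [Pi.add_apply]
  ring

set_option maxHeartbeats 4000000 in
/-- W(·;c) is the greatest nonpositive convex minorant of H(·;c) on [1,∞),
is C¹, and the common tangent lies below H(·;c) on (1,∞). -/
theorem stmt_9 (α δ lam : ℝ) (hα : 0 < α) (hδ : 0 < δ) (hlam : 0 < lam)
    (hltd : lam < α * δ)
    (f₀ : ℝ)
    (hf₀ : f₀ = (1 / Real.sqrt (2 * α)) * (Real.sqrt ((α * δ + lam) / (α * δ - lam)) - 1))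
    (hf₀big : α / (2 * lam) < f₀)
    (Ψ : ℝ → ℝ) (hΨ : ∀ x, Ψ x = Real.exp (2 * Real.sqrt (2 * α) * x))
    (Hl : ℝ → ℝ)
    (hHl : ∀ y, 0 < y → Hl y = Real.sqrt y *
      (-(lam / α ^ 2) + ((δ - lam / α) / (8 * α)) * (Real.log y) ^ 2))
    (B₀ : ℝ)
    (hB₀ : B₀ = -(2 * f₀ / (α * Real.sqrt (2 * α))) * (α * δ - lam) *
      Real.exp (f₀ * Real.sqrt (2 * α)))
    (hr1 hr2 hr Hr H : ℝ → ℝ → ℝ)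
    (hhr1 : ∀ c x, hr1 c x = δ * c * (c - 2 * x) + (δ - lam / α) * x ^ 2 + c - lam / α ^ 2)
    (hhr2 : ∀ c x, hr2 c x = (lam / α) * c * (c - 2 * x) + c +
      B₀ * Real.exp (-(x - c) * Real.sqrt (2 * α)))
    (hhra : ∀ c x, x ≤ f₀ + c → hr c x = hr1 c x)
    (hhrb : ∀ c x, f₀ + c ≤ x → hr c x = hr2 c x)
    (hHr : ∀ c y, 0 < y → Hr c y = Real.sqrt y * hr c (Real.log y / (2 * Real.sqrt (2 * α))))
    (hH : ∀ c y, 0 < y → H c y = min (Hl y) (Hr c y))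
    (xv : ℝ → ℝ)
    (hxv : ∀ c, 0 < c →
      (xv c < f₀ + c ∧
        δ - (α * δ - lam) * (xv c) ^ 2 + c * α * (δ * (2 * xv c - c) - 1) = 0 ∧
        ∀ x, x < f₀ + c →
          δ - (α * δ - lam) * x ^ 2 + c * α * (δ * (2 * x - c) - 1) = 0 → x = xv c))
    -- c₁ as in the existence result:
    (c₁ : ℝ) (hc₁pos : 0 < c₁)
    (hc₁ : ∀ c, 0 < c → c < c₁ → ∃! p : ℝ × ℝ,
      1 < p.1 ∧ p.1 < Ψ (1 / (2 * δ) + c / 2) ∧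
      Ψ (1 / (2 * δ) + c / 2) ≤ max (Ψ (1 / (2 * δ) + c / 2)) (Ψ (xv c)) ∧
      max (Ψ (1 / (2 * δ) + c / 2)) (Ψ (xv c)) < p.2 ∧
      TangencySystem Hl (Hr c) p.1 p.2)
    -- fix c ∈ (0,c₁) and the (unique) tangency pair (y₁,y₂):
    (c : ℝ) (hc : 0 < c) (hcc₁ : c < c₁)
    (y₁ y₂ : ℝ)
    (hy₁1 : 1 < y₁) (hy₁c : y₁ < Ψ (1 / (2 * δ) + c / 2))
    (hycv : Ψ (1 / (2 * δ) + c / 2) ≤ max (Ψ (1 / (2 * δ) + c / 2)) (Ψ (xv c)))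
    (hyv2 : max (Ψ (1 / (2 * δ) + c / 2)) (Ψ (xv c)) < y₂)
    (hsys : TangencySystem Hl (Hr c) y₁ y₂)
    -- A, B and W(·;c):
    (A B : ℝ) (hA : A = deriv Hl y₁) (hB : B = Hl y₁ - deriv Hl y₁ * y₁)
    (W : ℝ → ℝ)
    (hWl : ∀ y, 1 ≤ y → y ≤ y₁ → W y = Hl y)
    (hWm : ∀ y, y₁ < y → y < y₂ → W y = A * y + B)
    (hWr : ∀ y, y₂ ≤ y → W y = Hr c y) :
    ContDiffOn ℝ 1 W (Set.Ici 1) ∧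
    ConvexOn ℝ (Set.Ici 1) W ∧
    (∀ y ∈ Set.Ici (1 : ℝ), W y ≤ 0) ∧
    (∀ y ∈ Set.Ici (1 : ℝ), W y ≤ H c y) ∧
    (∀ g : ℝ → ℝ, ConvexOn ℝ (Set.Ici 1) g → (∀ y ∈ Set.Ici (1 : ℝ), g y ≤ 0) →
      (∀ y ∈ Set.Ici (1 : ℝ), g y ≤ H c y) → ∀ y ∈ Set.Ici (1 : ℝ), g y ≤ W y) ∧
    (∀ y, 1 < y → A * y + B ≤ H c y) := by
  set s := Real.sqrt (2 * α) with hs_def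
  have hs : 0 < s := Real.sqrt_pos.mpr (by linarith)
  have hs2 : s ^ 2 = 2 * α := Real.sq_sqrt (by linarith)
  set K := α * δ - lam with hK
  have hKpos : 0 < K := by linarith
  have hKα : δ - lam / α = K / α := by rw [hK]; field_simp
  have hf0pos : 0 < f₀ := lt_trans (by positivity) hf₀big
  -- the quadratic identity for f₀
  have hf0eq : K * (2 * α * f₀ ^ 2 + 2 * s * f₀) = 2 * lam := by
    have h1 : s * f₀ + 1 = Real.sqrt ((α * δ + lam) / K) := by
      rw [hf₀]; field_simp; ring
    have h2 : (s * f₀ + 1) ^ 2 = (α * δ + lam) / K := by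
      rw [h1, Real.sq_sqrt]
      exact div_nonneg (by positivity) hKpos.le
    have h3 : K * (s * f₀ + 1) ^ 2 = α * δ + lam := by rw [h2]; field_simp
    have h4 : (s * f₀ + 1) ^ 2 = 2 * α * f₀ ^ 2 + 2 * s * f₀ + 1 := by rw [← hs2]; ring
    rw [h4] at h3
    linarith
  have hf0lam : α < 2 * lam * f₀ := by
    rw [div_lt_iff₀ (by positivity)] at hf₀big; linarith
  have hKf : α * (K * f₀ ^ 2) < lam := by
    have : 0 < K * (s * f₀) := by positivity
    linarith
  have hKf' : K * f₀ ^ 2 < δ := by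
    have : α * (K * f₀ ^ 2) < α * δ := by linarith
    exact lt_of_mul_lt_mul_left this hα.le
  have hf0δ : 1 < 2 * δ * f₀ := by
    have : α * 1 < α * (2 * δ * f₀) := by
      have := mul_lt_mul_of_pos_right hltd hf0pos
      linarith
    exact lt_of_mul_lt_mul_left this hα.le
  have hm : 1 / (2 * δ) + c / 2 ≤ f₀ + c := by
    have : 1 / (2 * δ) ≤ f₀ := by
      rw [div_le_iff₀ (by positivity)]; linarith
    linarith
  obtain ⟨hv1, hv2, -⟩ := hxv c hc
  set v := xv c with hv
  set m := f₀ + c with hm_def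
  set xc := 1 / (2 * δ) + c / 2 with hxc
  have hxcδ : 2 * δ * xc = 1 + δ * c := by rw [hxc]; field_simp
  -- the quadratic q
  let q : ℝ → ℝ := fun x => δ - K * x ^ 2 + c * α * (δ * (2 * x - c) - 1)
  have hqv : q v = 0 := hv2
  have hqm : 0 < q m := by
    have e : q m = (δ - K * f₀ ^ 2) + c * (2 * lam * f₀ - α) + lam * c ^ 2 := by
      simp only [q, hm_def, hK]; ring
    rw [e]
    have : 0 < c * (2 * lam * f₀ - α) := mul_pos hc (by linarith)
    have : 0 < lam * c ^ 2 := by positivity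
    linarith
  have hq1 : ∀ x, v ≤ x → x ≤ m → 0 ≤ q x := by
    intro x h1 h2
    have e : q x * (m - v) = q m * (x - v) + q v * (m - x) + K * ((x - v) * (m - x) * (m - v)) := by
      simp only [q]; ring
    rw [hqv] at e
    have : 0 ≤ q x * (m - v) := by
      rw [e]
      have a1 : 0 ≤ x - v := by linarith
      have a2 : 0 ≤ m - x := by linarith
      have a3 : 0 ≤ m - v := by linarith
      positivity
    exact nonneg_of_mul_nonneg_left this (by linarith)
  have hq2 : ∀ x, x ≤ v → q x ≤ 0 := by
    intro x h1
    have e : q v * (m - x) = q x * (m - v) + q m * (v - x) + K * ((v - x) * (m - v) * (m - x)) := by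
      simp only [q]; ring
    rw [hqv] at e
    have a1 : 0 ≤ v - x := by linarith
    have a2 : 0 ≤ m - x := by linarith
    have a3 : 0 ≤ m - v := by linarith
    have a4 : 0 ≤ q m * (v - x) := by positivity
    have a5 : 0 ≤ K * ((v - x) * (m - v) * (m - x)) := by positivity
    have : q x * (m - v) ≤ 0 := by linarith
    by_contra hcon
    push Not at hcon
    have : 0 < q x * (m - v) := mul_pos hcon (by linarith)
    linarith
  -- the functions in the x variable
  let hl : ℝ → ℝ := fun x => (K / α) * x ^ 2 - lam / α ^ 2
  let hl' : ℝ → ℝ := fun x => 2 * (K / α) * x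
  let hl'' : ℝ → ℝ := fun _ => 2 * (K / α)
  have dhl : ∀ x, HasDerivAt hl (hl' x) x := fun x =>
    (((hasDerivAt_pow 2 x).const_mul (K / α)).sub_const (lam / α ^ 2)).congr_deriv (by
      simp only [hl']; push_cast; ring)
  have dhl' : ∀ x, HasDerivAt hl' (hl'' x) x := fun x =>
    ((hasDerivAt_id x).const_mul (2 * (K / α))).congr_deriv (by simp only [hl'']; ring)
  let k1 : ℝ → ℝ := fun x => δ * c * (c - 2 * x) + (K / α) * x ^ 2 + c - lam / α ^ 2
  let k1' : ℝ → ℝ := fun x => - (2 * δ * c) + 2 * (K / α) * x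
  let k1'' : ℝ → ℝ := fun _ => 2 * (K / α)
  have dk1 : ∀ x, HasDerivAt k1 (k1' x) x := fun x =>
    (((((((hasDerivAt_id x).const_mul 2).const_sub c).const_mul (δ * c)).add
      ((hasDerivAt_pow 2 x).const_mul (K / α))).add_const c).sub_const (lam / α ^ 2)).congr_deriv (by
      simp only [k1']; push_cast; ring)
  have dk1' : ∀ x, HasDerivAt k1' (k1'' x) x := fun x =>
    (((hasDerivAt_id x).const_mul (2 * (K / α))).const_add (- (2 * δ * c))).congr_deriv (by
      simp only [k1'']; ring)
  let k2 : ℝ → ℝ := fun x => (lam / α) * c * (c - 2 * x) + c + B₀ * Real.exp (-(x - c) * s)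
  let k2' : ℝ → ℝ := fun x => -(2 * (lam / α) * c) - s * B₀ * Real.exp (-(x - c) * s)
  let k2'' : ℝ → ℝ := fun x => s ^ 2 * B₀ * Real.exp (-(x - c) * s)
  have dexp : ∀ x, HasDerivAt (fun x => Real.exp (-(x - c) * s)) (Real.exp (-(x - c) * s) * (-s)) x :=
    fun x => ((((hasDerivAt_id x).sub_const c).neg.mul_const s).exp).congr_deriv (by
      simp)
  have dk2 : ∀ x, HasDerivAt k2 (k2' x) x := fun x =>
    (((((((hasDerivAt_id x).const_mul 2).const_sub c).const_mul ((lam / α) * c)).add_const c).add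
      ((dexp x).const_mul B₀))).congr_deriv (by
      simp only [k2']; ring)
  have dk2' : ∀ x, HasDerivAt k2' (k2'' x) x := fun x =>
    (((dexp x).const_mul (s * B₀)).const_sub (-(2 * (lam / α) * c))).congr_deriv (by
      simp only [k2'']; ring)
  have hB0m : B₀ * Real.exp (-(m - c) * s) = -(2 * f₀ / (α * s)) * K := by
    rw [hB₀, mul_assoc, ← Real.exp_add, show f₀ * s + -(m - c) * s = 0 by rw [hm_def]; ring,
      Real.exp_zero, mul_one]
  have hB0u : ∀ x, B₀ * Real.exp (-(x - c) * s) =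
      -(2 * f₀ / (α * s)) * K * Real.exp (-(s * (x - m))) := by
    intro x
    rw [hB₀, mul_assoc, ← Real.exp_add]
    congr 2
    rw [hm_def]; ring
  have hkm' : k1' m = k2' m := by
    simp only [k1', k2']
    rw [mul_assoc s, hB0m, hm_def, hK]
    field_simp
    ring
  have hfrac : f₀ ^ 2 + 2 * f₀ / s = lam / (α * K) := by
    have : 2 * f₀ / s = s * f₀ / α := by
      field_simp; rw [hs2]
    rw [this]
    field_simp
    linarith
  have hrk1 : ∀ x, x ≤ m → hr c x = k1 x := fun x hx => by
    rw [hhra c x hx, hhr1, hKα]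
  have hrk2 : ∀ x, m ≤ x → hr c x = k2 x := fun x hx => by
    rw [hhrb c x hx, hhr2]
  have hk21 : ∀ x, m ≤ x → k2 x ≤ k1 x := by
    intro x hx
    have hu : 0 ≤ x - m := by linarith
    have hexp : 1 - s * (x - m) ≤ Real.exp (-(s * (x - m))) := by
      have := Real.add_one_le_exp (-(s * (x - m))); linarith
    have e : k1 x - k2 x = (K / α) * ((x - c) ^ 2 - lam / (α * K)
        + (2 * f₀ / s) * Real.exp (-(s * (x - m)))) := by
      simp only [k1, k2]
      rw [hB0u x]
      have hd : δ = K / α + lam / α := by rw [hK]; field_simp; ring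
      rw [hd]
      field_simp
      ring
    have e2 : (2 * f₀ / s) * (1 - s * (x - m)) ≤ (2 * f₀ / s) * Real.exp (-(s * (x - m))) :=
      mul_le_mul_of_nonneg_left hexp (by positivity)
    have e3 : (2 * f₀ / s) * (1 - s * (x - m)) = 2 * f₀ / s - 2 * f₀ * (x - m) := by
      field_simp
    have e4 : 0 ≤ (x - c) ^ 2 - lam / (α * K) + (2 * f₀ / s) * Real.exp (-(s * (x - m))) := by
      rw [← hfrac]
      have : (x - c) ^ 2 = f₀ ^ 2 + 2 * f₀ * (x - m) + (x - m) ^ 2 := by rw [hm_def]; ring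
      linarith [sq_nonneg (x - m)]
    have : 0 ≤ k1 x - k2 x := by rw [e]; positivity
    linarith
  let hr' : ℝ → ℝ := fun x => if x ≤ m then k1' x else k2' x
  have dhr : ∀ x, HasDerivAt (hr c) (hr' x) x := fun x =>
    glueDeriv hrk1 hrk2 x (fun _ => dk1 x) (fun _ => dk2 x) hkm'
  have chr' : Continuous hr' := by
    refine Continuous.if_le ?_ ?_ continuous_id continuous_const ?_
    · exact continuous_iff_continuousAt.mpr fun x => (dk1' x).continuousAt
    · exact continuous_iff_continuousAt.mpr fun x => (dk2' x).continuousAt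
    · intro x hx; have hx2 : x = m := hx; rw [hx2]; exact hkm'
  have chr : Continuous (hr c) := continuous_iff_continuousAt.mpr fun x => (dhr x).continuousAt
  let φl : ℝ → ℝ := fun x => Real.exp (-s * x) * (s * hl x + hl' x) / (2 * s)
  let φr : ℝ → ℝ := fun x => Real.exp (-s * x) * (s * hr c x + hr' x) / (2 * s)
  let φ1 : ℝ → ℝ := fun x => Real.exp (-s * x) * (s * k1 x + k1' x) / (2 * s)
  let φ2 : ℝ → ℝ := fun x => Real.exp (-s * x) * (s * k2 x + k2' x) / (2 * s)
  have dφl : ∀ x, HasDerivAt φl (Real.exp (-s * x) * (2 * (δ - K * x ^ 2)) / (2 * s)) x := fun x =>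
    (derivPhi (s := s) dhl dhl' x).congr_deriv (by
      have : hl'' x - s ^ 2 * hl x = 2 * (δ - K * x ^ 2) := by
        rw [hs2]; simp only [hl'', hl, hK]; field_simp; ring
      rw [this])
  have dφ1 : ∀ x, HasDerivAt φ1 (Real.exp (-s * x) * (2 * q x) / (2 * s)) x := fun x =>
    (derivPhi (s := s) dk1 dk1' x).congr_deriv (by
      have : k1'' x - s ^ 2 * k1 x = 2 * q x := by
        rw [hs2]; simp only [k1'', k1, q, hK]; field_simp; ring
      rw [this])
  have dφ2 : ∀ x, HasDerivAt φ2
      (Real.exp (-s * x) * (2 * c * (lam * (2 * x - c) - α)) / (2 * s)) x := fun x =>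
    (derivPhi (s := s) dk2 dk2' x).congr_deriv (by
      have : k2'' x - s ^ 2 * k2 x = 2 * c * (lam * (2 * x - c) - α) := by
        simp only [k2'', k2]
        have : s ^ 2 * B₀ * Real.exp (-(x - c) * s) - s ^ 2 * (lam / α * c * (c - 2 * x) + c +
          B₀ * Real.exp (-(x - c) * s)) = - s ^ 2 * (lam / α * c * (c - 2 * x) + c) := by ring
        rw [this, hs2]; field_simp; ring
      rw [this])
  have hφ1 : ∀ x, x ≤ m → φr x = φ1 x := fun x hx => by
    simp only [φr, φ1, hr', if_pos hx, hrk1 x hx]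
  have hφ2 : ∀ x, m ≤ x → φr x = φ2 x := fun x hx => by
    rcases hx.eq_or_lt with h | h
    · simp only [φr, φ2, hr', ← h, le_refl, if_true, hrk2 m le_rfl, hkm']
    · simp only [φr, φ2, hr', if_neg (not_le.mpr h), hrk2 x hx]
  have mφr : MonotoneOn φr (Set.Ici v) := by
    have a1 : MonotoneOn φr (Set.Icc v m) := by
      have : MonotoneOn φ1 (Set.Icc v m) :=
        monotoneOn_of_deriv_nonneg (convex_Icc v m)
          (fun x _ => (dφ1 x).continuousAt.continuousWithinAt)
          (fun x _ => (dφ1 x).differentiableAt.differentiableWithinAt)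
          (fun x hx => by
            rw [interior_Icc] at hx
            rw [(dφ1 x).deriv]
            have := hq1 x hx.1.le hx.2.le
            positivity)
      exact this.congr fun x hx => (hφ1 x hx.2).symm
    have a2 : MonotoneOn φr (Set.Ici m) := by
      have : MonotoneOn φ2 (Set.Ici m) :=
        monotoneOn_of_deriv_nonneg (convex_Ici m)
          (fun x _ => (dφ2 x).continuousAt.continuousWithinAt)
          (fun x _ => (dφ2 x).differentiableAt.differentiableWithinAt)
          (fun x hx => by
            rw [interior_Ici] at hx
            have hx' : f₀ + c < x := hx
            rw [(dφ2 x).deriv]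
            have : 0 ≤ lam * (2 * x - c) - α := by
              have h3 : lam * (f₀ + c) < lam * x := mul_lt_mul_of_pos_left hx' hlam
              have h4 : 0 < lam * c := mul_pos hlam hc
              linarith
            positivity)
      exact this.congr fun x hx => (hφ2 x hx).symm
    have := a1.union_right a2 (c := m) (isGreatest_Icc hv1.le) isLeast_Ici
    rwa [Set.Icc_union_Ici_eq_Ici hv1.le] at this
  have aφr : AntitoneOn φr (Set.Iic v) := by
    have : AntitoneOn φ1 (Set.Iic v) :=
      antitoneOn_of_deriv_nonpos (convex_Iic v)
        (fun x _ => (dφ1 x).continuousAt.continuousWithinAt)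
        (fun x _ => (dφ1 x).differentiableAt.differentiableWithinAt)
        (fun x hx => by
          rw [interior_Iic] at hx
          rw [(dφ1 x).deriv]
          have := hq2 x (le_of_lt hx)
          refine div_nonpos_of_nonpos_of_nonneg ?_ (by positivity)
          exact mul_nonpos_of_nonneg_of_nonpos (Real.exp_pos _).le (by linarith))
    exact this.congr fun x hx => (hφ1 x (le_trans hx hv1.le)).symm
  set xi := Real.sqrt (δ / K) with hxi
  have hxi0 : 0 ≤ xi := Real.sqrt_nonneg _
  have hxi2 : K * xi ^ 2 = δ := by
    rw [hxi, Real.sq_sqrt (by positivity)]; field_simp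
  have mφl : MonotoneOn φl (Set.Icc 0 xi) :=
    monotoneOn_of_deriv_nonneg (convex_Icc 0 xi)
      (fun x _ => (dφl x).continuousAt.continuousWithinAt)
      (fun x _ => (dφl x).differentiableAt.differentiableWithinAt)
      (fun x hx => by
        rw [interior_Icc] at hx
        rw [(dφl x).deriv]
        have h2 : x ^ 2 ≤ xi ^ 2 := pow_le_pow_left₀ hx.1.le hx.2.le 2
        have : 0 ≤ δ - K * x ^ 2 := by linarith [mul_le_mul_of_nonneg_left h2 hKpos.le]
        positivity)
  have aφl : StrictAntiOn φl (Set.Ici xi) :=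
    strictAntiOn_of_deriv_neg (convex_Ici xi)
      (fun x _ => (dφl x).continuousAt.continuousWithinAt)
      (fun x hx => by
        rw [interior_Ici] at hx
        rw [(dφl x).deriv]
        have h2 : xi ^ 2 < x ^ 2 := pow_lt_pow_left₀ hx hxi0 (by norm_num)
        have : δ - K * x ^ 2 < 0 := by linarith [mul_lt_mul_of_pos_left h2 hKpos]
        refine div_neg_of_neg_of_pos ?_ (by positivity)
        exact mul_neg_of_pos_of_neg (Real.exp_pos _) (by linarith))
  -- change of variables
  let ξ : ℝ → ℝ := fun y => Real.log y / (2 * s)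
  have ξmono : ∀ a b, 0 < a → a ≤ b → ξ a ≤ ξ b := fun a b h1 h2 =>
    div_le_div_of_nonneg_right (Real.log_le_log h1 h2) (by positivity)
  have ξstrict : ∀ a b, 0 < a → a < b → ξ a < ξ b := fun a b h1 h2 =>
    div_lt_div_of_pos_right (Real.log_lt_log h1 h2) (by positivity)
  have ξΨ : ∀ x, ξ (Ψ x) = x := fun x => by
    simp only [ξ]; rw [hΨ, Real.log_exp]; field_simp
  have ξ1 : ξ 1 = 0 := by simp [ξ]
  have Ψpos : ∀ x, 0 < Ψ x := fun x => by rw [hΨ]; exact Real.exp_pos _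
  have Ψle : ∀ x y, Ψ x ≤ y → x ≤ ξ y := fun x y h => by
    have := ξmono _ _ (Ψpos x) h
    rwa [ξΨ] at this
  have leΨ : ∀ x y, 0 < y → y ≤ Ψ x → ξ y ≤ x := fun x y h0 h => by
    have := ξmono _ _ h0 h
    rwa [ξΨ] at this
  have cξ : ContinuousOn ξ (Set.Ioi 0) := by
    refine ContinuousOn.div_const ?_ _
    exact Real.continuousOn_log.mono fun x hx => (ne_of_gt hx : x ≠ 0)
  have hHl' : ∀ y, 0 < y → Hl y = Real.sqrt y * hl (ξ y) := by
    intro y hy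
    rw [hHl y hy, hKα]
    simp only [hl, ξ]
    rw [div_pow, mul_pow, hs2]
    congr 1
    field_simp
    ring
  have hdl := fun y hy => derivTransform hs hHl' dhl y hy
  have hdr := fun y hy => derivTransform hs (hHr c) dhr y hy
  have k1l : ∀ x, k1 x - hl x = c * (1 + δ * c - 2 * δ * x) := fun x => by
    simp only [k1, hl]; ring
  have cφl : Continuous φl := continuous_iff_continuousAt.mpr fun x => (dφl x).continuousAt
  have cφr : Continuous φr := by
    simp only [φr]; fun_prop
  have hy₁0 : 0 < y₁ := by linarith
  have hyc2 : Ψ xc < y₂ := (le_max_left _ _).trans_lt hyv2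
  have hyvv2 : Ψ v < y₂ := (le_max_right _ _).trans_lt hyv2
  have hy₂0 : 0 < y₂ := (Ψpos _).trans hyc2
  obtain ⟨t1, t2⟩ := hsys
  refine abstractMain (Hl := Hl) (Hr := Hr c) (dl := fun y => φl (ξ y)) (dr := fun y => φr (ξ y))
    (yi := Ψ xi) (yc := Ψ xc) (yv := Ψ v) (ym := Ψ m) (y₁ := y₁) (y₂ := y₂)
    hdl hdr (cφl.comp_continuousOn cξ) (cφr.comp_continuousOn cξ) ?_ ?_ ?_ (Ψpos v) ?_ ?_ ?_ ?_ ?_ ?_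
    (hH c) hy₁1 hy₁c hyc2 hyvv2 ?_ ?_ ?_ ?_ hWl hWm hWr
  · rw [hΨ]; exact Real.one_le_exp (by positivity)
  · intro a ha b hb hab
    have ha0 : 0 < a := by linarith [ha.1]
    have hb0 : 0 < b := by linarith [hb.1]
    refine mφl ⟨?_, leΨ _ _ ha0 ha.2⟩ ⟨?_, leΨ _ _ hb0 hb.2⟩ (ξmono _ _ ha0 hab)
    · rw [← ξ1]; exact ξmono _ _ one_pos ha.1
    · rw [← ξ1]; exact ξmono _ _ one_pos hb.1
  · intro a ha b hb hab
    exact aφl (Ψle _ _ ha) (Ψle _ _ hb) (ξstrict _ _ (lt_of_lt_of_le (Ψpos _) ha) hab)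
  · intro a ha b hb hab
    exact mφr (Ψle _ _ ha) (Ψle _ _ hb) (ξmono _ _ (lt_of_lt_of_le (Ψpos _) ha) hab)
  · intro a ha b hb hab
    exact aφr (leΨ _ _ ha.1 ha.2) (leΨ _ _ hb.1 hb.2) (ξmono _ _ ha.1 hab)
  · intro y hy hyc
    have hx := leΨ _ _ hy hyc
    rw [hHl' y hy, hHr c y hy]
    refine mul_le_mul_of_nonneg_left ?_ (Real.sqrt_nonneg _)
    change hl (ξ y) ≤ hr c (ξ y)
    rw [hrk1 _ (hx.trans hm)]
    have := k1l (ξ y)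
    have : 0 ≤ c * (1 + δ * c - 2 * δ * ξ y) := mul_nonneg hc.le (by linarith [mul_le_mul_of_nonneg_left hx hδ.le])
    linarith
  · intro y hyc
    have hy : 0 < y := lt_of_lt_of_le (Ψpos _) hyc
    have hx := Ψle _ _ hyc
    rw [hHl' y hy, hHr c y hy]
    refine mul_le_mul_of_nonneg_left ?_ (Real.sqrt_nonneg _)
    change hr c (ξ y) ≤ hl (ξ y)
    have e1 := k1l (ξ y)
    have e2 : 0 ≤ c * (2 * δ * ξ y - (1 + δ * c)) := mul_nonneg hc.le (by linarith [mul_le_mul_of_nonneg_left hx hδ.le])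
    have e3 : k1 (ξ y) ≤ hl (ξ y) := by linarith
    rcases le_total (ξ y) m with h | h
    · rw [hrk1 _ h]; exact e3
    · rw [hrk2 _ h]; exact (hk21 _ h).trans e3
  · rw [hHl 1 one_pos]
    simp only [Real.sqrt_one, Real.log_one]
    have : 0 ≤ lam / α ^ 2 := by positivity
    linarith
  · intro y hym
    have hy : 0 < y := lt_of_lt_of_le (Ψpos _) hym
    have hx := Ψle _ _ hym
    rw [hHr c y hy]
    refine mul_nonpos_of_nonneg_of_nonpos (Real.sqrt_nonneg _) ?_
    change hr c (ξ y) ≤ 0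
    rw [hrk2 _ hx]
    simp only [k2]
    rw [hB0u]
    have e1 : 0 ≤ 2 * f₀ / (α * s) * K * Real.exp (-(s * (ξ y - m))) := by positivity
    have e2 : lam / α * c * (c - 2 * ξ y) + c = (c / α) * (lam * (c - 2 * ξ y) + α) := by
      field_simp
    have e3 : lam * (c - 2 * ξ y) + α ≤ 0 := by
      rw [hm_def] at hx
      have h3 : lam * (f₀ + c) ≤ lam * ξ y := mul_le_mul_of_nonneg_left hx hlam.le
      have h4 : 0 < lam * c := mul_pos hlam hc
      linarith
    have e4 : (c / α) * (lam * (c - 2 * ξ y) + α) ≤ 0 :=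
      mul_nonpos_of_nonneg_of_nonpos (by positivity) e3
    linarith
  · rw [hA]; exact (hdl y₁ hy₁0).deriv
  · rw [hA, t1]; exact (hdr y₂ hy₂0).deriv
  · rw [hB, hA]
  · rw [hB, t2, hA, t1]
end

section
/- For every ε>0 there exists c̄>0 such that for all c ∈ (0,c̄), every pair (y₁,y₂) with 1 < y₁ < y_c ≤ y_v(c) < y₂ solving the tangency system satisfies |y₁ − Ψ(1/(2δ))| < ε and |y₂ − Ψ(1/(2δ))| < ε; that is, both components of the tangency pair converge to Ψ(1/(2δ)) as c → 0. -/
lemma aux_deriv (s : ℝ) (hs : 0 < s) (h : ℝ → ℝ) (h' y : ℝ) (hy : 0 < y)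
    (hh : HasDerivAt h h' (Real.log y / (2 * s))) :
    HasDerivAt (fun y => Real.sqrt y * h (Real.log y / (2 * s)))
      ((Real.sqrt y)⁻¹ * (s * h (Real.log y / (2 * s)) + h') / (2 * s)) y := by
  have h1 := Real.hasDerivAt_sqrt hy.ne'
  have h2 : HasDerivAt (fun y => Real.log y / (2 * s)) (y⁻¹ / (2 * s)) y :=
    (Real.hasDerivAt_log hy.ne').div_const _
  have h3 := h1.mul (HasDerivAt.comp y hh h2)
  refine h3.congr_deriv ?_
  have hq : 0 < Real.sqrt y := Real.sqrt_pos.2 hy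
  have hyy : y = Real.sqrt y ^ 2 := (Real.sq_sqrt hy.le).symm
  simp only [Function.comp]
  generalize h (Real.log y / (2 * s)) = A
  have : y⁻¹ = (Real.sqrt y)⁻¹ ^ 2 := by rw [inv_pow, ← hyy]
  rw [this]
  field_simp

lemma aux_sqrt (s y : ℝ) (hs : 0 < s) (hy : 0 < y) :
    (Real.sqrt y)⁻¹ = Real.exp (-(s * (Real.log y / (2 * s)))) := by
  rw [Real.exp_neg]
  congr 1
  rw [Real.sqrt_eq_iff_mul_self_eq hy.le (Real.exp_pos _).le, ← Real.exp_add]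
  have : s * (Real.log y / (2 * s)) + s * (Real.log y / (2 * s)) = Real.log y := by
    field_simp; ring
  rw [this, Real.exp_log hy]

/-- A junction lemma: one-sided agreement determines the derivative unless it is junk. -/
lemma aux_left (f g : ℝ → ℝ) (D y : ℝ) (hy : 0 < y) (hg : HasDerivAt g D y)
    (hfg : ∀ z, 0 < z → z ≤ y → f z = g z) : deriv f y = 0 ∨ deriv f y = D := by
  by_cases hd : DifferentiableAt ℝ f y
  · right
    have h1 : HasDerivWithinAt f (deriv f y) (Set.Iic y) y := hd.hasDerivAt.hasDerivWithinAt
    have h2 : HasDerivWithinAt f D (Set.Iic y) y := by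
      refine hg.hasDerivWithinAt.congr_of_eventuallyEq ?_ (hfg y hy le_rfl)
      filter_upwards [self_mem_nhdsWithin, mem_nhdsWithin_of_mem_nhds (lt_mem_nhds hy)] with z h1 h2
      exact hfg z h2 h1
    exact (uniqueDiffWithinAt_Iic y).eq_deriv _ h1 h2
  · left; exact deriv_zero_of_not_differentiableAt hd

lemma aux_mono (α k lam δ s b : ℝ) (hα : 0 < α) (hk : 0 < k) (hs : 0 < s) (hs2 : s ^ 2 = 2 * α)
    (hkd : k = δ - lam / α) (hb : α ^ 2 * k * b ^ 2 = lam) (x z : ℝ) (hx : 0 ≤ x)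
    (hxz : x ≤ z) (hz : z ≤ b) :
    (2 * k * Real.exp (-(s * b))) * (z - x) ≤
      Real.exp (-(s * z)) * (s * (-(lam / α ^ 2) + k * z ^ 2) + 2 * k * z) -
      Real.exp (-(s * x)) * (s * (-(lam / α ^ 2) + k * x ^ 2) + 2 * k * x) := by
  have hd : ∀ x : ℝ, HasDerivAt (fun x : ℝ =>
      Real.exp (-(s * x)) * (s * (-(lam / α ^ 2) + k * x ^ 2) + 2 * k * x))
      (Real.exp (-(s * x)) * (2 * (δ - α * k * x ^ 2))) x := by
    intro x
    have e1 : HasDerivAt (fun x : ℝ => Real.exp (-(s * x))) (Real.exp (-(s * x)) * (-(s * 1))) x :=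
      (((hasDerivAt_id x).const_mul s).neg).exp
    have e2 : HasDerivAt (fun x : ℝ => s * (-(lam / α ^ 2) + k * x ^ 2) + 2 * k * x)
        (s * (k * (2 * x)) + 2 * k * 1) x := by
      have := ((((hasDerivAt_pow 2 x).const_mul k).const_add (-(lam / α ^ 2))).const_mul s).add
        ((hasDerivAt_id x).const_mul (2 * k))
      refine this.congr_deriv ?_
      norm_num
    refine (e1.mul e2).congr_deriv ?_
    have hl : s ^ 2 * (lam / α ^ 2) = 2 * (lam / α) := by rw [hs2]; field_simp
    have hk2 : s ^ 2 * (k * x ^ 2) = 2 * α * (k * x ^ 2) := by rw [hs2]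
    have hδ : δ = k + lam / α := by rw [hkd]; ring
    rw [hδ]
    linear_combination Real.exp (-(s * x)) * (hl - hk2)
  have key := (convex_Icc (0 : ℝ) b).mul_sub_le_image_sub_of_le_deriv
    (f := fun x : ℝ => Real.exp (-(s * x)) * (s * (-(lam / α ^ 2) + k * x ^ 2) + 2 * k * x))
    (fun x _ => (hd x).continuousAt.continuousWithinAt)
    (fun x _ => (hd x).differentiableAt.differentiableWithinAt)
    (C := 2 * k * Real.exp (-(s * b))) ?_ x ⟨hx, hxz.trans hz⟩ z ⟨hx.trans hxz, hz⟩ hxz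
  · exact key
  · intro u hu
    rw [interior_Icc] at hu
    rw [(hd u).deriv]
    have h1 : Real.exp (-(s * b)) ≤ Real.exp (-(s * u)) := by
      apply Real.exp_le_exp.2
      nlinarith [hu.2]
    have h2 : α * k * u ^ 2 ≤ lam / α := by
      rw [le_div_iff₀ hα, ← hb]
      have : u ^ 2 ≤ b ^ 2 := by nlinarith [hu.1, hu.2]
      have : α ^ 2 * k * u ^ 2 ≤ α ^ 2 * k * b ^ 2 := by gcongr
      linarith
    calc 2 * k * Real.exp (-(s * b)) = Real.exp (-(s * b)) * (2 * k) := by ring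
      _ ≤ Real.exp (-(s * u)) * (2 * (δ - α * k * u ^ 2)) := by
        apply mul_le_mul h1 _ (by positivity) (Real.exp_pos _).le
        linarith

/-- both components of the tangency pair converge to Ψ(1/(2δ)) as c → 0. -/
theorem stmt_11 (α δ lam : ℝ) (hα : 0 < α) (hδ : 0 < δ) (hlam : 0 < lam)
    (hltd : lam < α * δ)
    (f₀ : ℝ)
    (hf₀ : f₀ = (1 / Real.sqrt (2 * α)) * (Real.sqrt ((α * δ + lam) / (α * δ - lam)) - 1))
    (hf₀big : α / (2 * lam) < f₀)
    (Ψ : ℝ → ℝ) (hΨ : ∀ x, Ψ x = Real.exp (2 * Real.sqrt (2 * α) * x))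
    (Hl : ℝ → ℝ)
    (hHl : ∀ y, 0 < y → Hl y = Real.sqrt y *
      (-(lam / α ^ 2) + ((δ - lam / α) / (8 * α)) * (Real.log y) ^ 2))
    (B₀ : ℝ)
    (hB₀ : B₀ = -(2 * f₀ / (α * Real.sqrt (2 * α))) * (α * δ - lam) *
      Real.exp (f₀ * Real.sqrt (2 * α)))
    (hr1 hr2 hr Hr : ℝ → ℝ → ℝ)
    (hhr1 : ∀ c x, hr1 c x = δ * c * (c - 2 * x) + (δ - lam / α) * x ^ 2 + c - lam / α ^ 2)
    (hhr2 : ∀ c x, hr2 c x = (lam / α) * c * (c - 2 * x) + c +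
      B₀ * Real.exp (-(x - c) * Real.sqrt (2 * α)))
    (hhra : ∀ c x, x ≤ f₀ + c → hr c x = hr1 c x)
    (hhrb : ∀ c x, f₀ + c ≤ x → hr c x = hr2 c x)
    (hHr : ∀ c y, 0 < y → Hr c y = Real.sqrt y * hr c (Real.log y / (2 * Real.sqrt (2 * α))))
    (xv : ℝ → ℝ)
    (hxv : ∀ c, 0 < c →
      (xv c < f₀ + c ∧
        δ - (α * δ - lam) * (xv c) ^ 2 + c * α * (δ * (2 * xv c - c) - 1) = 0 ∧
        ∀ x, x < f₀ + c →
          δ - (α * δ - lam) * x ^ 2 + c * α * (δ * (2 * x - c) - 1) = 0 → x = xv c)) :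
    ∀ ε > (0 : ℝ), ∃ cbar > (0 : ℝ), ∀ c, 0 < c → c < cbar → ∀ y₁ y₂ : ℝ,
      1 < y₁ → y₁ < Ψ (1 / (2 * δ) + c / 2) →
      Ψ (1 / (2 * δ) + c / 2) ≤ max (Ψ (1 / (2 * δ) + c / 2)) (Ψ (xv c)) →
      max (Ψ (1 / (2 * δ) + c / 2)) (Ψ (xv c)) < y₂ →
      TangencySystem Hl (Hr c) y₁ y₂ →
      |y₁ - Ψ (1 / (2 * δ))| < ε ∧ |y₂ - Ψ (1 / (2 * δ))| < ε := by
  intro ε hε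
  obtain ⟨s, hsdef⟩ : ∃ s, s = Real.sqrt (2 * α) := ⟨_, rfl⟩
  obtain ⟨k, hkdef⟩ : ∃ k, k = δ - lam / α := ⟨_, rfl⟩
  simp only [← hsdef] at hf₀ hΨ hB₀ hhr2 hHr
  simp only [← hkdef] at hHl hhr1
  have hs : 0 < s := by rw [hsdef]; positivity
  have hs2 : s ^ 2 = 2 * α := by rw [hsdef]; exact Real.sq_sqrt (by positivity)
  have hk : 0 < k := by
    rw [hkdef, sub_pos, div_lt_iff₀ hα]; linarith
  have hak : α * δ - lam = α * k := by rw [hkdef]; field_simp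
  have hf0pos : 0 < f₀ := lt_trans (by positivity) hf₀big
  have hx0 : 1 / (2 * δ) < f₀ := by
    refine lt_trans ?_ hf₀big
    rw [div_lt_div_iff₀ (by positivity) (by positivity)]; linarith
  have hx0pos : 0 < 1 / (2 * δ) := by positivity
  -- identity for f₀
  have hid : s * (-(lam / α ^ 2) + k * f₀ ^ 2) + 2 * k * f₀ = 0 := by
    have h1 : s * f₀ + 1 = Real.sqrt ((α * δ + lam) / (α * δ - lam)) := by
      rw [hf₀]; field_simp; ring
    have h2 : (s * f₀ + 1) ^ 2 = (α * δ + lam) / (α * δ - lam) := by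
      rw [h1]; apply Real.sq_sqrt
      apply div_nonneg <;> nlinarith
    rw [hak, eq_div_iff (by positivity)] at h2
    have h3 : α * δ + lam = α * k + 2 * lam := by linarith
    rw [h3] at h2
    have h4 : s ^ 2 * (lam / α ^ 2) * α = 2 * lam := by rw [hs2]; field_simp
    have h5 : (s * α) * (s * (-(lam / α ^ 2) + k * f₀ ^ 2) + 2 * k * f₀) = 0 := by
      linear_combination h2 - h4
    rcases mul_eq_zero.1 h5 with h | h
    · exact absurd h (by positivity)
    · exact h
  -- the upper end of the monotonicity interval
  obtain ⟨b, hbpos, hb⟩ : ∃ b : ℝ, 0 < b ∧ α ^ 2 * k * b ^ 2 = lam := by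
    refine ⟨Real.sqrt (lam / (α ^ 2 * k)), by positivity, ?_⟩
    rw [Real.sq_sqrt (by positivity)]; field_simp
  have hfb : f₀ < b := by
    have h1 : k * f₀ ^ 2 < lam / α ^ 2 := by
      by_contra hcon
      push Not at hcon
      have : 0 ≤ s * (-(lam / α ^ 2) + k * f₀ ^ 2) := mul_nonneg hs.le (by linarith)
      have : 0 < 2 * k * f₀ := by positivity
      linarith
    rw [lt_div_iff₀ (by positivity), ← hb] at h1
    have h2 : (α ^ 2 * k) * f₀ ^ 2 < (α ^ 2 * k) * b ^ 2 := by linarith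
    have h3 := lt_of_mul_lt_mul_left h2 (by positivity)
    exact lt_of_pow_lt_pow_left₀ 2 hbpos.le h3
  obtain ⟨F, hF⟩ : ∃ F : ℝ → ℝ, ∀ x, F x =
    Real.exp (-(s * x)) * (s * (-(lam / α ^ 2) + k * x ^ 2) + 2 * k * x) := ⟨_, fun _ => rfl⟩
  obtain ⟨m, hm⟩ : ∃ m, m = 2 * k * Real.exp (-(s * b)) := ⟨_, rfl⟩
  have hmpos : 0 < m := by rw [hm]; positivity
  have hmono : ∀ x z, 0 ≤ x → x ≤ z → z ≤ b → m * (z - x) ≤ F z - F x := by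
    intro x z h1 h2 h3
    rw [hF, hF, hm]
    exact aux_mono α k lam δ s b hα hk hs hs2 hkdef hb x z h1 h2 h3
  obtain ⟨xm, hxm⟩ : ∃ xm, xm = (1 / (2 * δ) + f₀) / 2 := ⟨_, rfl⟩
  have hκ : F xm < 0 := by
    have h0 : F f₀ = 0 := by rw [hF, hid, mul_zero]
    have h1 := hmono xm f₀ (by linarith) (by linarith) hfb.le
    have h2 : 0 < m * (f₀ - xm) := mul_pos hmpos (by linarith)
    linarith
  have hcont : Continuous Ψ := by
    have : Ψ = fun x => Real.exp (2 * s * x) := funext hΨ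
    rw [this]; fun_prop
  obtain ⟨η, hη, hηε⟩ := Metric.continuous_iff.1 hcont (1 / (2 * δ)) ε hε
  obtain ⟨K, hK⟩ : ∃ K, K = 2 * δ * s * b + 2 * δ := ⟨_, rfl⟩
  have hKpos : 0 < K := by rw [hK]; positivity
  refine ⟨min (min (b - f₀) (xm - 1 / (2 * δ))) (min (-F xm / (4 * lam / α)) (η / (K / m + 1))),
    ?_, ?_⟩
  · refine lt_min (lt_min ?_ ?_) (lt_min ?_ ?_)
    · linarith
    · linarith
    · apply div_pos <;> [linarith; positivity]
    · positivity
  intro c hc hcb y₁ y₂ hy1 hy1c _ hy2c hT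
  have hc1 : c < b - f₀ := hcb.trans_le ((min_le_left _ _).trans (min_le_left _ _))
  have hc2 : c < xm - 1 / (2 * δ) := hcb.trans_le ((min_le_left _ _).trans (min_le_right _ _))
  have hc3 : c * (4 * lam / α) < -F xm := by
    rw [← lt_div_iff₀ (by positivity)]
    exact hcb.trans_le ((min_le_right _ _).trans (min_le_left _ _))
  have hc4 : c * (K / m + 1) < η := by
    rw [← lt_div_iff₀ (by positivity)]
    exact hcb.trans_le ((min_le_right _ _).trans (min_le_right _ _))
  have hy2c' := (le_max_left _ _).trans_lt hy2c
  have hy1pos : 0 < y₁ := by linarith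
  have hy2pos : 0 < y₂ := by linarith
  obtain ⟨x1, hx1⟩ : ∃ x, x = Real.log y₁ / (2 * s) := ⟨_, rfl⟩
  obtain ⟨x2, hx2⟩ : ∃ x, x = Real.log y₂ / (2 * s) := ⟨_, rfl⟩
  have hΨ1 : Ψ x1 = y₁ := by
    rw [hΨ, hx1, mul_div_cancel₀ _ (by positivity), Real.exp_log hy1pos]
  have hΨ2 : Ψ x2 = y₂ := by
    rw [hΨ, hx2, mul_div_cancel₀ _ (by positivity), Real.exp_log hy2pos]
  have hlt : ∀ x z, Ψ x < Ψ z → x < z := by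
    intro x z h
    rw [hΨ, hΨ, Real.exp_lt_exp] at h
    exact lt_of_mul_lt_mul_left h (by positivity)
  have hx1pos : 0 < x1 := by
    rw [hx1]; exact div_pos (Real.log_pos hy1) (by positivity)
  have hx1c : x1 < 1 / (2 * δ) + c / 2 := hlt _ _ (by rw [hΨ1]; exact hy1c)
  have hx2c : 1 / (2 * δ) + c / 2 < x2 := hlt _ _ (by rw [hΨ2]; exact hy2c')
  have hDl : deriv Hl y₁ = F x1 / (2 * s) := by
    have h1 : HasDerivAt (fun x : ℝ => -(lam / α ^ 2) + k * x ^ 2) (2 * k * x1)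
        (Real.log y₁ / (2 * s)) := by
      rw [← hx1]
      refine (((hasDerivAt_pow 2 x1).const_mul k).const_add (-(lam / α ^ 2))).congr_deriv ?_
      norm_num; ring
    have h2 := aux_deriv s hs _ _ y₁ hy1pos h1
    have h3 : Hl =ᶠ[nhds y₁]
        (fun y => Real.sqrt y * (-(lam / α ^ 2) + k * (Real.log y / (2 * s)) ^ 2)) := by
      filter_upwards [lt_mem_nhds hy1pos] with y hy
      rw [hHl y hy, div_pow, mul_pow, hs2]
      field_simp
      ring
    rw [h3.deriv_eq, h2.deriv, aux_sqrt s y₁ hs hy1pos, ← hx1, hF]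
  have hFx1 : F x1 ≤ F xm := by
    have h1 := hmono x1 xm hx1pos.le (by linarith) (by linarith)
    have : 0 ≤ m * (xm - x1) := mul_nonneg hmpos.le (by linarith)
    linarith
  have hE := hT.1
  rw [hDl] at hE
  have hepos := Real.exp_pos (-(s * x2))
  have hmain : m * (x2 - x1) ≤ c * K := by
    rcases le_or_gt x2 (f₀ + c) with hle | hgt
    · have h1 : HasDerivAt (hr1 c) (2 * k * x2 - 2 * δ * c) (Real.log y₂ / (2 * s)) := by
        rw [← hx2, show hr1 c = fun x => δ * c * (c - 2 * x) + k * x ^ 2 + c - lam / α ^ 2 from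
          funext (hhr1 c)]
        have e1 := ((((hasDerivAt_id x2).const_mul 2).const_sub c).const_mul (δ * c))
        refine (((e1.add ((hasDerivAt_pow 2 x2).const_mul k)).add_const c).sub_const
          (lam / α ^ 2)).congr_deriv ?_
        norm_num; ring
      have h2 := aux_deriv s hs _ _ y₂ hy2pos h1
      have h3 := aux_left (Hr c) _ _ y₂ hy2pos h2 (by
        intro z hz hzy
        rw [hHr c z hz, hhra]
        refine le_trans ?_ hle
        rw [hx2]
        have := Real.log_le_log hz hzy
        gcongr)
      rcases h3 with h3 | h3
      · rw [h3, div_eq_zero_iff] at hE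
        rcases hE with h | h
        · linarith
        · linarith
      · rw [h3, aux_sqrt s y₂ hs hy2pos, ← hx2, hhr1, div_left_inj' (by positivity)] at hE
        have h4 : F x1 = F x2 + Real.exp (-(s * x2)) *
            (c * (s * (1 + δ * c - 2 * δ * x2) - 2 * δ)) := by
          rw [hE, hF]; ring
        have h5 := hmono x1 x2 hx1pos.le (by linarith) (by linarith)
        have h6 : -(c * K) ≤ c * (s * (1 + δ * c - 2 * δ * x2) - 2 * δ) := by
          rw [hK, ← mul_neg]
          apply mul_le_mul_of_nonneg_left _ hc.le
          have e1 : δ * s * x2 ≤ δ * s * b := by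
            apply mul_le_mul_of_nonneg_left _ (by positivity); linarith
          have e2 : 0 < s * (1 + δ * c) := by positivity
          linarith
        have h7 : Real.exp (-(s * x2)) ≤ 1 := by
          apply Real.exp_le_one_iff.2
          have : 0 < s * x2 := mul_pos hs (by linarith)
          linarith
        have h8 := mul_le_mul_of_nonneg_left h6 hepos.le
        have h9 : Real.exp (-(s * x2)) * (c * K) ≤ 1 * (c * K) :=
          mul_le_mul_of_nonneg_right h7 (by positivity)
        linarith
    · exfalso
      have h1 : HasDerivAt (hr2 c) ((lam / α) * c * (-2) +
          B₀ * (Real.exp (-(x2 - c) * s) * (-s))) (Real.log y₂ / (2 * s)) := by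
        rw [← hx2, show hr2 c = fun x => (lam / α) * c * (c - 2 * x) + c +
          B₀ * Real.exp (-(x - c) * s) from funext (hhr2 c)]
        have e1 := ((((hasDerivAt_id x2).const_mul 2).const_sub c).const_mul (lam / α * c))
        have e2 := (((((hasDerivAt_id x2).sub_const c).neg).mul_const s).exp).const_mul B₀
        refine ((e1.add_const c).add e2).congr_deriv ?_
        norm_num
      have h2 := aux_deriv s hs _ _ y₂ hy2pos h1
      have h3 : Hr c =ᶠ[nhds y₂] (fun y => Real.sqrt y * hr2 c (Real.log y / (2 * s))) := by
        have hc0 : ContinuousAt (fun y => Real.log y / (2 * s)) y₂ :=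
          (Real.continuousAt_log hy2pos.ne').div_const _
        have hev := hc0.eventually (lt_mem_nhds (a := f₀ + c) (by simpa only [← hx2] using hgt))
        filter_upwards [lt_mem_nhds hy2pos, hev] with y hy hy'
        rw [hHr c y hy, hhrb c _ hy'.le]
      rw [h3.deriv_eq, h2.deriv, aux_sqrt s y₂ hs hy2pos, ← hx2, hhr2,
        div_left_inj' (by positivity)] at hE
      have h4 : F x1 = Real.exp (-(s * x2)) *
          (c * (s * (lam / α * (c - 2 * x2) + 1) - 2 * (lam / α))) := by
        rw [hE]; ring
      have h5 : Real.exp (-(s * x2)) * (s * x2) ≤ 1 := by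
        rw [Real.exp_neg, inv_mul_le_iff₀ (Real.exp_pos _)]
        have := Real.add_one_le_exp (s * x2)
        linarith
      have h7 : Real.exp (-(s * x2)) ≤ 1 := by
        apply Real.exp_le_one_iff.2
        have : 0 < s * x2 := mul_pos hs (by linarith)
        linarith
      have hq : 0 < lam / α := by positivity
      have h8 : F x1 = c * (Real.exp (-(s * x2)) * (s * (lam / α * c + 1))
          - 2 * (lam / α) * (Real.exp (-(s * x2)) * (s * x2))
          - 2 * (lam / α) * Real.exp (-(s * x2))) := by rw [h4]; ring
      have h9 : c * (-(4 * lam / α)) ≤ F x1 := by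
        rw [h8]
        apply mul_le_mul_of_nonneg_left _ hc.le
        have e0 : 0 < Real.exp (-(s * x2)) * (s * (lam / α * c + 1)) := by positivity
        have e1 := mul_le_mul_of_nonneg_left h5 (by positivity : 0 ≤ 2 * (lam / α))
        have e2 := mul_le_mul_of_nonneg_left h7 (by positivity : 0 ≤ 2 * (lam / α))
        have e3 : 4 * lam / α = 4 * (lam / α) := by ring
        linarith
      linarith
  have hdist : x2 - x1 ≤ c * (K / m) := by
    rw [← mul_div_assoc, le_div_iff₀ hmpos]; linarith
  have hc5 : c * (K / m) + c < η := by linarith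
  have hd1 : |x1 - 1 / (2 * δ)| < η := by
    rw [abs_lt]; constructor <;> linarith
  have hd2 : |x2 - 1 / (2 * δ)| < η := by
    rw [abs_lt]; constructor <;> linarith
  have r1 := hηε x1 hd1
  have r2 := hηε x2 hd2
  rw [hΨ1] at r1
  rw [hΨ2] at r2
  exact ⟨r1, r2⟩
end

section
/- The function h₁ is strictly increasing on [0,f₀] with h₁(0)=−λ/(2α²) and h₁(f₀)=0. Moreover, fix c>0 and suppose Ĥ₃(f₀+c,c) ∈ (−λ/(2α²),0), and let z ∈ (0,f₀) be the unique point with h₁(z)=Ĥ₃(f₀+c,c). Then Ĥ₄(f₀+c,c) < h₂(z) if and only if the tangent line to H_r(·;c) at ŷ₃(c)=Ψ(f₀+c), namely y ↦ H_r(ŷ₃(c);c) + ∂H_r/∂y(ŷ₃(c);c)·(y − ŷ₃(c)), lies strictly below H_l(y) for every y ≥ 1. -/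
/-- h₁ is strictly increasing on [0,f₀] with h₁(0)=−λ/(2α²), h₁(f₀)=0, and
the interpretation of the sign of L via the tangent at ŷ₃(c). -/
theorem stmt_12 (α δ lam : ℝ) (hα : 0 < α) (hδ : 0 < δ) (hlam : 0 < lam)
    (hltd : lam < α * δ)
    (ρ : ℝ → ℝ)
    (hρ : ∀ x, ρ x = x ^ 2 + 2 * x / Real.sqrt (2 * α) - (lam / α) / (α * δ - lam))
    (f₀ : ℝ)
    (hf₀ : f₀ = (1 / Real.sqrt (2 * α)) * (Real.sqrt ((α * δ + lam) / (α * δ - lam)) - 1))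
    (hf₀big : α / (2 * lam) < f₀)
    (Ψ : ℝ → ℝ) (hΨ : ∀ x, Ψ x = Real.exp (2 * Real.sqrt (2 * α) * x))
    (Hl : ℝ → ℝ)
    (hHl : ∀ y, 0 < y → Hl y = Real.sqrt y *
      (-(lam / α ^ 2) + ((δ - lam / α) / (8 * α)) * (Real.log y) ^ 2))
    (B₀ : ℝ)
    (hB₀ : B₀ = -(2 * f₀ / (α * Real.sqrt (2 * α))) * (α * δ - lam) *
      Real.exp (f₀ * Real.sqrt (2 * α)))
    (hr1 hr2 hr Hr : ℝ → ℝ → ℝ)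
    (hhr1 : ∀ c x, hr1 c x = δ * c * (c - 2 * x) + (δ - lam / α) * x ^ 2 + c - lam / α ^ 2)
    (hhr2 : ∀ c x, hr2 c x = (lam / α) * c * (c - 2 * x) + c +
      B₀ * Real.exp (-(x - c) * Real.sqrt (2 * α)))
    (hhra : ∀ c x, x ≤ f₀ + c → hr c x = hr1 c x)
    (hhrb : ∀ c x, f₀ + c ≤ x → hr c x = hr2 c x)
    (hHr : ∀ c y, 0 < y → Hr c y = Real.sqrt y * hr c (Real.log y / (2 * Real.sqrt (2 * α))))
    (H₃ H₄ : ℝ → ℝ → ℝ)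
    (hH₃ : ∀ x c, H₃ x c = (Real.exp (-x * Real.sqrt (2 * α)) / (2 * Real.sqrt (2 * α))) *
      (deriv (hr1 c) x + Real.sqrt (2 * α) * hr1 c x))
    (hH₄ : ∀ x c, H₄ x c = (Real.exp (x * Real.sqrt (2 * α)) / (2 * Real.sqrt (2 * α))) *
      (-deriv (hr1 c) x + Real.sqrt (2 * α) * hr1 c x))
    (h₁ h₂ : ℝ → ℝ)
    (hh₁ : ∀ x, h₁ x = ((α * δ - lam) / (2 * α)) * Real.exp (-x * Real.sqrt (2 * α)) * ρ x)
    (hh₂ : ∀ x, h₂ x = ((α * δ - lam) / (2 * α)) * Real.exp (x * Real.sqrt (2 * α)) *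
      (ρ x - 4 * x / Real.sqrt (2 * α)))
    -- fix c > 0 with Ĥ₃(f₀+c,c) ∈ (−λ/(2α²),0), and z the point where h₁(z)=Ĥ₃(f₀+c,c):
    (c : ℝ) (hc : 0 < c)
    (hH₃mem : H₃ (f₀ + c) c ∈ Set.Ioo (-(lam / (2 * α ^ 2))) 0)
    (z : ℝ) (hz : z ∈ Set.Ioo 0 f₀) (hzeq : h₁ z = H₃ (f₀ + c) c) :
    StrictMonoOn h₁ (Set.Icc 0 f₀) ∧
    h₁ 0 = -(lam / (2 * α ^ 2)) ∧ h₁ f₀ = 0 ∧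
    (H₄ (f₀ + c) c < h₂ z ↔
      ∀ y, 1 ≤ y →
        Hr c (Ψ (f₀ + c)) + deriv (Hr c) (Ψ (f₀ + c)) * (y - Ψ (f₀ + c)) < Hl y) := by
  obtain ⟨s, hs⟩ : ∃ s, s = Real.sqrt (2 * α) := ⟨_, rfl⟩
  have hs0 : 0 < s := by rw [hs]; positivity
  have hs2 : s ^ 2 = 2 * α := by rw [hs]; exact Real.sq_sqrt (by positivity)
  simp only [← hs] at *
  have hαs : α = s ^ 2 / 2 := by linarith
  have hD : 0 < α * δ - lam := by linarith
  -- f₀ is a root of ρ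
  have hf0pos : 0 < f₀ := lt_trans (by positivity) hf₀big
  have hroot : f₀ ^ 2 + 2 * f₀ / s - (lam / α) / (α * δ - lam) = 0 := by
    have h1 : (s * f₀ + 1) ^ 2 = (α * δ + lam) / (α * δ - lam) := by
      have : s * f₀ + 1 = Real.sqrt ((α * δ + lam) / (α * δ - lam)) := by
        rw [hf₀]; field_simp; ring
      rw [this]
      exact Real.sq_sqrt (by positivity)
    have h2 : f₀ ^ 2 + 2 * f₀ / s = ((s * f₀ + 1) ^ 2 - 1) / s ^ 2 := by
      field_simp; ring
    rw [h2, h1, hs2]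
    field_simp
    ring
  have hroot' : (α * δ - lam) * (f₀ ^ 2 + 2 * f₀ / s) = lam / α := by
    have : f₀ ^ 2 + 2 * f₀ / s = (lam / α) / (α * δ - lam) := by linarith
    rw [this]; field_simp
  have hd1 : ∀ x, HasDerivAt h₁ ((α * δ - lam) / (2 * α) * Real.exp (-x * s) *
      (2 / s + s * ((lam / α) / (α * δ - lam)) - s * x ^ 2)) x := by
    intro x
    have e : h₁ = fun x => ((α * δ - lam) / (2 * α)) * Real.exp (-x * s) *
        (x ^ 2 + 2 * x / s - (lam / α) / (α * δ - lam)) := by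
      funext x; rw [hh₁, hρ]
    rw [e]
    have hE : HasDerivAt (fun x : ℝ => Real.exp (-x * s)) (Real.exp (-x * s) * (-1 * s)) x :=
      (((hasDerivAt_id x).neg).mul_const s).exp
    have hP : HasDerivAt (fun x : ℝ => x ^ 2 + 2 * x / s - (lam / α) / (α * δ - lam))
        (2 * x + 2 / s) x := by
      have := (((hasDerivAt_pow 2 x).add (((hasDerivAt_id x).const_mul 2).div_const s)).sub_const
        ((lam / α) / (α * δ - lam)))
      refine HasDerivAt.congr_deriv (this) ?_
      simp
    refine HasDerivAt.congr_deriv ((hE.const_mul ((α * δ - lam) / (2 * α))).mul hP) ?_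
    have : s * (2 * x / s) = 2 * x := by field_simp
    linear_combination (-(α * δ - lam) / (2 * α) * Real.exp (-x * s)) * this
  have hcont : Continuous h₁ := continuous_iff_continuousAt.2 fun x => (hd1 x).continuousAt
  have hmono : StrictMonoOn h₁ (Set.Icc 0 f₀) := by
    apply strictMonoOn_of_deriv_pos (convex_Icc _ _) hcont.continuousOn
    intro x hx
    rw [interior_Icc] at hx
    rw [(hd1 x).deriv]
    have hx2 : x ^ 2 < f₀ ^ 2 := by nlinarith [hx.1, hx.2]
    have h3 : 0 < 2 * f₀ / s := by positivity
    have h4 : 0 < (lam / α) / (α * δ - lam) - x ^ 2 := by linarith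
    have h5 : 0 < 2 / s + s * ((lam / α) / (α * δ - lam)) - s * x ^ 2 := by
      have : 0 < 2 / s := by positivity
      nlinarith [mul_pos hs0 h4]
    positivity
  have h10 : h₁ 0 = -(lam / (2 * α ^ 2)) := by
    rw [hh₁, hρ]; simp; field_simp
  have h1f : h₁ f₀ = 0 := by rw [hh₁, hρ, hroot, mul_zero]
  refine ⟨hmono, h10, h1f, ?_⟩
  have hz0 := hz.1
  have hzf := hz.2
  have hneg : h₁ z < 0 := by rw [hzeq]; exact hH₃mem.2
  -- slope comparison
  have hsl1 : ∀ x, 0 ≤ x → x ≤ z → h₁ x ≤ h₁ z := fun x h0 hx =>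
    hmono.monotoneOn ⟨h0, by linarith⟩ ⟨hz0.le, hzf.le⟩ hx
  have hsl2 : ∀ x, z ≤ x → h₁ z ≤ h₁ x := by
    intro x hx
    by_cases h : x ≤ f₀
    · exact hmono.monotoneOn ⟨hz0.le, hzf.le⟩ ⟨by linarith, h⟩ hx
    · push Not at h
      refine hneg.le.trans ?_
      rw [hh₁, hρ]
      have h6 : 0 ≤ x ^ 2 + 2 * x / s - (lam / α) / (α * δ - lam) := by
        rw [← hroot]
        gcongr
      positivity
  -- Hl in the x coordinate
  have hlog : ∀ x, Real.sqrt (Real.exp (2 * s * x)) = Real.exp (x * s) := by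
    intro x
    rw [show 2 * s * x = x * s + x * s by ring, Real.exp_add]
    exact Real.sqrt_mul_self (Real.exp_pos _).le
  have hHlx : ∀ x, Hl (Real.exp (2 * s * x)) =
      Real.exp (x * s) * (-(lam / α ^ 2) + (α * δ - lam) / α * x ^ 2) := by
    intro x
    rw [hHl _ (Real.exp_pos _), hlog, Real.log_exp]
    congr 2
    rw [mul_pow, mul_pow, hs2]
    field_simp
    ring
  have hid : ∀ x, Real.exp (x * s) * (-(lam / α ^ 2) + (α * δ - lam) / α * x ^ 2) =
      h₁ x * Real.exp (2 * s * x) + h₂ x := by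
    intro x
    rw [hh₁, hh₂, hρ]
    have e1 : Real.exp (-x * s) * Real.exp (2 * s * x) = Real.exp (x * s) := by
      rw [← Real.exp_add]; congr 1; ring
    rw [show (α * δ - lam) / (2 * α) * Real.exp (-x * s) *
      (x ^ 2 + 2 * x / s - lam / α / (α * δ - lam)) * Real.exp (2 * s * x) =
      (α * δ - lam) / (2 * α) * (Real.exp (-x * s) * Real.exp (2 * s * x)) *
      (x ^ 2 + 2 * x / s - lam / α / (α * δ - lam)) by ring, e1]
    have hD' := hD.ne'
    field_simp
    ring
  have hGd : ∀ x, HasDerivAt (fun x => Real.exp (x * s) *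
      (-(lam / α ^ 2) + (α * δ - lam) / α * x ^ 2) - h₁ z * Real.exp (2 * s * x))
      (2 * s * Real.exp (2 * s * x) * (h₁ x - h₁ z)) x := by
    intro x
    have hE : HasDerivAt (fun x : ℝ => Real.exp (x * s)) (Real.exp (x * s) * (1 * s)) x :=
      ((hasDerivAt_id x).mul_const s).exp
    have hE2 : HasDerivAt (fun x : ℝ => Real.exp (2 * s * x))
        (Real.exp (2 * s * x) * (2 * s * 1)) x :=
      ((hasDerivAt_id x).const_mul (2 * s)).exp
    have hP : HasDerivAt (fun x : ℝ => -(lam / α ^ 2) + (α * δ - lam) / α * x ^ 2)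
        ((α * δ - lam) / α * (2 * x)) x := by
      have := ((hasDerivAt_pow 2 x).const_mul ((α * δ - lam) / α)).const_add (-(lam / α ^ 2))
      refine HasDerivAt.congr_deriv (this) ?_
      simp
    refine HasDerivAt.congr_deriv ((hE.mul hP).sub (hE2.const_mul (h₁ z))) ?_
    have e1 : Real.exp (-x * s) * Real.exp (2 * s * x) = Real.exp (x * s) := by
      rw [← Real.exp_add]; congr 1; ring
    rw [hh₁ x, hρ, ← e1]
    have hD' := hD.ne'
    field_simp
    ring
  have hGc : Continuous (fun x => Real.exp (x * s) *
      (-(lam / α ^ 2) + (α * δ - lam) / α * x ^ 2) - h₁ z * Real.exp (2 * s * x)) :=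
    continuous_iff_continuousAt.2 fun x => (hGd x).continuousAt
  have hG : ∀ x, 0 ≤ x → h₂ z ≤ Real.exp (x * s) *
      (-(lam / α ^ 2) + (α * δ - lam) / α * x ^ 2) - h₁ z * Real.exp (2 * s * x) := by
    intro x hx
    have hzv : h₂ z = Real.exp (z * s) *
      (-(lam / α ^ 2) + (α * δ - lam) / α * z ^ 2) - h₁ z * Real.exp (2 * s * z) := by
      rw [hid]; ring
    rw [hzv]
    rcases le_total x z with h | h
    · have := antitoneOn_of_deriv_nonpos (convex_Icc 0 z) hGc.continuousOn
        (fun x _ => (hGd x).differentiableAt.differentiableWithinAt) (by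
          intro x hx
          rw [interior_Icc] at hx
          rw [(hGd x).deriv]
          have := hsl1 x hx.1.le hx.2.le
          exact mul_nonpos_of_nonneg_of_nonpos (by positivity) (by linarith))
      exact this ⟨hx, h⟩ ⟨hz0.le, le_rfl⟩ h
    · have := monotoneOn_of_deriv_nonneg (convex_Ici z) hGc.continuousOn
        (fun x _ => (hGd x).differentiableAt.differentiableWithinAt) (by
          intro x hx
          rw [interior_Ici] at hx
          rw [(hGd x).deriv]
          have := hsl2 x (le_of_lt hx)
          exact mul_nonneg (by positivity) (by linarith))
      exact this (Set.mem_Ici.2 le_rfl) (Set.mem_Ici.2 h) h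
  -- smooth fit of hr at f₀ + c
  have hd_r1 : HasDerivAt (hr1 c) (2 * (α * δ - lam) / α * f₀ - 2 * lam / α * c) (f₀ + c) := by
    have e : hr1 c = fun x => δ * c * (c - 2 * x) + (δ - lam / α) * x ^ 2 + c - lam / α ^ 2 := by
      funext x; rw [hhr1]
    rw [e]
    have := (((((((hasDerivAt_id (f₀ + c)).const_mul 2).const_sub c).const_mul (δ * c)).add
      ((hasDerivAt_pow 2 (f₀ + c)).const_mul (δ - lam / α))).add_const c).sub_const (lam / α ^ 2))
    refine HasDerivAt.congr_deriv (this) ?_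
    simp
    field_simp
    ring
  have hd_r2 : HasDerivAt (hr2 c) (2 * (α * δ - lam) / α * f₀ - 2 * lam / α * c) (f₀ + c) := by
    have e : hr2 c = fun x => (lam / α) * c * (c - 2 * x) + c +
        B₀ * Real.exp (-(x - c) * s) := by
      funext x; rw [hhr2]
    rw [e]
    have := ((((((hasDerivAt_id (f₀ + c)).const_mul 2).const_sub c).const_mul
      (lam / α * c)).add_const c).add
      ((((((hasDerivAt_id (f₀ + c)).sub_const c).neg).mul_const s).exp).const_mul B₀))
    refine HasDerivAt.congr_deriv (this) ?_
    have e2 : Real.exp (f₀ * s) * Real.exp (-(f₀ * s)) = 1 := by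
      rw [← Real.exp_add]; simp
    simp [hB₀]
    have : -(2 * f₀ / (α * s) * (α * δ - lam) * Real.exp (f₀ * s) * (Real.exp (-(f₀ * s)) * s))
       = -(2 * f₀ / (α * s) * (α * δ - lam) * s *
        (Real.exp (f₀ * s) * Real.exp (-(f₀ * s)))) := by ring
    field_simp
    linear_combination (f₀ * (α * δ - lam)) * e2
  have hx0 : hr c (f₀ + c) = hr1 c (f₀ + c) := hhra _ _ le_rfl
  have hx0' : hr c (f₀ + c) = hr2 c (f₀ + c) := hhrb _ _ le_rfl
  have hd_r : HasDerivAt (hr c) (2 * (α * δ - lam) / α * f₀ - 2 * lam / α * c) (f₀ + c) := by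
    have hL : HasDerivWithinAt (hr c) (2 * (α * δ - lam) / α * f₀ - 2 * lam / α * c)
        (Set.Iic (f₀ + c)) (f₀ + c) :=
      hd_r1.hasDerivWithinAt.congr (fun x hx => hhra c x hx) hx0
    have hR : HasDerivWithinAt (hr c) (2 * (α * δ - lam) / α * f₀ - 2 * lam / α * c)
        (Set.Ici (f₀ + c)) (f₀ + c) :=
      hd_r2.hasDerivWithinAt.congr (fun x hx => hhrb c x hx) hx0'
    have := hL.union hR
    rwa [Set.Iic_union_Ici, hasDerivWithinAt_univ] at this
  have hlx : Real.log (Real.exp (2 * s * (f₀ + c))) / (2 * s) = f₀ + c := by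
    rw [Real.log_exp]; field_simp
  have hE2 : Real.exp (2 * s * (f₀ + c)) =
      Real.exp ((f₀ + c) * s) * Real.exp ((f₀ + c) * s) := by
    rw [← Real.exp_add]; congr 1; ring
  have hEn : Real.exp (-(f₀ + c) * s) = (Real.exp ((f₀ + c) * s))⁻¹ := by
    rw [← Real.exp_neg]; congr 1; ring
  have hEpos := Real.exp_pos ((f₀ + c) * s)
  have hderiv : deriv (Hr c) (Ψ (f₀ + c)) = H₃ (f₀ + c) c := by
    rw [hΨ]
    have hY := Real.exp_pos (2 * s * (f₀ + c))
    have hev : Hr c =ᶠ[nhds (Real.exp (2 * s * (f₀ + c)))]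
        fun y => Real.sqrt y * hr c (Real.log y / (2 * s)) := by
      filter_upwards [lt_mem_nhds hY] with y hy
      exact hHr c y hy
    rw [hev.deriv_eq]
    have hd1' := (Real.hasDerivAt_log hY.ne').div_const (2 * s)
    have hd2' : HasDerivAt (fun y => hr c (Real.log y / (2 * s))) _
        (Real.exp (2 * s * (f₀ + c))) :=
      HasDerivAt.comp (h₂ := hr c) (Real.exp (2 * s * (f₀ + c))) (by rw [hlx]; exact hd_r) hd1'
    have hd3 := (Real.hasDerivAt_sqrt hY.ne').mul hd2'
    refine hd3.deriv.trans ?_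
    rw [hlx, hlog, hH₃, hd_r1.deriv, hx0, hE2, hEn]
    generalize hr1 c (f₀ + c) = K
    generalize (2 * (α * δ - lam) / α * f₀ - 2 * lam / α * c) = M
    field_simp
    ring
  have hline : ∀ y, Hr c (Ψ (f₀ + c)) + deriv (Hr c) (Ψ (f₀ + c)) * (y - Ψ (f₀ + c)) =
      h₁ z * y + H₄ (f₀ + c) c := by
    intro y
    rw [hderiv, hzeq, hΨ, hHr _ _ (Real.exp_pos _), hlx, hlog, hH₃, hH₄, hd_r1.deriv, hx0,
      hE2, hEn]
    generalize hr1 c (f₀ + c) = K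
    generalize (2 * (α * δ - lam) / α * f₀ - 2 * lam / α * c) = M
    field_simp
    ring
  simp only [hline]
  constructor
  · intro h y hy
    have hy0 : 0 < y := by linarith
    have hx : y = Real.exp (2 * s * (Real.log y / (2 * s))) := by
      rw [mul_div_cancel₀ _ (by positivity), Real.exp_log hy0]
    have hG' := hG (Real.log y / (2 * s)) (div_nonneg (Real.log_nonneg hy) (by positivity))
    rw [← hHlx, ← hx] at hG'
    linarith
  · intro h
    have := h (Real.exp (2 * s * z)) (Real.one_le_exp (by positivity))
    rw [hHlx, hid] at this
    linarith
end

section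
/- Let c₂>0 be such that for every c ∈ (0,c₂) there is a unique pair (ŷ₁(c),ŷ₂(c)) with 1 < ŷ₁(c) < y_c ≤ y_v(c) < ŷ₂(c) < ŷ₃(c) solving the tangency system. Then the functions c ↦ ŷ₁(c) and c ↦ ŷ₂(c) are continuously differentiable on (0,c₂), and, setting ŷ₁(0)=ŷ₂(0)=Ψ(1/(2δ)), they are continuous on [0,c₂). -/
noncomputable section
namespace S14

/-- `h c x`; the left function is `h 0`. -/
def h (a b δ c x : ℝ) : ℝ := a * x ^ 2 - b + c * (1 + δ * (c - 2 * x))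

def hd (a δ c x : ℝ) : ℝ := 2 * a * x - 2 * δ * c

def P (a b δ s c x : ℝ) : ℝ := Real.exp (-(s * x)) * (hd a δ c x + s * h a b δ c x)

def Q (a b δ s c x : ℝ) : ℝ := Real.exp (s * x) * (s * h a b δ c x - hd a δ c x)

def q (a b δ s c x : ℝ) : ℝ := 2 * a - s ^ 2 * h a b δ c x

lemma hasDerivAt_h (a b δ c x : ℝ) : HasDerivAt (h a b δ c) (hd a δ c x) x := by
  unfold h hd
  have h1 : HasDerivAt (fun x : ℝ => a * x ^ 2 - b + c * (1 + δ * (c - 2 * x)))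
      (a * (2 * x ^ (2-1) * 1) + c * (δ * (-(2 * 1)))) x := by
    refine ((((hasDerivAt_id x).pow 2).const_mul a).sub_const b).add ?_
    exact (((((hasDerivAt_id x).const_mul 2).const_sub c).const_mul δ).const_add 1).const_mul c
  convert h1 using 1
  simp; ring

lemma hasDerivAt_hd (a δ c x : ℝ) : HasDerivAt (hd a δ c) (2 * a) x := by
  unfold hd
  simpa using ((hasDerivAt_id x).const_mul (2 * a)).sub_const (2 * δ * c)

lemma hasDerivAt_P (a b δ s c x : ℝ) :
    HasDerivAt (P a b δ s c) (Real.exp (-(s * x)) * q a b δ s c x) x := by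
  have h1 : HasDerivAt (fun x : ℝ => Real.exp (-(s * x))) (Real.exp (-(s * x)) * (-(s * 1))) x :=
    (((hasDerivAt_id x).const_mul s).neg).exp
  have h2 := h1.mul ((hasDerivAt_hd a δ c x).add ((hasDerivAt_h a b δ c x).const_mul s))
  refine h2.congr_deriv ?_
  simp only [q, Pi.add_apply]; ring

lemma hasDerivAt_Q (a b δ s c x : ℝ) :
    HasDerivAt (Q a b δ s c) (-(Real.exp (s * x) * q a b δ s c x)) x := by
  have h1 : HasDerivAt (fun x : ℝ => Real.exp (s * x)) (Real.exp (s * x) * (s * 1)) x :=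
    ((hasDerivAt_id x).const_mul s).exp
  have h2 := h1.mul (((hasDerivAt_h a b δ c x).const_mul s).sub (hasDerivAt_hd a δ c x))
  refine h2.congr_deriv ?_
  simp only [q, Pi.sub_apply]; ring

/-- derivative of `√y * k(log y/(2s))` at `exp (2 s x)`. -/
lemma hasDerivAt_H (H k : ℝ → ℝ) (s x k' : ℝ) (hs : 0 < s)
    (hH : H =ᶠ[nhds (Real.exp (2 * s * x))] fun y => Real.sqrt y * k (Real.log y / (2 * s)))
    (hk : HasDerivAt k k' x) :
    HasDerivAt H (Real.exp (-(s * x)) * (k' + s * k x) / (2 * s)) (Real.exp (2 * s * x)) := by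
  refine HasDerivAt.congr_of_eventuallyEq ?_ hH
  set y := Real.exp (2 * s * x) with hy
  have hy0 : 0 < y := Real.exp_pos _
  have hlog : Real.log y / (2 * s) = x := by
    rw [hy, Real.log_exp]; field_simp
  have hsq : Real.sqrt y = Real.exp (s * x) := by
    rw [hy, show 2 * s * x = s * x + s * x by ring, Real.exp_add]
    exact Real.sqrt_mul_self (Real.exp_pos _).le
  have h1 := Real.hasDerivAt_sqrt hy0.ne'
  have h2 : HasDerivAt (fun y => k (Real.log y / (2 * s))) (k' * (y⁻¹ / (2 * s))) y := by
    have := (Real.hasDerivAt_log hy0.ne').div_const (2 * s)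
    rw [← hlog] at hk
    exact hk.comp y this
  have h3 := h1.mul h2
  refine h3.congr_deriv ?_
  rw [hlog, hsq, Real.exp_neg]
  have : y = Real.exp (s * x) * Real.exp (s * x) := by
    rw [← Real.exp_add, hy]; congr 1; ring
  rw [this]
  have := Real.exp_pos (s * x)
  field_simp
  ring

/-- invertibility from a nonzero determinant -/
lemma invertible2 (f : ℝ × (ℝ × ℝ) → ℝ × ℝ) (u : ℝ × (ℝ × ℝ)) (hf : DifferentiableAt ℝ f u)
    (p r m n : ℝ) (hdet : p * n - r * m ≠ 0)
    (hd : ∀ v w : ℝ, HasDerivAt (fun t : ℝ => f (u.1, u.2.1 + t * v, u.2.2 + t * w))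
      (p * v + r * w, m * v + n * w) 0) :
    (fderiv ℝ f u ∘L .inr ℝ ℝ (ℝ × ℝ)).IsInvertible := by
  set L := fderiv ℝ f u ∘L .inr ℝ ℝ (ℝ × ℝ) with hL
  have hLv : ∀ v w : ℝ, L (v, w) = (p * v + r * w, m * v + n * w) := by
    intro v w
    have h1 : HasDerivAt (fun t : ℝ => (u.1, u.2.1 + t * v, u.2.2 + t * w)) (0, v, w) 0 := by
      refine (hasDerivAt_const _ _).prodMk (HasDerivAt.prodMk ?_ ?_)
      · simpa using ((hasDerivAt_id (0:ℝ)).mul_const v).const_add u.2.1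
      · simpa using ((hasDerivAt_id (0:ℝ)).mul_const w).const_add u.2.2
    have h2 : HasFDerivAt f (fderiv ℝ f u) ((fun t : ℝ => (u.1, u.2.1 + t * v, u.2.2 + t * w)) 0) := by
      simpa using hf.hasFDerivAt
    have h3 := h2.comp_hasDerivAt (0:ℝ) h1
    have := h3.unique (hd v w)
    simpa [hL] using this
  have hinj : Function.Injective (L : ℝ × ℝ →ₗ[ℝ] ℝ × ℝ) := by
    rw [← LinearMap.ker_eq_bot, LinearMap.ker_eq_bot']
    rintro ⟨v, w⟩ h0
    have h0' : L (v, w) = 0 := h0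
    rw [hLv] at h0'
    have e1 : p * v + r * w = 0 := congrArg Prod.fst h0'
    have e2 : m * v + n * w = 0 := congrArg Prod.snd h0'
    have hv : (p * n - r * m) * v = 0 := by linear_combination n * e1 - r * e2
    have hw : (p * n - r * m) * w = 0 := by linear_combination p * e2 - m * e1
    rcases mul_eq_zero.1 hv with h | h
    · exact absurd h hdet
    rcases mul_eq_zero.1 hw with h' | h'
    · exact absurd h' hdet
    simp [h, h']
  refine ⟨(LinearEquiv.ofInjectiveEndo (L : ℝ × ℝ →ₗ[ℝ] ℝ × ℝ) hinj).toContinuousLinearEquiv, ?_⟩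
  ext <;> simp

/-- the implicit system -/
def G (a b δ s : ℝ) (u : ℝ × (ℝ × ℝ)) : ℝ × ℝ :=
  (P a b δ s 0 u.2.1 - P a b δ s u.1 u.2.2, Q a b δ s 0 u.2.1 - Q a b δ s u.1 u.2.2)

lemma contDiff_G (a b δ s : ℝ) : ContDiff ℝ 1 (G a b δ s) := by
  unfold G P Q h hd
  fun_prop

lemma invertible_G (a b δ s c x₁ x₂ : ℝ) (hs : 0 < s) (hx : x₁ < x₂)
    (h1 : q a b δ s 0 x₁ ≠ 0) (h2 : q a b δ s c x₂ ≠ 0) :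
    (fderiv ℝ (G a b δ s) (c, x₁, x₂) ∘L .inr ℝ ℝ (ℝ × ℝ)).IsInvertible := by
  refine invertible2 _ _ ((contDiff_G a b δ s).differentiable (by simp) _)
    (Real.exp (-(s * x₁)) * q a b δ s 0 x₁) (-(Real.exp (-(s * x₂)) * q a b δ s c x₂))
    (-(Real.exp (s * x₁) * q a b δ s 0 x₁)) (Real.exp (s * x₂) * q a b δ s c x₂) ?_ ?_
  · have e1 : Real.exp (-(s * x₁)) * Real.exp (s * x₂) > 1 := by
      rw [← Real.exp_add]; apply Real.one_lt_exp_iff.2; nlinarith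
    have e2 : Real.exp (-(s * x₂)) * Real.exp (s * x₁) < 1 := by
      rw [← Real.exp_add]; apply Real.exp_lt_one_iff.2; nlinarith
    have : Real.exp (-(s * x₁)) * q a b δ s 0 x₁ * (Real.exp (s * x₂) * q a b δ s c x₂) -
      -(Real.exp (-(s * x₂)) * q a b δ s c x₂) * -(Real.exp (s * x₁) * q a b δ s 0 x₁)
      = (q a b δ s 0 x₁ * q a b δ s c x₂) * (Real.exp (-(s * x₁)) * Real.exp (s * x₂) -
        Real.exp (-(s * x₂)) * Real.exp (s * x₁)) := by ring
    rw [this]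
    exact mul_ne_zero (mul_ne_zero h1 h2) (by linarith)
  · intro v w
    have k : ∀ x v : ℝ, HasDerivAt (fun t : ℝ => x + t * v) v 0 := fun x v => by
      simpa using ((hasDerivAt_id (0:ℝ)).mul_const v).const_add x
    have key : ∀ (F : ℝ → ℝ) (F' x v : ℝ), HasDerivAt F F' x →
        HasDerivAt (fun t : ℝ => F (x + t * v)) (F' * v) 0 := by
      intro F F' x v hF
      have hF' : HasDerivAt F F' ((fun t : ℝ => x + t * v) 0) := by simpa using hF
      exact hF'.comp (0:ℝ) (k x v)
    have A := (key _ _ _ v (hasDerivAt_P a b δ s 0 x₁)).sub (key _ _ _ w (hasDerivAt_P a b δ s c x₂))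
    have B := (key _ _ _ v (hasDerivAt_Q a b δ s 0 x₁)).sub (key _ _ _ w (hasDerivAt_Q a b δ s c x₂))
    refine (A.prodMk B).congr_deriv ?_
    ext <;> simp only <;> ring

/-- at a tangency with `x₁ < x₂` and the right function below the left one, `q 0 x₁ > 0`. -/
lemma q_pos (a b δ s c x₁ x₂ : ℝ) (hs : 0 < s) (ha : 0 < a) (hx0 : 0 < x₁) (hx : x₁ < x₂)
    (hlt : h a b δ c x₂ < h a b δ 0 x₂)
    (hP : P a b δ s 0 x₁ = P a b δ s c x₂) (hQ : Q a b δ s 0 x₁ = Q a b δ s c x₂) :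
    0 < q a b δ s 0 x₁ := by
  by_contra hcon
  push Not at hcon
  have hneg : ∀ t, x₁ ≤ t → q a b δ s 0 t ≤ 0 := by
    intro t ht
    refine le_trans ?_ hcon
    unfold q h
    have : a * x₁ ^ 2 ≤ a * t ^ 2 := by gcongr
    have := mul_le_mul_of_nonneg_left this (sq_nonneg s)
    linarith
  let φ : ℝ → ℝ := fun t => Real.exp (s * x₂) * P a b δ s 0 t + Real.exp (-(s * x₂)) * Q a b δ s 0 t
  have hφ : ∀ t, HasDerivAt φ (Real.exp (s * x₂) * (Real.exp (-(s * t)) * q a b δ s 0 t) +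
      Real.exp (-(s * x₂)) * (-(Real.exp (s * t) * q a b δ s 0 t))) t := fun t =>
    ((hasDerivAt_P a b δ s 0 t).const_mul _).add ((hasDerivAt_Q a b δ s 0 t).const_mul _)
  have hanti : AntitoneOn φ (Set.Icc x₁ x₂) := by
    refine antitoneOn_of_deriv_nonpos (convex_Icc _ _)
      (fun t _ => (hφ t).continuousAt.continuousWithinAt)
      (fun t _ => (hφ t).differentiableAt.differentiableWithinAt) ?_
    intro t ht
    rw [interior_Icc] at ht
    rw [(hφ t).deriv]
    have e1 : 1 ≤ Real.exp (s * x₂) * Real.exp (-(s * t)) := by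
      rw [← Real.exp_add]; apply Real.one_le_exp; nlinarith [ht.2]
    have e2 : Real.exp (-(s * x₂)) * Real.exp (s * t) ≤ 1 := by
      rw [← Real.exp_add]; apply Real.exp_le_one_iff.2; nlinarith [ht.2]
    nlinarith [hneg t ht.1.le]
  have hval : ∀ c, Real.exp (s * x₂) * P a b δ s c x₂ + Real.exp (-(s * x₂)) * Q a b δ s c x₂
      = 2 * s * h a b δ c x₂ := by
    intro c
    have : Real.exp (s * x₂) * Real.exp (-(s * x₂)) = 1 := by rw [← Real.exp_add]; simp
    unfold P Q
    linear_combination (2 * s * h a b δ c x₂) * this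
  have := hanti (Set.left_mem_Icc.2 hx.le) (Set.right_mem_Icc.2 hx.le) hx.le
  simp only [φ] at this
  rw [hP, hQ, hval, hval] at this
  have := lt_of_mul_lt_mul_left (lt_of_le_of_ne this ?_) (by positivity : 0 ≤ 2 * s)
  · linarith
  · intro h'
    have := mul_left_cancel₀ (by positivity : 2 * s ≠ 0) h'
    linarith

/-- sign of a concave quadratic. -/
lemma quad_iff (A B C r F x : ℝ) (hA : 0 < A) (hr : r < F)
    (hroot : C + B * r - A * r ^ 2 = 0)
    (hF : 0 < C + B * F - A * F ^ 2) (hx : x < F) :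
    r < x ↔ 0 < C + B * x - A * x ^ 2 := by
  -- the function minus its value at r : (x - r)(B - A(x+r))
  have hk : 0 < B - A * (F + r) := by
    by_contra hcon; push Not at hcon
    nlinarith [mul_nonneg (sub_nonneg.2 hr.le) (sub_nonneg.2 hcon)]
  have hkx : 0 < B - A * (x + r) := by nlinarith
  have e : C + B * x - A * x ^ 2 = (x - r) * (B - A * (x + r)) := by linear_combination hroot
  rw [e, mul_pos_iff_of_pos_right hkx, sub_pos]

/-- the quantitative estimate near `c = 0`. -/
lemma est (a b δ s c x₁ x₂ m F : ℝ) (hs : 0 < s) (ha : 0 < a) (hδ : 0 < δ) (hc : 0 < c)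
    (hx0 : 0 < x₁) (hx : x₁ < x₂) (hxF : x₂ ≤ F)
    (hm : m = Real.exp (-(s * F)) * q a b δ s 0 F) (hq : 0 < q a b δ s 0 F)
    (hP : P a b δ s 0 x₁ = P a b δ s c x₂) :
    m * (x₂ - x₁) ≤ c * (2 * δ + s * (1 + δ * (1 + 2 * F))) := by
  have h1 : m * (x₂ - x₁) ≤ P a b δ s 0 x₂ - P a b δ s 0 x₁ := by
    refine Convex.mul_sub_le_image_sub_of_le_deriv (convex_Icc x₁ x₂)
      (fun t _ => (hasDerivAt_P a b δ s 0 t).continuousAt.continuousWithinAt)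
      (fun t _ => (hasDerivAt_P a b δ s 0 t).differentiableAt.differentiableWithinAt) ?_
      _ (Set.left_mem_Icc.2 hx.le) _ (Set.right_mem_Icc.2 hx.le) hx.le
    intro t ht
    rw [interior_Icc] at ht
    rw [(hasDerivAt_P a b δ s 0 t).deriv, hm]
    have ht0 : 0 < t := hx0.trans ht.1
    have htF : t ≤ F := ht.2.le.trans hxF
    have hqq : q a b δ s 0 F ≤ q a b δ s 0 t := by
      unfold q h
      have : a * t ^ 2 ≤ a * F ^ 2 := by gcongr
      have := mul_le_mul_of_nonneg_left this (sq_nonneg s)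
      linarith
    have hee : Real.exp (-(s * F)) ≤ Real.exp (-(s * t)) := by
      apply Real.exp_le_exp.2; nlinarith
    exact mul_le_mul hee hqq hq.le (Real.exp_pos _).le
  refine h1.trans ?_
  rw [hP]
  have e : P a b δ s 0 x₂ - P a b δ s c x₂ =
      Real.exp (-(s * x₂)) * (c * (2 * δ - s * (1 + δ * (c - 2 * x₂)))) := by
    unfold P h hd; ring
  rw [e]
  have hx2 : 0 < x₂ := hx0.trans hx
  have e1 : Real.exp (-(s * x₂)) ≤ 1 := by apply Real.exp_le_one_iff.2; nlinarith
  have hbig : 2 * δ - s * (1 + δ * (c - 2 * x₂)) ≤ 2 * δ + s * (1 + δ * (1 + 2 * F)) := by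
    have h1 : δ * (2 * x₂) ≤ δ * (2 * F) := by gcongr
    have h2 : 0 < δ * c := by positivity
    nlinarith
  have hpos : 0 ≤ 2 * δ + s * (1 + δ * (1 + 2 * F)) := by
    have : 0 < F := by linarith
    positivity
  calc _ ≤ Real.exp (-(s * x₂)) * (c * (2 * δ + s * (1 + δ * (1 + 2 * F)))) := by gcongr
    _ ≤ 1 * (c * (2 * δ + s * (1 + δ * (1 + 2 * F)))) := by gcongr
    _ = _ := one_mul _

lemma tang (H : ℝ → ℝ) (a b δ s c x : ℝ) (hs : 0 < s)
    (hH : H =ᶠ[nhds (Real.exp (2 * s * x))]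
      fun y => Real.sqrt y * h a b δ c (Real.log y / (2 * s))) :
    deriv H (Real.exp (2 * s * x)) = P a b δ s c x / (2 * s) ∧
    H (Real.exp (2 * s * x)) - deriv H (Real.exp (2 * s * x)) * Real.exp (2 * s * x)
      = Q a b δ s c x / (2 * s) := by
  have h1 := (hasDerivAt_H H (h a b δ c) s x _ hs hH (hasDerivAt_h a b δ c x)).deriv
  refine ⟨h1, ?_⟩
  have hv := hH.eq_of_nhds
  have hlog : Real.log (Real.exp (2 * s * x)) / (2 * s) = x := by
    rw [Real.log_exp]; field_simp
  have hy : Real.exp (2 * s * x) = Real.exp (s * x) * Real.exp (s * x) := by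
    rw [← Real.exp_add]; congr 1; ring
  have hsq : Real.sqrt (Real.exp (2 * s * x)) = Real.exp (s * x) := by
    rw [hy]
    exact Real.sqrt_mul_self (Real.exp_pos _).le
  simp only [hlog, hsq] at hv
  rw [h1, hv, hy, Real.exp_neg]
  unfold Q
  have := Real.exp_pos (s * x)
  field_simp
  ring

end S14
end

/-- the tangency-pair functions yh₁, yh₂ are C¹ on (0,c₂) and, extended by
yh₁(0)=yh₂(0)=Ψ(1/(2δ)), continuous on [0,c₂). -/
theorem stmt_14 (α δ lam : ℝ) (hα : 0 < α) (hδ : 0 < δ) (hlam : 0 < lam)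
    (hltd : lam < α * δ)
    (f₀ : ℝ)
    (hf₀ : f₀ = (1 / Real.sqrt (2 * α)) * (Real.sqrt ((α * δ + lam) / (α * δ - lam)) - 1))
    (hf₀big : α / (2 * lam) < f₀)
    (Ψ : ℝ → ℝ) (hΨ : ∀ x, Ψ x = Real.exp (2 * Real.sqrt (2 * α) * x))
    (Hl : ℝ → ℝ)
    (hHl : ∀ y, 0 < y → Hl y = Real.sqrt y *
      (-(lam / α ^ 2) + ((δ - lam / α) / (8 * α)) * (Real.log y) ^ 2))
    (B₀ : ℝ)
    (hB₀ : B₀ = -(2 * f₀ / (α * Real.sqrt (2 * α))) * (α * δ - lam) *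
      Real.exp (f₀ * Real.sqrt (2 * α)))
    (hr1 hr2 hr Hr : ℝ → ℝ → ℝ)
    (hhr1 : ∀ c x, hr1 c x = δ * c * (c - 2 * x) + (δ - lam / α) * x ^ 2 + c - lam / α ^ 2)
    (hhr2 : ∀ c x, hr2 c x = (lam / α) * c * (c - 2 * x) + c +
      B₀ * Real.exp (-(x - c) * Real.sqrt (2 * α)))
    (hhra : ∀ c x, x ≤ f₀ + c → hr c x = hr1 c x)
    (hhrb : ∀ c x, f₀ + c ≤ x → hr c x = hr2 c x)
    (hHr : ∀ c y, 0 < y → Hr c y = Real.sqrt y * hr c (Real.log y / (2 * Real.sqrt (2 * α))))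
    (xv : ℝ → ℝ)
    (hxv : ∀ c, 0 < c →
      (xv c < f₀ + c ∧
        δ - (α * δ - lam) * (xv c) ^ 2 + c * α * (δ * (2 * xv c - c) - 1) = 0 ∧
        ∀ x, x < f₀ + c →
          δ - (α * δ - lam) * x ^ 2 + c * α * (δ * (2 * x - c) - 1) = 0 → x = xv c))
    (c₂ : ℝ) (hc₂pos : 0 < c₂)
    (yh₁ yh₂ : ℝ → ℝ)
    -- for every c ∈ (0,c₂) the pair (yh₁(c), yh₂(c)) is the unique solution of the
    -- tangency system with the stated constraints:
    (hpair : ∀ c, 0 < c → c < c₂ →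
      (1 < yh₁ c ∧ yh₁ c < Ψ (1 / (2 * δ) + c / 2) ∧
        Ψ (1 / (2 * δ) + c / 2) ≤ max (Ψ (1 / (2 * δ) + c / 2)) (Ψ (xv c)) ∧
        max (Ψ (1 / (2 * δ) + c / 2)) (Ψ (xv c)) < yh₂ c ∧ yh₂ c < Ψ (f₀ + c) ∧
        TangencySystem Hl (Hr c) (yh₁ c) (yh₂ c)))
    (huniq : ∀ c, 0 < c → c < c₂ → ∀ y₁ y₂ : ℝ,
      1 < y₁ → y₁ < Ψ (1 / (2 * δ) + c / 2) →
      Ψ (1 / (2 * δ) + c / 2) ≤ max (Ψ (1 / (2 * δ) + c / 2)) (Ψ (xv c)) →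
      max (Ψ (1 / (2 * δ) + c / 2)) (Ψ (xv c)) < y₂ → y₂ < Ψ (f₀ + c) →
      TangencySystem Hl (Hr c) y₁ y₂ → y₁ = yh₁ c ∧ y₂ = yh₂ c)
    -- the extensions to c = 0:
    (hyh₁0 : yh₁ 0 = Ψ (1 / (2 * δ))) (hyh₂0 : yh₂ 0 = Ψ (1 / (2 * δ))) :
    ContDiffOn ℝ 1 yh₁ (Set.Ioo 0 c₂) ∧ ContDiffOn ℝ 1 yh₂ (Set.Ioo 0 c₂) ∧
    ContinuousOn yh₁ (Set.Ico 0 c₂) ∧ ContinuousOn yh₂ (Set.Ico 0 c₂) := by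
  classical
  set s := Real.sqrt (2 * α) with hsdef
  have hs : 0 < s := Real.sqrt_pos.2 (by positivity)
  have hs2 : s ^ 2 = 2 * α := Real.sq_sqrt (by positivity)
  set a := δ - lam / α with hadef
  set b := lam / α ^ 2 with hbdef
  have ha : 0 < a := by
    rw [hadef, sub_pos, div_lt_iff₀ hα]; linarith
  have hAα : 0 < α * δ - lam := by linarith
  have hf0 : 0 < f₀ := lt_trans (by positivity) hf₀big
  have hqeq : ∀ c x, S14.q a b δ s c x =
      2 * (δ - (α * δ - lam) * x ^ 2 + c * α * (δ * (2 * x - c) - 1)) := by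
    intro c x
    unfold S14.q S14.h
    rw [hs2, hadef, hbdef]
    field_simp
    ring
  have hf0q : (α * δ - lam) * f₀ ^ 2 < δ := by
    set W := Real.sqrt ((α * δ + lam) / (α * δ - lam)) with hW
    have hWW : W ^ 2 * (α * δ - lam) = α * δ + lam := by
      rw [hW, Real.sq_sqrt (by positivity)]; field_simp
    have hsf : s * f₀ = W - 1 := by rw [hf₀]; field_simp
    have hWpos : 0 < W := by have := mul_pos hs hf0; linarith
    have e : 2 * α * f₀ ^ 2 = (W - 1) ^ 2 := by rw [← hs2, ← hsf]; ring
    have : 2 * α * ((α * δ - lam) * f₀ ^ 2) < 2 * α * δ := by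
      have e2 : 2 * α * ((α * δ - lam) * f₀ ^ 2) = 2 * α * δ - 2 * (W * (α * δ - lam)) := by
        linear_combination (α * δ - lam) * e + hWW
      rw [e2]
      have := mul_pos hWpos hAα
      linarith
    exact lt_of_mul_lt_mul_left this (by positivity)
  have h2lf : α < 2 * lam * f₀ := by
    rw [div_lt_iff₀ (by positivity)] at hf₀big; linarith
  have hqF : ∀ c, 0 ≤ c → 0 < S14.q a b δ s c (f₀ + c) := by
    intro c hc
    rw [hqeq]
    have : δ - (α * δ - lam) * (f₀ + c) ^ 2 + c * α * (δ * (2 * (f₀ + c) - c) - 1)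
      = (δ - (α * δ - lam) * f₀ ^ 2) + c * (2 * lam * f₀ - α) + lam * c ^ 2 := by ring
    rw [this]
    have := mul_nonneg hc (sub_nonneg.2 h2lf.le)
    have : 0 ≤ lam * c ^ 2 := by positivity
    linarith
  have hxviff : ∀ c x, 0 < c → x < f₀ + c → (xv c < x ↔ 0 < S14.q a b δ s c x) := by
    intro c x hc hx
    obtain ⟨h1, h2, -⟩ := hxv c hc
    have h3 := hqF c hc.le
    rw [hqeq] at h3 ⊢
    have := S14.quad_iff (α * δ - lam) (2 * (c * α * δ)) (δ - c * α * (δ * c + 1)) (xv c) (f₀ + c) x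
      hAα h1 (by linarith) (by linarith) hx
    rw [this]
    constructor <;> intro h <;> linarith
  have hΨlt : ∀ x y, Ψ x < Ψ y ↔ x < y := by
    intro x y
    rw [hΨ, hΨ, Real.exp_lt_exp]
    exact mul_lt_mul_iff_right₀ (by positivity)
  have hlogt : ∀ y : ℝ, (Real.log y) ^ 2 / (8 * α) = (Real.log y / (2 * s)) ^ 2 := by
    intro y
    rw [div_pow, mul_pow, hs2]; congr 1; ring
  have htl : ∀ x, Hl =ᶠ[nhds (Real.exp (2 * s * x))]
      fun y => Real.sqrt y * S14.h a b δ 0 (Real.log y / (2 * s)) := by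
    intro x
    filter_upwards [lt_mem_nhds (Real.exp_pos (2 * s * x))] with y hy
    rw [hHl y hy]
    congr 1
    unfold S14.h
    rw [← hlogt]; ring
  have htr : ∀ c x, x < f₀ + c → Hr c =ᶠ[nhds (Real.exp (2 * s * x))]
      fun y => Real.sqrt y * S14.h a b δ c (Real.log y / (2 * s)) := by
    intro c x hx
    have hlt : Real.exp (2 * s * x) < Real.exp (2 * s * (f₀ + c)) := by
      rw [Real.exp_lt_exp]; exact mul_lt_mul_of_pos_left hx (by positivity)
    filter_upwards [lt_mem_nhds (Real.exp_pos (2 * s * x)), gt_mem_nhds hlt] with y hy hy2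
    rw [hHr c y hy, hhra, hhr1]
    · congr 1
      unfold S14.h
      ring
    · rw [div_le_iff₀ (by positivity)]
      have := (Real.log_lt_iff_lt_exp hy).2 hy2
      linarith
  have htang : ∀ c x₁ x₂, x₂ < f₀ + c →
      (TangencySystem Hl (Hr c) (Real.exp (2 * s * x₁)) (Real.exp (2 * s * x₂)) ↔
        S14.P a b δ s 0 x₁ = S14.P a b δ s c x₂ ∧ S14.Q a b δ s 0 x₁ = S14.Q a b δ s c x₂) := by
    intro c x₁ x₂ hx
    obtain ⟨l1, l2⟩ := S14.tang Hl a b δ s 0 x₁ hs (htl x₁)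
    obtain ⟨r1, r2⟩ := S14.tang (Hr c) a b δ s c x₂ hs (htr c x₂ hx)
    unfold TangencySystem
    rw [l2, r2, l1, r1, div_left_inj' (by positivity), div_left_inj' (by positivity)]
  -- logarithmic coordinates
  let X₁ : ℝ → ℝ := fun c => Real.log (yh₁ c) / (2 * s)
  let X₂ : ℝ → ℝ := fun c => Real.log (yh₂ c) / (2 * s)
  have hexpX : ∀ y : ℝ, 0 < y → Real.exp (2 * s * (Real.log y / (2 * s))) = y := by
    intro y hy
    rw [mul_div_cancel₀ _ (by positivity), Real.exp_log hy]
  have hfacts : ∀ c, 0 < c → c < c₂ → yh₁ c = Ψ (X₁ c) ∧ yh₂ c = Ψ (X₂ c) ∧ 0 < X₁ c ∧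
      X₁ c < 1 / (2 * δ) + c / 2 ∧ 1 / (2 * δ) + c / 2 < X₂ c ∧ X₂ c < f₀ + c ∧
      0 < S14.q a b δ s c (X₂ c) ∧ S14.P a b δ s 0 (X₁ c) = S14.P a b δ s c (X₂ c) ∧
      S14.Q a b δ s 0 (X₁ c) = S14.Q a b δ s c (X₂ c) := by
    intro c hc hc2
    obtain ⟨p1, p2, -, p4, p5, p6⟩ := hpair c hc hc2
    have y1pos : 0 < yh₁ c := by linarith
    have y2pos : 0 < yh₂ c := lt_of_le_of_lt (by rw [hΨ]; exact (Real.exp_pos _).le)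
      ((le_max_left _ _).trans_lt p4)
    have e1 : yh₁ c = Ψ (X₁ c) := by rw [hΨ]; exact (hexpX _ y1pos).symm
    have e2 : yh₂ c = Ψ (X₂ c) := by rw [hΨ]; exact (hexpX _ y2pos).symm
    have k5 : X₂ c < f₀ + c := by rwa [e2, hΨlt] at p5
    rw [max_lt_iff] at p4
    have k4 : xv c < X₂ c := by have := p4.2; rwa [e2, hΨlt] at this
    rw [e1, e2, hΨ, hΨ, htang c _ _ k5] at p6
    refine ⟨e1, e2, ?_, ?_, ?_, k5, (hxviff c _ hc k5).1 k4, p6.1, p6.2⟩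
    · exact div_pos (Real.log_pos p1) (by positivity)
    · rwa [e1, hΨlt] at p2
    · have := p4.1; rwa [e2, hΨlt] at this
  have hloc : ∀ c, 0 < c → c < c₂ → ContDiffAt ℝ 1 yh₁ c ∧ ContDiffAt ℝ 1 yh₂ c := by
    intro c hc hc2
    obtain ⟨e1, e2, k1, k2, k3, k4, k5, k6, k7⟩ := hfacts c hc hc2
    have hlt : S14.h a b δ c (X₂ c) < S14.h a b δ 0 (X₂ c) := by
      unfold S14.h
      have : 1 + δ * (c - 2 * X₂ c) < 0 := by
        have := mul_lt_mul_of_pos_left k3 hδ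
        have e : δ * (1 / (2 * δ) + c / 2) = 1 / 2 + δ * c / 2 := by field_simp
        linarith
      nlinarith
    have hq1 := S14.q_pos a b δ s c _ _ hs ha k1 (k2.trans k3) hlt k6 k7
    have hinv := S14.invertible_G a b δ s c _ _ hs (k2.trans k3) hq1.ne' k5.ne'
    have hcd : ContDiffAt ℝ 1 (S14.G a b δ s) (c, X₁ c, X₂ c) := (S14.contDiff_G a b δ s).contDiffAt
    set ψ := hcd.implicitFunction (by simp) hinv with hψdef
    have hψ : ContDiffAt ℝ 1 ψ c := hcd.contDiffAt_implicitFunction (by simp) hinv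
    have hψ0 : ψ c = (X₁ c, X₂ c) := hcd.implicitFunction_apply_self (by simp) hinv
    have hev : ∀ᶠ z in nhds c, S14.G a b δ s (z, ψ z) = S14.G a b δ s (c, X₁ c, X₂ c) :=
      hcd.eventually_apply_implicitFunction (by simp) hinv
    have hG0 : S14.G a b δ s (c, X₁ c, X₂ c) = 0 := by
      simp [S14.G, k6, k7]
    have hψ1 : ContDiffAt ℝ 1 (fun z => (ψ z).1) c := contDiffAt_fst.comp c hψ
    have hψ2 : ContDiffAt ℝ 1 (fun z => (ψ z).2) c := contDiffAt_snd.comp c hψ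
    have c1 := hψ1.continuousAt
    have c2 := hψ2.continuousAt
    have cq : ContinuousAt (fun z => S14.q a b δ s z (ψ z).2) c := by
      unfold S14.q S14.h
      fun_prop
    have cid : ContinuousAt (fun z : ℝ => 1 / (2 * δ) + z / 2) c := by fun_prop
    have cf : ContinuousAt (fun z : ℝ => f₀ + z) c := by fun_prop
    have hall : ∀ᶠ z in nhds c, yh₁ z = Real.exp (2 * s * (ψ z).1) ∧
        yh₂ z = Real.exp (2 * s * (ψ z).2) := by
      filter_upwards [hev, lt_mem_nhds hc, gt_mem_nhds hc2,
        continuousAt_const.eventually_lt c1 (by rw [hψ0]; exact k1),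
        c1.eventually_lt cid (by rw [hψ0]; exact k2),
        cid.eventually_lt c2 (by rw [hψ0]; exact k3),
        c2.eventually_lt cf (by rw [hψ0]; exact k4),
        continuousAt_const.eventually_lt cq (by rw [hψ0]; exact k5)]
        with z z1 z2 z3 z4 z5 z6 z7 z8
      rw [hG0] at z1
      have zP : S14.P a b δ s 0 (ψ z).1 = S14.P a b δ s z (ψ z).2 :=
        sub_eq_zero.1 (congrArg Prod.fst z1)
      have zQ : S14.Q a b δ s 0 (ψ z).1 = S14.Q a b δ s z (ψ z).2 :=
        sub_eq_zero.1 (congrArg Prod.snd z1)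
      have hT := (htang z _ _ z7).2 ⟨zP, zQ⟩
      have := huniq z z2 z3 (Ψ (ψ z).1) (Ψ (ψ z).2) ?_ ((hΨlt _ _).2 z5) (le_max_left _ _)
        (max_lt ((hΨlt _ _).2 z6) ((hΨlt _ _).2 ((hxviff z _ z2 z7).2 z8))) ((hΨlt _ _).2 z7)
        (by rw [hΨ, hΨ]; exact hT)
      · rw [← this.1, ← this.2, hΨ, hΨ]; exact ⟨rfl, rfl⟩
      · rw [hΨ]; exact Real.one_lt_exp_iff.2 (by positivity)
    constructor
    · refine ContDiffAt.congr_of_eventuallyEq (f := fun z => Real.exp (2 * s * (ψ z).1)) ?_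
        (hall.mono fun z hz => hz.1)
      exact (contDiffAt_const.mul hψ1).exp
    · refine ContDiffAt.congr_of_eventuallyEq (f := fun z => Real.exp (2 * s * (ψ z).2)) ?_
        (hall.mono fun z hz => hz.2)
      exact (contDiffAt_const.mul hψ2).exp
  -- behaviour at zero
  obtain ⟨F, hFf, hFq⟩ : ∃ F, f₀ < F ∧ 0 < S14.q a b δ s 0 F := by
    have hc : ContinuousAt (fun x => S14.q a b δ s 0 x) f₀ := by
      unfold S14.q S14.h; fun_prop
    have h0 : 0 < S14.q a b δ s 0 f₀ := by simpa using hqF 0 le_rfl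
    have := (continuousAt_const.eventually_lt hc h0)
    have h2 : ∀ᶠ x in nhdsWithin f₀ (Set.Ioi f₀), 0 < S14.q a b δ s 0 x :=
      this.filter_mono nhdsWithin_le_nhds
    obtain ⟨F, h1, h2⟩ := (h2.and self_mem_nhdsWithin).exists
    exact ⟨F, h2, h1⟩
  set m := Real.exp (-(s * F)) * S14.q a b δ s 0 F with hm
  have hmpos : 0 < m := mul_pos (Real.exp_pos _) hFq
  set K := (2 * δ + s * (1 + δ * (1 + 2 * F))) with hK
  have hevest : ∀ᶠ c in nhdsWithin (0:ℝ) (Set.Ioo 0 c₂), X₂ c - X₁ c ≤ c * K / m := by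
    have h1 : ∀ᶠ c in nhdsWithin (0:ℝ) (Set.Ioo 0 c₂), c < F - f₀ :=
      (gt_mem_nhds (sub_pos.2 hFf)).filter_mono nhdsWithin_le_nhds
    filter_upwards [h1, self_mem_nhdsWithin] with c hcF hc
    obtain ⟨e1, e2, k1, k2, k3, k4, k5, k6, k7⟩ := hfacts c hc.1 hc.2
    have := S14.est a b δ s c (X₁ c) (X₂ c) m F hs ha hδ hc.1 k1 (k2.trans k3) (by linarith) hm hFq k6
    rw [le_div_iff₀ hmpos]; linarith
  have tl : ∀ t : ℝ, Filter.Tendsto (fun c : ℝ => 1 / (2 * δ) + c / 2 + t * (c * K / m))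
      (nhdsWithin (0:ℝ) (Set.Ioo 0 c₂)) (nhds (1 / (2 * δ))) := by
    intro t
    have : ContinuousAt (fun c : ℝ => 1 / (2 * δ) + c / 2 + t * (c * K / m)) 0 := by fun_prop
    have := this.tendsto
    simp only [zero_mul, zero_div, mul_zero, add_zero] at this
    exact this.mono_left nhdsWithin_le_nhds
  have hmem : ∀ᶠ c in nhdsWithin (0:ℝ) (Set.Ioo 0 c₂), c ∈ Set.Ioo 0 c₂ := self_mem_nhdsWithin
  have t1 : Filter.Tendsto X₁ (nhdsWithin (0:ℝ) (Set.Ioo 0 c₂)) (nhds (1 / (2 * δ))) := by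
    refine tendsto_of_tendsto_of_tendsto_of_le_of_le' (tl (-1)) (tl 0) ?_ ?_
    · filter_upwards [hevest, hmem] with c h1 hc
      obtain ⟨e1, e2, k1, k2, k3, k4, k5, k6, k7⟩ := hfacts c hc.1 hc.2
      linarith
    · filter_upwards [hmem] with c hc
      obtain ⟨e1, e2, k1, k2, k3, k4, k5, k6, k7⟩ := hfacts c hc.1 hc.2
      linarith
  have t2 : Filter.Tendsto X₂ (nhdsWithin (0:ℝ) (Set.Ioo 0 c₂)) (nhds (1 / (2 * δ))) := by
    refine tendsto_of_tendsto_of_tendsto_of_le_of_le' (tl 0) (tl 1) ?_ ?_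
    · filter_upwards [hmem] with c hc
      obtain ⟨e1, e2, k1, k2, k3, k4, k5, k6, k7⟩ := hfacts c hc.1 hc.2
      linarith
    · filter_upwards [hevest, hmem] with c h1 hc
      obtain ⟨e1, e2, k1, k2, k3, k4, k5, k6, k7⟩ := hfacts c hc.1 hc.2
      linarith
  have hΨc : Continuous Ψ := by
    have : Ψ = fun x => Real.exp (2 * s * x) := funext hΨ
    rw [this]; fun_prop
  have z1 : ContinuousWithinAt yh₁ (Set.Ioo 0 c₂) 0 := by
    unfold ContinuousWithinAt
    rw [hyh₁0]
    refine ((hΨc.tendsto _).comp t1).congr' ?_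
    filter_upwards [hmem] with c hc
    exact (hfacts c hc.1 hc.2).1.symm
  have z2 : ContinuousWithinAt yh₂ (Set.Ioo 0 c₂) 0 := by
    unfold ContinuousWithinAt
    rw [hyh₂0]
    refine ((hΨc.tendsto _).comp t2).congr' ?_
    filter_upwards [hmem] with c hc
    exact (hfacts c hc.1 hc.2).2.1.symm
  have hIco : Set.Ico 0 c₂ = insert 0 (Set.Ioo 0 c₂) := (Set.Ioo_insert_left hc₂pos).symm
  refine ⟨fun c hc => (hloc c hc.1 hc.2).1.contDiffWithinAt,
    fun c hc => (hloc c hc.1 hc.2).2.contDiffWithinAt, ?_, ?_⟩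
  · intro c hc
    rcases hc.1.eq_or_lt with h | h
    · rw [← h, hIco]; exact continuousWithinAt_insert_self.2 z1
    · exact (hloc c h hc.2).1.continuousAt.continuousWithinAt
  · intro c hc
    rcases hc.1.eq_or_lt with h | h
    · rw [← h, hIco]; exact continuousWithinAt_insert_self.2 z2
    · exact (hloc c h hc.2).2.continuousAt.continuousWithinAt
end

section
/- Let c₂>0 be such that for every c ∈ (0,c₂) there is a unique pair (ŷ₁(c),ŷ₂(c)) with 1 < ŷ₁(c) < y_c ≤ y_v(c) < ŷ₂(c) < ŷ₃(c) solving the tangency system, and set F(c)=Ψ⁻¹(ŷ₁(c)) and G(c)=Ψ⁻¹(ŷ₂(c)). Then for every c ∈ (0,c₂): the function L is well defined and differentiable in an open neighbourhood of (G(c),c); ∂L/∂x(G(c),c) < 0; the function G is differentiable at c; and G'(c) = 1 − q(G(c);F(c)) / (∂L/∂x)(G(c),c). -/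
open Filter Topology

/-- Implicit function theorem in the plane, with the first variable solved for. -/
lemma ift_aux (f : ℝ × ℝ → ℝ) (f' : ℝ × ℝ →L[ℝ] ℝ) (x₀ c₀ : ℝ)
    (hf : HasStrictFDerivAt f f' (x₀, c₀)) (h0 : f (x₀, c₀) = 0) (hx : f' (1, 0) ≠ 0) :
    ∃ g : ℝ → ℝ, g c₀ = x₀ ∧ DifferentiableAt ℝ g c₀ ∧ ∀ᶠ c in 𝓝 c₀, f (g c, c) = 0 := by
  have hsw : HasStrictFDerivAt (fun p : ℝ × ℝ => f (p.2, p.1))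
      (f' ∘L ((ContinuousLinearMap.snd ℝ ℝ ℝ).prod (ContinuousLinearMap.fst ℝ ℝ ℝ))) (c₀, x₀) := by
    have h2 : HasStrictFDerivAt (fun p : ℝ × ℝ => (p.2, p.1))
      ((ContinuousLinearMap.snd ℝ ℝ ℝ).prod (ContinuousLinearMap.fst ℝ ℝ ℝ)) (c₀, x₀) :=
      hasStrictFDerivAt_snd.prodMk hasStrictFDerivAt_fst
    exact HasStrictFDerivAt.comp (g := f) (c₀, x₀) hf h2
  have hinv : ((f' ∘L ((ContinuousLinearMap.snd ℝ ℝ ℝ).prod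
      (ContinuousLinearMap.fst ℝ ℝ ℝ))) ∘L .inr ℝ ℝ ℝ).IsInvertible := by
    refine ⟨ContinuousLinearEquiv.unitsEquivAut ℝ (Units.mk0 _ hx), ?_⟩
    ext
    simp
  refine ⟨hsw.implicitFunctionOfProdDomain hinv, ?_, ?_, ?_⟩
  · exact (hsw.eventually_apply_eq_iff_implicitFunctionOfProdDomain hinv).self_of_nhds.mp rfl
  · exact (hsw.hasStrictFDerivAt_implicitFunctionOfProdDomain hinv).hasFDerivAt.differentiableAt
  · have := hsw.eventually_apply_implicitFunctionOfProdDomain hinv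
    simpa only [h0] using this

/-- Derivative of the transformed function. -/
lemma tangent_aux (s : ℝ) (hs : 0 < s) (k : ℝ → ℝ) (k' x : ℝ) (hk : HasDerivAt k k' x) :
    HasDerivAt (fun y => Real.sqrt y * k (Real.log y / (2 * s)))
      (Real.exp (-x * s) / (2 * s) * (k' + s * k x)) (Real.exp (2 * s * x)) := by
  have hlog : HasDerivAt (fun y => Real.log y / (2 * s)) ((Real.exp (2 * s * x))⁻¹ / (2 * s))
      (Real.exp (2 * s * x)) := (Real.hasDerivAt_log (Real.exp_pos _).ne').div_const _
  have hx : x = Real.log (Real.exp (2 * s * x)) / (2 * s) := by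
    rw [Real.log_exp]; field_simp
  have hk2 : HasDerivAt k k' (Real.log (Real.exp (2 * s * x)) / (2 * s)) := by rwa [← hx]
  have h1 := (Real.hasDerivAt_sqrt (Real.exp_pos (2 * s * x)).ne').mul
    (HasDerivAt.comp (h₂ := k) _ hk2 hlog)
  have hsq : Real.sqrt (Real.exp (2 * s * x)) = Real.exp (x * s) := by
    rw [show 2 * s * x = x * s + x * s by ring, Real.exp_add, Real.sqrt_mul_self (Real.exp_pos _).le]
  refine HasDerivAt.congr_deriv (f := fun y => Real.sqrt y * k (Real.log y / (2 * s))) h1 ?_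
  simp only [Function.comp, ← hx, hsq]
  rw [show 2 * s * x = x * s + x * s by ring, Real.exp_add, neg_mul, Real.exp_neg]
  have := Real.exp_pos (x * s)
  field_simp
  ring

/-- Intercept of the tangent of the transformed function. -/
lemma intercept_aux (s : ℝ) (hs : 0 < s) (x k k' : ℝ) :
    Real.sqrt (Real.exp (2 * s * x)) * k -
      Real.exp (-x * s) / (2 * s) * (k' + s * k) * Real.exp (2 * s * x)
      = Real.exp (x * s) / (2 * s) * (-k' + s * k) := by
  have hsq : Real.sqrt (Real.exp (2 * s * x)) = Real.exp (x * s) := by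
    rw [show 2 * s * x = x * s + x * s by ring, Real.exp_add, Real.sqrt_mul_self (Real.exp_pos _).le]
  rw [hsq, show 2 * s * x = x * s + x * s by ring, Real.exp_add, neg_mul, Real.exp_neg]
  have := Real.exp_pos (x * s)
  field_simp
  ring

lemma dexp_aux (s x : ℝ) : HasDerivAt (fun x : ℝ => Real.exp (x * s)) (Real.exp (x * s) * s) x := by
  have := ((hasDerivAt_id x).mul_const s).exp
  simpa using this

lemma dexpneg_aux (s x : ℝ) :
    HasDerivAt (fun x : ℝ => Real.exp (-x * s)) (-(Real.exp (-x * s) * s)) x := by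
  have := ((hasDerivAt_id x).neg.mul_const s).exp
  simpa using this

/-- The formula for `h₁` has positive derivative on `[0, f₀]`; derivative formula. -/
lemma h1_deriv (α δ lam s : ℝ) (h₁ : ℝ → ℝ) (hα : 0 < α) (hltd : lam < α * δ) (hs : 0 < s)
    (hs2 : s ^ 2 = 2 * α)
    (hh₁ : ∀ x, h₁ x = ((α * δ - lam) / (2 * α)) * Real.exp (-x * s) *
      (x ^ 2 + 2 * x / s - (lam / α) / (α * δ - lam))) (x : ℝ) :
    HasStrictDerivAt h₁ (Real.exp (-x * s) / s *
      (δ - (α * δ - lam) * x ^ 2)) x := by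
  have hd : 0 < α * δ - lam := by linarith
  have hcd : ContDiff ℝ 1 h₁ := by
    rw [funext hh₁]; fun_prop
  have h : HasDerivAt h₁ (Real.exp (-x * s) / s *
      (δ - (α * δ - lam) * x ^ 2)) x := by
    have h1 := ((dexpneg_aux s x).const_mul ((α * δ - lam) / (2 * α))).mul
      ((((hasDerivAt_id x).pow 2).add (((hasDerivAt_id x).const_mul 2).div_const s)).sub_const
        ((lam / α) / (α * δ - lam)))
    rw [funext hh₁]
    refine HasDerivAt.congr_deriv (f := fun x => ((α * δ - lam) / (2 * α)) * Real.exp (-x * s) *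
      (x ^ 2 + 2 * x / s - (lam / α) / (α * δ - lam))) h1 ?_
    have hα2 : α = s ^ 2 / 2 := by linarith
    simp
    subst hα2
    have hne : s ^ 2 * δ - 2 * lam ≠ 0 := by intro h; linarith
    field_simp
    ring
  exact hcd.contDiffAt.hasStrictDerivAt' h one_ne_zero

lemma h2_deriv (α δ lam s : ℝ) (h₂ : ℝ → ℝ) (hα : 0 < α) (hltd : lam < α * δ) (hs : 0 < s)
    (hs2 : s ^ 2 = 2 * α)
    (hh₂ : ∀ x, h₂ x = ((α * δ - lam) / (2 * α)) * Real.exp (x * s) *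
      (x ^ 2 + 2 * x / s - (lam / α) / (α * δ - lam) - 4 * x / s)) (x : ℝ) :
    HasStrictDerivAt h₂ (-(Real.exp (x * s) / s *
      (δ - (α * δ - lam) * x ^ 2))) x := by
  have hd : 0 < α * δ - lam := by linarith
  have hcd : ContDiff ℝ 1 h₂ := by
    rw [funext hh₂]; fun_prop
  have h : HasDerivAt h₂ (-(Real.exp (x * s) / s *
      (δ - (α * δ - lam) * x ^ 2))) x := by
    have h1 := ((dexp_aux s x).const_mul ((α * δ - lam) / (2 * α))).mul
      (((((hasDerivAt_id x).pow 2).add (((hasDerivAt_id x).const_mul 2).div_const s)).sub_const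
        ((lam / α) / (α * δ - lam))).sub (((hasDerivAt_id x).const_mul 4).div_const s))
    rw [funext hh₂]
    refine HasDerivAt.congr_deriv (f := fun x => ((α * δ - lam) / (2 * α)) * Real.exp (x * s) *
      (x ^ 2 + 2 * x / s - (lam / α) / (α * δ - lam) - 4 * x / s)) h1 ?_
    have hα2 : α = s ^ 2 / 2 := by linarith
    simp
    subst hα2
    have hne : s ^ 2 * δ - 2 * lam ≠ 0 := by intro h; linarith
    field_simp
    ring
  exact hcd.contDiffAt.hasStrictDerivAt' h one_ne_zero

/-- Explicit form of `Ĥ₃` (`σ = -1`) and of `Ĥ₄` (`σ = 1`): directional derivatives. -/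
lemma HH_deriv (α δ lam s σ x c : ℝ) (hσ : σ ^ 2 = 1) (hα : 0 < α) (hs : 0 < s)
    (hs2 : s ^ 2 = 2 * α)
    (H : ℝ → ℝ → ℝ)
    (hH : ∀ x c, H x c = Real.exp (σ * x * s) / (2 * s) *
      (-σ * (-2 * δ * c + 2 * (δ - lam / α) * x) +
        s * (δ * c * (c - 2 * x) + (δ - lam / α) * x ^ 2 + c - lam / α ^ 2))) :
    HasStrictFDerivAt (fun p : ℝ × ℝ => H p.1 p.2) (fderiv ℝ (fun p : ℝ × ℝ => H p.1 p.2) (x, c))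
      (x, c) ∧
    fderiv ℝ (fun p : ℝ × ℝ => H p.1 p.2) (x, c) (1, 0) = -σ * (Real.exp (σ * x * s) / s *
      (δ - (α * δ - lam) * x ^ 2 + c * α * (δ * (2 * x - c) - 1))) ∧
    fderiv ℝ (fun p : ℝ × ℝ => H p.1 p.2) (x, c) (1, 1) = σ * s * H x c +
      Real.exp (σ * x * s) / (2 * s) * (σ * (2 * lam / α) + s * (1 - 2 * lam / α * x)) := by
  have hcd : ContDiff ℝ 1 (fun p : ℝ × ℝ => H p.1 p.2) := by
    rw [funext (fun p : ℝ × ℝ => hH p.1 p.2)]; fun_prop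
  have hst : HasStrictFDerivAt (fun p : ℝ × ℝ => H p.1 p.2)
      (fderiv ℝ (fun p : ℝ × ℝ => H p.1 p.2) (x, c)) (x, c) :=
    hcd.contDiffAt.hasStrictFDerivAt one_ne_zero
  have hdir : ∀ ε : ℝ, fderiv ℝ (fun p : ℝ × ℝ => H p.1 p.2) (x, c) (1, ε) =
      σ * s * H x c + Real.exp (σ * x * s) / (2 * s) *
        (-σ * (-2 * δ * ε + 2 * (δ - lam / α)) + s * (δ * ε * (c - 2 * x) + δ * c * (ε - 2) +
          2 * (δ - lam / α) * x + ε)) := by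
    intro ε
    have hcurve : HasDerivAt (fun t : ℝ => (x + t, c + ε * t)) ((1 : ℝ), ε) 0 := by
      have h1 : HasDerivAt (fun t : ℝ => x + t) 1 0 := (hasDerivAt_id 0).const_add x
      have h2 : HasDerivAt (fun t : ℝ => c + ε * t) ε 0 := by
        simpa using ((hasDerivAt_id (0:ℝ)).const_mul ε).const_add c
      exact h1.prodMk h2
    have hst0 : HasFDerivAt (fun p : ℝ × ℝ => H p.1 p.2)
      (fderiv ℝ (fun p : ℝ × ℝ => H p.1 p.2) (x, c)) ((fun t : ℝ => (x + t, c + ε * t)) 0) := by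
      simpa using hst.hasFDerivAt
    have hA := hst0.comp_hasDerivAt 0 hcurve
    have h1 : HasDerivAt (fun t : ℝ => x + t) 1 0 := (hasDerivAt_id 0).const_add x
    have h2 : HasDerivAt (fun t : ℝ => c + ε * t) ε 0 := by
      simpa using ((hasDerivAt_id (0:ℝ)).const_mul ε).const_add c
    have hE := ((h1.const_mul σ).mul_const s).exp.div_const (2 * s)
    have hB1 := ((h2.const_mul (-2 * δ)).add (h1.const_mul (2 * (δ - lam / α)))).const_mul (-σ)
    have hB2 := (((((h2.const_mul δ).mul (h2.sub (h1.const_mul 2))).add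
      ((h1.pow 2).const_mul (δ - lam / α))).add h2).sub_const (lam / α ^ 2)).const_mul s
    have hB := hE.mul (hB1.add hB2)
    have hA' : HasDerivAt (fun t : ℝ => H (x + t) (c + ε * t))
      (fderiv ℝ (fun p : ℝ × ℝ => H p.1 p.2) (x, c) (1, ε)) 0 := hA
    rw [funext (fun t : ℝ => hH (x + t) (c + ε * t))] at hA'
    rw [hA'.unique hB, hH]
    simp
    ring
  refine ⟨hst, ?_, ?_⟩
  · rw [hdir, hH]
    have hα2 : α = s ^ 2 / 2 := by linarith
    subst hα2
    field_simp
    linear_combination (2 * s ^ 3 * δ * c - 2 * s ^ 3 * δ * x + 4 * s * x * lam) * hσ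
  · rw [hdir]
    ring

set_option maxHeartbeats 2000000 in
/-- for each c ∈ (0,c₂), L is well defined and differentiable in an open
neighbourhood of (G(c),c), ∂L/∂x(G(c),c) < 0, G is differentiable at c and
G'(c) = 1 − q(G(c);F(c)) / L_x(G(c),c). -/
theorem stmt_15 (α δ lam : ℝ) (hα : 0 < α) (hδ : 0 < δ) (hlam : 0 < lam)
    (hltd : lam < α * δ)
    (ρ : ℝ → ℝ)
    (hρ : ∀ x, ρ x = x ^ 2 + 2 * x / Real.sqrt (2 * α) - (lam / α) / (α * δ - lam))
    (f₀ : ℝ)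
    (hf₀ : f₀ = (1 / Real.sqrt (2 * α)) * (Real.sqrt ((α * δ + lam) / (α * δ - lam)) - 1))
    (hf₀big : α / (2 * lam) < f₀)
    (Ψ : ℝ → ℝ) (hΨ : ∀ x, Ψ x = Real.exp (2 * Real.sqrt (2 * α) * x))
    (Hl : ℝ → ℝ)
    (hHl : ∀ y, 0 < y → Hl y = Real.sqrt y *
      (-(lam / α ^ 2) + ((δ - lam / α) / (8 * α)) * (Real.log y) ^ 2))
    (B₀ : ℝ)
    (hB₀ : B₀ = -(2 * f₀ / (α * Real.sqrt (2 * α))) * (α * δ - lam) *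
      Real.exp (f₀ * Real.sqrt (2 * α)))
    (hr1 hr2 hr Hr : ℝ → ℝ → ℝ)
    (hhr1 : ∀ c x, hr1 c x = δ * c * (c - 2 * x) + (δ - lam / α) * x ^ 2 + c - lam / α ^ 2)
    (hhr2 : ∀ c x, hr2 c x = (lam / α) * c * (c - 2 * x) + c +
      B₀ * Real.exp (-(x - c) * Real.sqrt (2 * α)))
    (hhra : ∀ c x, x ≤ f₀ + c → hr c x = hr1 c x)
    (hhrb : ∀ c x, f₀ + c ≤ x → hr c x = hr2 c x)
    (hHr : ∀ c y, 0 < y → Hr c y = Real.sqrt y * hr c (Real.log y / (2 * Real.sqrt (2 * α))))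
    (xv : ℝ → ℝ)
    (hxv : ∀ c, 0 < c →
      (xv c < f₀ + c ∧
        δ - (α * δ - lam) * (xv c) ^ 2 + c * α * (δ * (2 * xv c - c) - 1) = 0 ∧
        ∀ x, x < f₀ + c →
          δ - (α * δ - lam) * x ^ 2 + c * α * (δ * (2 * x - c) - 1) = 0 → x = xv c))
    -- the functions h₁, h₂, h₃, h₄ and q:
    (h₁ h₂ h₃ h₄ : ℝ → ℝ)
    (hh₁ : ∀ x, h₁ x = ((α * δ - lam) / (2 * α)) * Real.exp (-x * Real.sqrt (2 * α)) * ρ x)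
    (hh₂ : ∀ x, h₂ x = ((α * δ - lam) / (2 * α)) * Real.exp (x * Real.sqrt (2 * α)) *
      (ρ x - 4 * x / Real.sqrt (2 * α)))
    (hh₃ : ∀ x, h₃ x = (lam / α) * (α / (2 * lam) - x - 1 / Real.sqrt (2 * α)) *
      Real.exp (-x * Real.sqrt (2 * α)))
    (hh₄ : ∀ x, h₄ x = (lam / α) * (x - α / (2 * lam) - 1 / Real.sqrt (2 * α)) *
      Real.exp (x * Real.sqrt (2 * α)))
    (q : ℝ → ℝ → ℝ)
    (hq : ∀ x z, q x z = Real.sqrt (2 * α) *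
      (h₂ z - h₁ z * Real.exp (2 * z * Real.sqrt (2 * α))) +
      h₃ x * Real.exp (2 * z * Real.sqrt (2 * α)) - h₄ x)
    -- the inverse of h₁ on [−λ/(2α²),0]:
    (h₁inv : ℝ → ℝ)
    (hh₁inv : ∀ w ∈ Set.Icc (-(lam / (2 * α ^ 2))) (0 : ℝ),
      h₁inv w ∈ Set.Icc 0 f₀ ∧ h₁ (h₁inv w) = w)
    -- Ĥ₃, Ĥ₄ and L:
    (H₃ H₄ : ℝ → ℝ → ℝ)
    (hH₃ : ∀ x c, H₃ x c = (Real.exp (-x * Real.sqrt (2 * α)) / (2 * Real.sqrt (2 * α))) *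
      (deriv (hr1 c) x + Real.sqrt (2 * α) * hr1 c x))
    (hH₄ : ∀ x c, H₄ x c = (Real.exp (x * Real.sqrt (2 * α)) / (2 * Real.sqrt (2 * α))) *
      (-deriv (hr1 c) x + Real.sqrt (2 * α) * hr1 c x))
    (L : ℝ → ℝ → ℝ)
    (hL : ∀ x c, H₃ x c ∈ Set.Icc (-(lam / (2 * α ^ 2))) (0 : ℝ) →
      L x c = H₄ x c - h₂ (h₁inv (H₃ x c)))
    -- the tangency-pair functions and the moving boundaries F, G:
    (c₂ : ℝ) (hc₂pos : 0 < c₂)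
    (yh₁ yh₂ : ℝ → ℝ)
    (hpair : ∀ c, 0 < c → c < c₂ →
      (1 < yh₁ c ∧ yh₁ c < Ψ (1 / (2 * δ) + c / 2) ∧
        Ψ (1 / (2 * δ) + c / 2) ≤ max (Ψ (1 / (2 * δ) + c / 2)) (Ψ (xv c)) ∧
        max (Ψ (1 / (2 * δ) + c / 2)) (Ψ (xv c)) < yh₂ c ∧ yh₂ c < Ψ (f₀ + c) ∧
        TangencySystem Hl (Hr c) (yh₁ c) (yh₂ c)))
    (huniq : ∀ c, 0 < c → c < c₂ → ∀ y₁ y₂ : ℝ,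
      1 < y₁ → y₁ < Ψ (1 / (2 * δ) + c / 2) →
      Ψ (1 / (2 * δ) + c / 2) ≤ max (Ψ (1 / (2 * δ) + c / 2)) (Ψ (xv c)) →
      max (Ψ (1 / (2 * δ) + c / 2)) (Ψ (xv c)) < y₂ → y₂ < Ψ (f₀ + c) →
      TangencySystem Hl (Hr c) y₁ y₂ → y₁ = yh₁ c ∧ y₂ = yh₂ c)
    (F G : ℝ → ℝ)
    (hF : ∀ c, F c = Real.log (yh₁ c) / (2 * Real.sqrt (2 * α)))
    (hG : ∀ c, G c = Real.log (yh₂ c) / (2 * Real.sqrt (2 * α))) :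
    ∀ c, 0 < c → c < c₂ →
      (∃ U : Set (ℝ × ℝ), IsOpen U ∧ (G c, c) ∈ U ∧
        (∀ p ∈ U, H₃ p.1 p.2 ∈ Set.Icc (-(lam / (2 * α ^ 2))) (0 : ℝ)) ∧
        DifferentiableOn ℝ (fun p : ℝ × ℝ => L p.1 p.2) U) ∧
      deriv (fun x => L x c) (G c) < 0 ∧
      DifferentiableAt ℝ G c ∧
      deriv G c = 1 - q (G c) (F c) / deriv (fun x => L x c) (G c) := by
  have hs : 0 < Real.sqrt (2 * α) := Real.sqrt_pos.mpr (by linarith)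
  have hs2 : Real.sqrt (2 * α) ^ 2 = 2 * α := Real.sq_sqrt (by linarith)
  have hf₀eq : (Real.sqrt (2 * α) * f₀ + 1) ^ 2 = (α * δ + lam) / (α * δ - lam) := by
    have hpos : 0 ≤ (α * δ + lam) / (α * δ - lam) :=
      div_nonneg (by nlinarith [mul_pos hα hδ]) (by linarith)
    rw [← Real.sq_sqrt hpos]
    congr 1
    rw [hf₀]
    field_simp
    ring
  clear hf₀
  generalize Real.sqrt (2 * α) = s at *
  have hd : 0 < α * δ - lam := by linarith
  have hα2 : α = s ^ 2 / 2 := by linarith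
  have hf₀pos : 0 < f₀ := lt_trans (by positivity) hf₀big
  have hf₀root : (α * δ - lam) * (α * f₀ ^ 2 + s * f₀) = lam := by
    rw [eq_div_iff hd.ne'] at hf₀eq
    have : (s * f₀ + 1) ^ 2 = 2 * α * f₀ ^ 2 + 2 * s * f₀ + 1 := by
      rw [← hs2]; ring
    rw [this] at hf₀eq
    linarith
  have hbig : α < 2 * lam * f₀ := by
    rw [div_lt_iff₀ (by linarith)] at hf₀big
    linarith
  simp only [hρ] at hh₁ hh₂
  have hd1 : ∀ c x, HasDerivAt (hr1 c) (-2 * δ * c + 2 * (δ - lam / α) * x) x := by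
    intro c x
    have h := (((((hasDerivAt_id x).const_mul 2).const_sub c).const_mul (δ * c)).add
      (((hasDerivAt_id x).pow 2).const_mul (δ - lam / α))).add_const c |>.sub_const (lam / α ^ 2)
    rw [funext (hhr1 c)]
    refine HasDerivAt.congr_deriv (f := fun x => δ * c * (c - 2 * x) + (δ - lam / α) * x ^ 2 + c
      - lam / α ^ 2) h ?_
    simp
    ring
  have hH₃' : ∀ x c, H₃ x c = Real.exp ((-1) * x * s) / (2 * s) *
      (-(-1) * (-2 * δ * c + 2 * (δ - lam / α) * x) +
        s * (δ * c * (c - 2 * x) + (δ - lam / α) * x ^ 2 + c - lam / α ^ 2)) := by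
    intro x c
    rw [hH₃, (hd1 c x).deriv, hhr1]
    ring_nf
  have hH₄' : ∀ x c, H₄ x c = Real.exp (1 * x * s) / (2 * s) *
      (-1 * (-2 * δ * c + 2 * (δ - lam / α) * x) +
        s * (δ * c * (c - 2 * x) + (δ - lam / α) * x ^ 2 + c - lam / α ^ 2)) := by
    intro x c
    rw [hH₄, (hd1 c x).deriv, hhr1]
    ring_nf
  -- tangents of `Hl`
  have tangl : ∀ x, HasDerivAt Hl (h₁ x) (Ψ x) ∧ Hl (Ψ x) - h₁ x * Ψ x = h₂ x := by
    intro x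
    have hk : HasDerivAt (fun x : ℝ => -(lam / α ^ 2) + (δ - lam / α) * x ^ 2)
        (2 * (δ - lam / α) * x) x := by
      have h := (((hasDerivAt_id x).pow 2).const_mul (δ - lam / α)).const_add (-(lam / α ^ 2))
      refine HasDerivAt.congr_deriv
        (f := fun x : ℝ => -(lam / α ^ 2) + (δ - lam / α) * x ^ 2) h ?_
      simp
      ring
    have ht := tangent_aux s hs _ _ x hk
    have hi := intercept_aux s hs x (-(lam / α ^ 2) + (δ - lam / α) * x ^ 2) (2 * (δ - lam / α) * x)
    have hev : ∀ y, 0 < y → Hl y = Real.sqrt y *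
        (-(lam / α ^ 2) + (δ - lam / α) * (Real.log y / (2 * s)) ^ 2) := by
      intro y hy
      rw [hHl y hy, div_pow, mul_pow, hs2]
      congr 2
      field_simp
      ring
    have e1 : Real.exp (-x * s) / (2 * s) * (2 * (δ - lam / α) * x +
        s * (-(lam / α ^ 2) + (δ - lam / α) * x ^ 2)) = h₁ x := by
      rw [hh₁]
      have hne : s ^ 2 * δ - 2 * lam ≠ 0 := by
        intro h; rw [hα2] at hd; linarith
      rw [hα2]
      field_simp
      ring
    have e2 : Real.exp (x * s) / (2 * s) * (-(2 * (δ - lam / α) * x) +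
        s * (-(lam / α ^ 2) + (δ - lam / α) * x ^ 2)) = h₂ x := by
      rw [hh₂]
      have hne : s ^ 2 * δ - 2 * lam ≠ 0 := by
        intro h; rw [hα2] at hd; linarith
      rw [hα2]
      field_simp
      ring
    rw [e1] at ht hi
    rw [e2] at hi
    rw [hΨ]
    constructor
    · refine ht.congr_of_eventuallyEq ?_
      filter_upwards [lt_mem_nhds (Real.exp_pos (2 * s * x))] with y hy
      exact hev y hy
    · rw [hev _ (Real.exp_pos _), Real.log_exp, ← hi]
      congr 4
      field_simp
  -- tangents of `Hr`
  have tangr : ∀ c x, x < f₀ + c →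
      HasDerivAt (Hr c) (H₃ x c) (Ψ x) ∧ Hr c (Ψ x) - H₃ x c * Ψ x = H₄ x c := by
    intro c x hx
    have ht := tangent_aux s hs _ _ x (hd1 c x)
    have hi := intercept_aux s hs x (hr1 c x) (-2 * δ * c + 2 * (δ - lam / α) * x)
    rw [← (hd1 c x).deriv, ← hH₃] at ht
    rw [← (hd1 c x).deriv, ← hH₃, ← hH₄] at hi
    rw [hΨ]
    constructor
    · refine ht.congr_of_eventuallyEq ?_
      have hlt : Real.exp (2 * s * x) < Real.exp (2 * s * (f₀ + c)) :=
        Real.exp_lt_exp.mpr (by nlinarith)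
      filter_upwards [lt_mem_nhds (Real.exp_pos (2 * s * x)), gt_mem_nhds hlt] with y hy hy2
      rw [hHr c y hy, hhra]
      rw [div_le_iff₀ (by linarith)]
      have := Real.log_lt_log hy hy2
      rw [Real.log_exp] at this
      linarith
    · rw [hHr _ _ (Real.exp_pos _), Real.log_exp, ← hi]
      have : 2 * s * x / (2 * s) = x := by field_simp
      rw [this, hhra c x hx.le]
  have tang : ∀ c x z, x < f₀ + c → (TangencySystem Hl (Hr c) (Ψ z) (Ψ x) ↔
      h₁ z = H₃ x c ∧ h₂ z = H₄ x c) := by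
    intro c x z hx
    unfold TangencySystem
    rw [(tangl z).1.deriv, (tangr c x hx).1.deriv, (tangl z).2, (tangr c x hx).2]
  have Ψlt : ∀ x y, Ψ x < Ψ y ↔ x < y := by
    intro x y
    rw [hΨ, hΨ, Real.exp_lt_exp]
    constructor
    · intro h; exact lt_of_mul_lt_mul_left h (by linarith)
    · intro h; exact mul_lt_mul_of_pos_left h (by linarith)
  have Ψlog : ∀ y, 0 < y → Ψ (Real.log y / (2 * s)) = y := by
    intro y hy
    rw [hΨ, mul_div_cancel₀ _ (by linarith), Real.exp_log hy]
  have logΨ : ∀ x, Real.log (Ψ x) / (2 * s) = x := by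
    intro x
    rw [hΨ, Real.log_exp]
    field_simp
  -- the quadratic
  obtain ⟨P, hP⟩ : ∃ P : ℝ → ℝ → ℝ, ∀ c x, P c x =
      δ - (α * δ - lam) * x ^ 2 + c * α * (δ * (2 * x - c) - 1) := ⟨_, fun _ _ => rfl⟩
  have hf₀sq : 0 < δ - (α * δ - lam) * f₀ ^ 2 := by
    have h1 : α * ((α * δ - lam) * f₀ ^ 2) < α * δ := by
      have := mul_pos hd (mul_pos hs hf₀pos)
      nlinarith
    have := lt_of_mul_lt_mul_left h1 hα.le
    linarith
  have hPend : ∀ c, 0 < c → 0 < P c (f₀ + c) := by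
    intro c hc
    have : P c (f₀ + c) = (δ - (α * δ - lam) * f₀ ^ 2) + c * (2 * lam * f₀ - α) + lam * c ^ 2 := by
      rw [hP]; ring
    rw [this]
    have := mul_pos hc (sub_pos.mpr hbig)
    positivity
  have hPid : ∀ c x v X, P c x * (X - v) = P c X * (x - v) + P c v * (X - x) +
      (α * δ - lam) * ((x - v) * (X - x) * (X - v)) := by
    intro c x v X
    rw [hP, hP, hP]; ring
  have hPxv : ∀ c x, 0 < c → x < f₀ + c → (xv c < x ↔ 0 < P c x) := by
    intro c x hc hx
    obtain ⟨hv1, hv2, -⟩ := hxv c hc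
    rw [← hP] at hv2
    have hE := hPend c hc
    constructor
    · intro h
      have h1 := hPid c x (xv c) (f₀ + c)
      rw [hv2] at h1
      have h2 := mul_pos hE (sub_pos.mpr h)
      have h3 := mul_pos hd (mul_pos (mul_pos (sub_pos.mpr h) (sub_pos.mpr hx)) (sub_pos.mpr hv1))
      have h4 : 0 < P c x * (f₀ + c - xv c) := by rw [h1]; linarith
      exact pos_of_mul_pos_left h4 (sub_pos.mpr hv1).le
    · intro h
      by_contra hcon
      rcases eq_or_lt_of_le (not_lt.mp hcon) with h0 | h0
      · rw [h0, hv2] at h; exact lt_irrefl _ h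
      · have h1 := hPid c (xv c) x (f₀ + c)
        rw [hv2] at h1
        have h2 := mul_pos hE (sub_pos.mpr h0)
        have h3 := mul_pos hd (mul_pos (mul_pos (sub_pos.mpr h0) (sub_pos.mpr hv1)) (sub_pos.mpr hx))
        have h4 := mul_pos h (sub_pos.mpr hv1)
        linarith
  -- derivatives of `H₃`, `H₄`
  obtain ⟨A3, hA3⟩ : ∃ A : ℝ → ℝ → (ℝ × ℝ →L[ℝ] ℝ), ∀ x c,
      A x c = fderiv ℝ (fun p : ℝ × ℝ => H₃ p.1 p.2) (x, c) := ⟨_, fun _ _ => rfl⟩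
  obtain ⟨A4, hA4⟩ : ∃ A : ℝ → ℝ → (ℝ × ℝ →L[ℝ] ℝ), ∀ x c,
      A x c = fderiv ℝ (fun p : ℝ × ℝ => H₄ p.1 p.2) (x, c) := ⟨_, fun _ _ => rfl⟩
  have dH₃ : ∀ x c, HasStrictFDerivAt (fun p : ℝ × ℝ => H₃ p.1 p.2) (A3 x c) (x, c) ∧
      A3 x c (1, 0) = Real.exp (-x * s) / s * P c x ∧
      A3 x c (1, 1) = -s * H₃ x c + h₃ x := by
    intro x c
    obtain ⟨a1, a2, a3⟩ := HH_deriv α δ lam s (-1) x c (by norm_num) hα hs hs2 H₃ hH₃'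
    rw [← hA3] at a1 a2 a3
    refine ⟨a1, ?_, ?_⟩
    · rw [a2, hP]; ring_nf
    · rw [a3, hh₃, show (-1) * x * s = -x * s by ring]
      field_simp
      ring
  have dH₄ : ∀ x c, HasStrictFDerivAt (fun p : ℝ × ℝ => H₄ p.1 p.2) (A4 x c) (x, c) ∧
      A4 x c (1, 0) = -(Real.exp (x * s) / s * P c x) ∧
      A4 x c (1, 1) = s * H₄ x c - h₄ x := by
    intro x c
    obtain ⟨a1, a2, a3⟩ := HH_deriv α δ lam s 1 x c (by norm_num) hα hs hs2 H₄ hH₄'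
    rw [← hA4] at a1 a2 a3
    refine ⟨a1, ?_, ?_⟩
    · rw [a2, hP]; ring_nf
    · rw [a3, hh₄, show 1 * x * s = x * s by ring]
      field_simp
      ring
  have H₃end : ∀ c, 0 < c → H₃ (f₀ + c) c < 0 := by
    intro c hc
    have e : H₃ (f₀ + c) c = Real.exp (-1 * (f₀ + c) * s) / (2 * s) * (c / α) *
        (s * (α - 2 * lam * f₀) - s * lam * c - 2 * lam) := by
      rw [hH₃']
      have hroot : (α * δ - lam) * (α * f₀ ^ 2 + s * f₀) - lam = 0 := by linarith
      have key : (-(-1) * (-2 * δ * c + 2 * (δ - lam / α) * (f₀ + c)) +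
          s * (δ * c * (c - 2 * (f₀ + c)) + (δ - lam / α) * (f₀ + c) ^ 2 + c - lam / α ^ 2)) -
          c / α * (s * (α - 2 * lam * f₀) - s * lam * c - 2 * lam) =
          s / α ^ 2 * ((α * δ - lam) * (α * f₀ ^ 2 + s * f₀) - lam) := by
        rw [hα2]
        field_simp
        ring
      rw [hroot, mul_zero] at key
      linear_combination (Real.exp (-1 * (f₀ + c) * s) / (2 * s)) * key
    rw [e]
    apply mul_neg_of_pos_of_neg
    · positivity
    · have := mul_pos hs (sub_pos.mpr hbig)
      have := mul_pos (mul_pos hs hlam) hc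
      nlinarith
  have hslice : ∀ (f : ℝ × ℝ → ℝ) (A : ℝ × ℝ →L[ℝ] ℝ) (x c : ℝ), HasFDerivAt f A (x, c) →
      HasDerivAt (fun t => f (t, c)) (A (1, 0)) x := by
    intro f A x c hf
    exact hf.comp_hasDerivAt x ((hasDerivAt_id x).prodMk (hasDerivAt_const x c))
  have H₃neg : ∀ c x, 0 < c → x < f₀ + c → xv c < x → H₃ x c < 0 := by
    intro c x hc hx hvx
    have hder : ∀ t, HasDerivAt (fun t => H₃ t c) (Real.exp (-t * s) / s * P c t) t := by
      intro t
      rw [← (dH₃ t c).2.1]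
      exact hslice (fun p : ℝ × ℝ => H₃ p.1 p.2) _ t c (dH₃ t c).1.hasFDerivAt
    have hmono : StrictMonoOn (fun t => H₃ t c) (Set.Icc x (f₀ + c)) := by
      apply strictMonoOn_of_deriv_pos (convex_Icc _ _)
      · exact fun t _ => (hder t).continuousAt.continuousWithinAt
      · intro t ht
        rw [interior_Icc] at ht
        rw [(hder t).deriv]
        have := (hPxv c t hc ht.2).mp (hvx.trans ht.1)
        positivity
    have := hmono ⟨le_rfl, hx.le⟩ ⟨hx.le, le_rfl⟩ hx
    exact lt_trans this (H₃end c hc)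
  -- `h₁`
  have dh₁ := h1_deriv α δ lam s h₁ hα hltd hs hs2 hh₁
  have dh₂ := h2_deriv α δ lam s h₂ hα hltd hs hs2 hh₂
  have hquad : ∀ z, 0 ≤ z → z ≤ f₀ → 0 < δ - (α * δ - lam) * z ^ 2 := by
    intro z hz hz2
    have : z ^ 2 ≤ f₀ ^ 2 := by gcongr
    nlinarith
  have h₁mono : StrictMonoOn h₁ (Set.Icc 0 f₀) := by
    apply strictMonoOn_of_deriv_pos (convex_Icc _ _)
    · exact fun t _ => (dh₁ t).hasDerivAt.continuousAt.continuousWithinAt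
    · intro t ht
      rw [interior_Icc] at ht
      rw [(dh₁ t).hasDerivAt.deriv]
      have := hquad t ht.1.le ht.2.le
      positivity
  have h₁0 : h₁ 0 = -(lam / (2 * α ^ 2)) := by
    rw [hh₁]; simp; field_simp
  have h₁form : ∀ x, h₁ x = Real.exp (-x * s) / (2 * α ^ 2) *
      ((α * δ - lam) * (α * x ^ 2 + s * x) - lam) := by
    intro x
    have hne : s ^ 2 * δ - 2 * lam ≠ 0 := by
      intro h; rw [hα2] at hd; linarith
    rw [hh₁, hα2]
    field_simp
  have h₁f : h₁ f₀ = 0 := by rw [h₁form, hf₀root]; simp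
  have h₁pos : ∀ x, f₀ ≤ x → 0 ≤ h₁ x := by
    intro x hx
    rw [h₁form]
    have : α * f₀ ^ 2 + s * f₀ ≤ α * x ^ 2 + s * x := by gcongr
    have := mul_le_mul_of_nonneg_left this hd.le
    have : 0 ≤ (α * δ - lam) * (α * x ^ 2 + s * x) - lam := by linarith
    positivity
  have h₁Ioo : ∀ z ∈ Set.Ioo 0 f₀, h₁ z ∈ Set.Ioo (-(lam / (2 * α ^ 2))) (0 : ℝ) := by
    intro z hz
    rw [← h₁0]
    refine ⟨h₁mono ⟨le_rfl, hf₀pos.le⟩ ⟨hz.1.le, hz.2.le⟩ hz.1, ?_⟩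
    have := h₁mono ⟨hz.1.le, hz.2.le⟩ ⟨hf₀pos.le, le_rfl⟩ hz.2
    rwa [h₁f] at this
  have hinv : ∀ z ∈ Set.Ioo 0 f₀, h₁inv (h₁ z) = z := by
    intro z hz
    obtain ⟨b1, b2⟩ := hh₁inv (h₁ z) (Set.Ioo_subset_Icc_self (h₁Ioo z hz))
    exact h₁mono.injOn b1 ⟨hz.1.le, hz.2.le⟩ b2
  have hinvIoo : ∀ w ∈ Set.Ioo (-(lam / (2 * α ^ 2))) (0 : ℝ),
      h₁inv w ∈ Set.Ioo 0 f₀ ∧ h₁ (h₁inv w) = w := by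
    intro w hw
    obtain ⟨b1, b2⟩ := hh₁inv w (Set.Ioo_subset_Icc_self hw)
    refine ⟨⟨lt_of_le_of_ne b1.1 ?_, lt_of_le_of_ne b1.2 ?_⟩, b2⟩
    · intro h; rw [← h, h₁0] at b2; exact absurd b2 hw.1.ne
    · intro h; rw [h, h₁f] at b2; exact absurd b2 hw.2.ne'
  have dinv : ∀ z ∈ Set.Ioo 0 f₀, HasStrictDerivAt h₁inv
      (Real.exp (-z * s) / s * (δ - (α * δ - lam) * z ^ 2))⁻¹ (h₁ z) := by
    intro z hz
    have hq0 := hquad z hz.1.le hz.2.le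
    refine (dh₁ z).to_local_left_inverse (by positivity) ?_
    filter_upwards [Ioo_mem_nhds hz.1 hz.2] with t ht
    exact hinv t ht
  have cH₃ : Continuous (fun p : ℝ × ℝ => H₃ p.1 p.2) :=
    continuous_iff_continuousAt.mpr fun p => (dH₃ p.1 p.2).1.hasFDerivAt.continuousAt
  obtain ⟨U, hU⟩ : ∃ U : Set (ℝ × ℝ), U = (fun p : ℝ × ℝ => H₃ p.1 p.2) ⁻¹'
    Set.Ioo (-(lam / (2 * α ^ 2))) (0 : ℝ) := ⟨_, rfl⟩
  have hUo : IsOpen U := by rw [hU]; exact isOpen_Ioo.preimage cH₃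
  have dL : ∀ x c z, z ∈ Set.Ioo 0 f₀ → h₁ z = H₃ x c →
      HasStrictFDerivAt (fun p : ℝ × ℝ => L p.1 p.2)
        (A4 x c + Real.exp (2 * z * s) • A3 x c) (x, c) := by
    intro x c z hz hzx
    have hmem : (x, c) ∈ U := by rw [hU]; simpa [← hzx] using h₁Ioo z hz
    have hq0 := hquad z hz.1.le hz.2.le
    have i1 := dinv z hz
    have i2 : HasStrictDerivAt h₂ (-(Real.exp (z * s) / s *
      (δ - (α * δ - lam) * z ^ 2))) (h₁inv (h₁ z)) := by rw [hinv z hz]; exact dh₂ z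
    have i3 := HasStrictDerivAt.comp (h₂ := h₂) _ i2 i1
    rw [hzx] at i3
    have i4 := (dH₄ x c).1.sub
      (HasStrictDerivAt.comp_hasStrictFDerivAt (f := fun p : ℝ × ℝ => H₃ p.1 p.2) (x, c) i3
        (dH₃ x c).1)
    have i5 := i4.congr_of_eventuallyEq (f₁ := fun p : ℝ × ℝ => L p.1 p.2) (by
      filter_upwards [hUo.mem_nhds hmem] with p hp
      rw [hU] at hp
      exact (hL p.1 p.2 (Set.Ioo_subset_Icc_self hp)).symm)
    refine i5.congr_fderiv ?_
    have : -(Real.exp (z * s) / s * (δ - (α * δ - lam) * z ^ 2)) *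
        (Real.exp (-z * s) / s * (δ - (α * δ - lam) * z ^ 2))⁻¹ = -Real.exp (2 * z * s) := by
      rw [show 2 * z * s = z * s + z * s by ring, Real.exp_add, neg_mul z s, Real.exp_neg]
      have := Real.exp_pos (z * s)
      generalize δ - (α * δ - lam) * z ^ 2 = w at hq0
      field_simp
    rw [this, neg_smul, sub_neg_eq_add]
  -- the main argument
  intro c hc hcc
  obtain ⟨p1, p2, -, p4, p5, p6⟩ := hpair c hc hcc
  have y1F : Ψ (F c) = yh₁ c := by rw [hF]; exact Ψlog _ (by linarith)
  have hy2pos : 0 < yh₂ c := lt_trans (by rw [hΨ]; exact Real.exp_pos _)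
    (lt_of_le_of_lt (le_max_left _ _) p4)
  have y2G : Ψ (G c) = yh₂ c := by rw [hG]; exact Ψlog _ hy2pos
  have hΨ0 : Ψ 0 = 1 := by rw [hΨ]; simp
  rw [← y1F, ← hΨ0, Ψlt] at p1
  rw [← y1F, Ψlt] at p2
  rw [← y2G, max_lt_iff, Ψlt, Ψlt] at p4
  rw [← y2G, Ψlt] at p5
  rw [← y1F, ← y2G, tang c _ _ p5] at p6
  obtain ⟨p6, p7⟩ := p6
  have hPG := (hPxv c _ hc p5).mp p4.2
  have hneg := H₃neg c _ hc p5 p4.2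
  have hFf : F c < f₀ := by
    by_contra hcon
    have := h₁pos _ (not_lt.mp hcon)
    linarith
  have hFI : F c ∈ Set.Ioo 0 f₀ := ⟨p1, hFf⟩
  have hL' := dL _ _ _ hFI p6
  have hmemU : (G c, c) ∈ U := by rw [hU]; simpa [← p6] using h₁Ioo _ hFI
  have hLx : (A4 (G c) c + Real.exp (2 * F c * s) • A3 (G c) c) (1, 0) < 0 := by
    have e : (A4 (G c) c + Real.exp (2 * F c * s) • A3 (G c) c) (1, 0) =
        -(Real.exp (-G c * s) / s * P c (G c) *
          (Real.exp (2 * G c * s) - Real.exp (2 * F c * s))) := by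
      rw [add_apply, smul_apply, (dH₃ _ _).2.1,
        (dH₄ _ _).2.1, show 2 * G c * s = G c * s + G c * s by ring, Real.exp_add,
        neg_mul (G c) s, Real.exp_neg]
      have := Real.exp_pos (G c * s)
      simp only [smul_eq_mul]
      field_simp
      ring
    rw [e, neg_lt_zero]
    have : Real.exp (2 * F c * s) < Real.exp (2 * G c * s) :=
      Real.exp_lt_exp.mpr (mul_lt_mul_of_pos_right (by linarith [p4.1]) hs)
    have := sub_pos.mpr this
    positivity
  have hL11 : (A4 (G c) c + Real.exp (2 * F c * s) • A3 (G c) c) (1, 1) = q (G c) (F c) := by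
    rw [add_apply, smul_apply, (dH₃ _ _).2.2,
        (dH₄ _ _).2.2, hq, ← p6, ← p7]
    simp only [smul_eq_mul]
    ring
  have hLder : deriv (fun x => L x c) (G c) =
      (A4 (G c) c + Real.exp (2 * F c * s) • A3 (G c) c) (1, 0) :=
    (hslice (fun p : ℝ × ℝ => L p.1 p.2) _ _ _ hL'.hasFDerivAt).deriv
  generalize A4 (G c) c + Real.exp (2 * F c * s) • A3 (G c) c = A at *
  have hinvG : h₁inv (H₃ (G c) c) = F c := by rw [← p6]; exact hinv _ hFI
  have hL0 : L (G c) c = 0 := by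
    rw [hU] at hmemU
    rw [hL _ _ (Set.Ioo_subset_Icc_self hmemU), hinvG, p7, sub_self]
  obtain ⟨g, hg0, hgd, hgL⟩ := ift_aux (fun p : ℝ × ℝ => L p.1 p.2) A (G c) c hL' hL0 hLx.ne
  have hgc := hgd.continuousAt
  have hpc : ContinuousAt (fun t => (g t, t)) c := hgc.prodMk continuousAt_id
  have hev : ∀ᶠ t in 𝓝 c, G t = g t := by
    have v1 : ∀ᶠ t in 𝓝 c, (g t, t) ∈ U :=
      hpc.eventually (by simp only [hg0]; exact hUo.mem_nhds hmemU)
    have cz : ContinuousAt (fun t => h₁inv (H₃ (g t) t)) c := by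
      have c1 : ContinuousAt (fun t => H₃ (g t) t) c :=
        ContinuousAt.comp (g := fun p : ℝ × ℝ => H₃ p.1 p.2) cH₃.continuousAt hpc
      refine ContinuousAt.comp (g := h₁inv) ?_ c1
      rw [hg0, ← p6]
      exact (dinv _ hFI).hasDerivAt.continuousAt
    have cxc : ContinuousAt (fun t : ℝ => 1 / (2 * δ) + t / 2) c := by fun_prop
    have v2 : ∀ᶠ t in 𝓝 c, h₁inv (H₃ (g t) t) < 1 / (2 * δ) + t / 2 :=
      cz.eventually_lt cxc (by rw [hg0, hinvG]; exact p2)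
    have v3 : ∀ᶠ t in 𝓝 c, 1 / (2 * δ) + t / 2 < g t :=
      cxc.eventually_lt hgc (by rw [hg0]; exact p4.1)
    have v4 : ∀ᶠ t in 𝓝 c, g t < f₀ + t :=
      hgc.eventually_lt (by fun_prop) (by rw [hg0]; exact p5)
    have v5 : ∀ᶠ t in 𝓝 c, 0 < P t (g t) := by
      have : ContinuousAt (fun t => P t (g t)) c := by
        simp only [hP]
        fun_prop
      exact continuousAt_const.eventually_lt this (by rw [hg0]; exact hPG)
    filter_upwards [v1, v2, v3, v4, v5, hgL, lt_mem_nhds hc, gt_mem_nhds hcc] with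
      t w1 w2 w3 w4 w5 w6 w7 w8
    rw [hU] at w1
    obtain ⟨u1, u2⟩ := hinvIoo _ w1
    have hxvt := (hPxv t _ w7 w4).mpr w5
    have w6' : L (g t) t = 0 := w6
    rw [hL _ _ (Set.Ioo_subset_Icc_self w1)] at w6'
    have hun := huniq t w7 w8 (Ψ (h₁inv (H₃ (g t) t))) (Ψ (g t))
      (by rw [← hΨ0, Ψlt]; exact u1.1) (by rw [Ψlt]; exact w2) (le_max_left _ _)
      (by rw [max_lt_iff, Ψlt, Ψlt]; exact ⟨w3, hxvt⟩) (by rw [Ψlt]; exact w4)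
      ((tang t _ _ w4).mpr ⟨u2, by linarith⟩)
    rw [hG, ← hun.2, logΨ]
  have hGd : DifferentiableAt ℝ G c := hgd.congr_of_eventuallyEq hev
  have hLG : ∀ᶠ t in 𝓝 c, L (G t) t = 0 := by
    filter_upwards [hev, hgL] with t h1 h2
    rw [h1]; exact h2
  have hchain : A (deriv G c, 1) = 0 := by
    have h1 : HasDerivAt (fun t => L (G t) t) (A (deriv G c, 1)) c :=
      HasFDerivAt.comp_hasDerivAt (l := fun p : ℝ × ℝ => L p.1 p.2) c (f := fun t => (G t, t))
        hL'.hasFDerivAt (hGd.hasDerivAt.prodMk (hasDerivAt_id c))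
    have h2 : HasDerivAt (fun t => L (G t) t) 0 c :=
      (hasDerivAt_const c (0 : ℝ)).congr_of_eventuallyEq hLG
    exact h1.unique h2
  refine ⟨⟨U, hUo, hmemU, ?_, ?_⟩, ?_, hGd, ?_⟩
  · intro p hp
    rw [hU] at hp
    exact Set.Ioo_subset_Icc_self hp
  · intro p hp
    rw [hU] at hp
    obtain ⟨u1, u2⟩ := hinvIoo _ hp
    exact (dL p.1 p.2 _ u1 u2).hasFDerivAt.differentiableAt.differentiableWithinAt
  · rw [hLder]; exact hLx
  · rw [hLder]
    have hsplit : ((deriv G c, 1) : ℝ × ℝ) = (1, 1) + (deriv G c - 1) • ((1, 0) : ℝ × ℝ) := by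
      ext <;> simp
    rw [hsplit, map_add, map_smul, hL11, smul_eq_mul] at hchain
    have := hLx.ne
    field_simp
    linarith
end
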